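/- arXiv:quant-ph/0503114 — 3 statements merged into one kernel-verified Lean document; each statement's English description precedes it below -/
import Mathlib

section
/- Let G be a finite group and H₁, H₂ ≤ G subgroups whose normal cores differ: core(H₁) ≠ core(H₂), where core(H) is the largest normal subgroup of G contained in H. Let (ρ_i)_{i ∈ ι} be a finite family of pairwise non-isomorphic irreducible finite-dimensional complex representations of G such that every irreducible finite-dimensional complex representation of G is isomorphic to some ρ_i, with ρ_i acting on V_i. Then ∑_{i ∈ ι} (dim V_i / |G|) · | |H₁| · dim(V_i^{H₁}) − |H₂| · dim(V_i^{H₂}) | ≥ 1/2, where V_i^{H} := {v ∈ V_i : ρ_i(h)v = v for all h ∈ H}. -/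
/-- The subspace `V^H` of vectors fixed by `ρ(h)` for every `h` in the subgroup `H`. -/
def fixedSub {G : Type} [Group G] {V : Type} [AddCommGroup V] [Module ℂ V]
    (ρ : Representation ℂ G V) (H : Subgroup G) : Submodule ℂ V where
  carrier := {v | ∀ h ∈ H, ρ h v = v}
  zero_mem' := fun h _ => map_zero (ρ h)
  add_mem' := fun {a b} ha hb h hh => by
    rw [map_add, ha h hh, hb h hh]
  smul_mem' := fun c a ha h hh => by
    rw [map_smul, ha h hh]

/-!
Write `P_H(i) = dim V_i · |H| · dim V_i^H / |G|`. By Frobenius reciprocity `V_i` has multiplicity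
`dim V_i^H` in `k[G ⧸ H]`, so counting dimensions shows that `P_H` is a probability distribution.

If the cores differ, then up to exchanging `H₁` and `H₂` there is a normal subgroup `K ≤ H₁` with
`K ≰ H₂`. As `K` is normal, `V_i^K` is a subrepresentation, hence `0` or `V_i`. Where it is `0`,
`P_{H₁}` vanishes, so the event `E = {i | V_i^K = V_i}` has `P_{H₁}`-mass `1`. On `E` the subgroups
`H₂` and `H₂ ⊔ K` have the same fixed vectors, so `P_{H₂} = |H₂| / |H₂ ⊔ K| · P_{H₂ ⊔ K}` with
a factor of at most `1/2`, and `E` has `P_{H₂}`-mass at most `1/2`. An event on which two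
distributions differ by `1/2` forces their `ℓ¹` distance to be at least `1`.
-/

open Module Representation

section IntertwiningMap

variable {k G V W : Type*} [CommRing k] [Monoid G] [AddCommGroup V] [Module k V] [AddCommGroup W]
  [Module k W] {π : Representation k G W} {σ : Representation k G V}

lemma isCompl_toSubmodule {A B : Subrepresentation π} (h : IsCompl A B) :
    IsCompl A.toSubmodule B.toSubmodule :=
  .of_eq (congrArg Subrepresentation.toSubmodule h.inf_eq_bot)
    (congrArg Subrepresentation.toSubmodule h.sup_eq_top)

/-- The inclusion of a subrepresentation, as an intertwining map. -/
def subrepresentationInclusion (A : Subrepresentation π) :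
    IntertwiningMap A.toRepresentation π where
  toLinearMap := A.toSubmodule.subtype
  isIntertwining' _ := rfl

/-- The intertwining map on an internal direct sum `A ⊕ B` extending given ones on `A` and `B`. -/
noncomputable def intertwiningMapOfIsCompl {A B : Subrepresentation π} (h : IsCompl A B)
    (φ : IntertwiningMap A.toRepresentation σ) (ψ : IntertwiningMap B.toRepresentation σ) :
    IntertwiningMap π σ where
  toLinearMap := LinearMap.ofIsCompl (isCompl_toSubmodule h) φ.toLinearMap ψ.toLinearMap
  isIntertwining' g := by
    refine LinearMap.ext_on_codisjoint (isCompl_toSubmodule h).codisjoint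
      (fun a ha ↦ ?_) (fun b hb ↦ ?_)
    · calc
        _ = φ (A.toRepresentation g ⟨a, ha⟩) := LinearMap.ofIsCompl_apply_left _ _
        _ = σ g (φ ⟨a, ha⟩) := φ.isIntertwining _ _ g _
        _ = _ := congrArg (σ g) (LinearMap.ofIsCompl_apply_left _ ⟨a, ha⟩).symm
    · calc
        _ = ψ (B.toRepresentation g ⟨b, hb⟩) := LinearMap.ofIsCompl_apply_right _ _
        _ = σ g (ψ ⟨b, hb⟩) := ψ.isIntertwining _ _ g _
        _ = _ := congrArg (σ g) (LinearMap.ofIsCompl_apply_right _ ⟨b, hb⟩).symm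

/-- The universal property of the internal direct sum `A ⊕ B` of two subrepresentations. -/
noncomputable def intertwiningMapEquivProdOfIsCompl (σ : Representation k G V)
    {A B : Subrepresentation π} (h : IsCompl A B) :
    IntertwiningMap π σ ≃ₗ[k]
      IntertwiningMap A.toRepresentation σ × IntertwiningMap B.toRepresentation σ where
  toFun f := (f.comp (subrepresentationInclusion A), f.comp (subrepresentationInclusion B))
  map_add' _ _ := rfl
  map_smul' _ _ := rfl
  invFun f := intertwiningMapOfIsCompl h f.1 f.2
  left_inv _ := IntertwiningMap.ext (LinearMap.ofIsCompl_eq _ (fun _ ↦ rfl) fun _ ↦ rfl)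
  right_inv _ := Prod.ext
    (IntertwiningMap.ext (LinearMap.ext fun _ ↦ LinearMap.ofIsCompl_apply_left _ _))
    (IntertwiningMap.ext (LinearMap.ext fun _ ↦ LinearMap.ofIsCompl_apply_right _ _))

lemma nonempty_equiv_iff :
    Nonempty (π.Equiv σ) ↔ ∃ e : W ≃ₗ[k] V, ∀ g w, e (π g w) = σ g (e w) where
  mp := fun ⟨e⟩ ↦ ⟨e.toLinearEquiv, e.toIntertwiningMap.isIntertwining _ _⟩
  mpr := fun ⟨e, he⟩ ↦ ⟨.mk e fun g ↦ LinearMap.ext (he g)⟩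

end IntertwiningMap

section Irreducible

variable {k G V W : Type*} [Field k] [Monoid G] [AddCommGroup V] [Module k V] [AddCommGroup W]
  [Module k W] {π : Representation k G W} {σ : Representation k G V}

lemma finrank_intertwiningMap_of_isCompl [FiniteDimensional k W] [FiniteDimensional k V]
    (σ : Representation k G V) {A B : Subrepresentation π} (h : IsCompl A B) :
    finrank k (IntertwiningMap π σ) = finrank k (IntertwiningMap A.toRepresentation σ) +
      finrank k (IntertwiningMap B.toRepresentation σ) := by
  rw [(intertwiningMapEquivProdOfIsCompl σ h).finrank_eq, finrank_prod]

lemma finrank_intertwiningMap_eq_one_of_equiv [IsAlgClosed k] [FiniteDimensional k W]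
    [IsIrreducible π] (e : π.Equiv σ) : finrank k (IntertwiningMap π σ) = 1 := by
  let postcomp : IntertwiningMap π π ≃ₗ[k] IntertwiningMap π σ :=
    .ofLinearMap (IntertwiningMap.llcomp π π σ e.toIntertwiningMap)
      (IntertwiningMap.llcomp π σ π e.symm.toIntertwiningMap)
      (by ext; exact e.apply_symm_apply _) (by ext; exact e.symm_apply_apply _)
  rw [← postcomp.finrank_eq, IsIrreducible.finrank_intertwiningMap_self]

lemma isIrreducible_iff_forall_submodule : IsIrreducible σ ↔
    Nontrivial V ∧ ∀ U : Submodule k V, (∀ g, ∀ v ∈ U, σ g v ∈ U) → U = ⊥ ∨ U = ⊤ where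
  mp _ := ⟨(Submodule.nontrivial_iff k).1
      (Subrepresentation.toSubmodule_injective (ρ := σ)).nontrivial,
    fun U hU ↦ (IsSimpleOrder.eq_bot_or_eq_top (⟨U, hU⟩ : Subrepresentation σ)).imp
      (congrArg Subrepresentation.toSubmodule) (congrArg Subrepresentation.toSubmodule)⟩
  mpr := fun ⟨_, h⟩ ↦
    { exists_pair_ne := ⟨⊥, ⊤, fun e ↦ bot_ne_top (congrArg Subrepresentation.toSubmodule e)⟩
      eq_bot_or_eq_top U := (h U.toSubmodule U.apply_mem_toSubmodule).imp
        (Subrepresentation.toSubmodule_injective ·) (Subrepresentation.toSubmodule_injective ·) }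

end Irreducible

section SubgroupInvariants

variable {k G V : Type*} [CommRing k] [Group G] [AddCommGroup V] [Module k V]

/-- The subspace `V^H` of vectors fixed by the subgroup `H`: the invariants of the restriction of
`ρ` to `H`. -/
noncomputable abbrev subgroupInvariants (ρ : Representation k G V) (H : Subgroup G) :
    Submodule k V :=
  invariants (ρ.comp H.subtype)

variable {ρ : Representation k G V} {H K : Subgroup G}

lemma mem_subgroupInvariants {v : V} : v ∈ subgroupInvariants ρ H ↔ ∀ h ∈ H, ρ h v = v := by
  simp

lemma subgroupInvariants_anti (h : K ≤ H) : subgroupInvariants ρ H ≤ subgroupInvariants ρ K :=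
  fun _ hv ↦ mem_subgroupInvariants.2 fun x hx ↦ mem_subgroupInvariants.1 hv x (h hx)

lemma subgroupInvariants_sup :
    subgroupInvariants ρ (H ⊔ K) = subgroupInvariants ρ H ⊓ subgroupInvariants ρ K := by
  refine le_antisymm (le_inf (subgroupInvariants_anti le_sup_left)
    (subgroupInvariants_anti le_sup_right)) fun v ⟨hH, hK⟩ ↦ mem_subgroupInvariants.2 fun x hx ↦ ?_
  rw [Subgroup.sup_eq_closure] at hx
  induction hx using Subgroup.closure_induction with
  | mem x hx => exact hx.elim (mem_subgroupInvariants.1 hH x) (mem_subgroupInvariants.1 hK x)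
  | one => rw [map_one, End.one_apply]
  | mul x y _ _ hx hy => rw [map_mul, End.mul_apply, hy, hx]
  | inv x _ hx => rw [inv_apply_eq_iff, hx]

lemma apply_eq_of_mem_subgroupInvariants {v : V} (hv : v ∈ subgroupInvariants ρ H) {a b : G}
    (hab : a⁻¹ * b ∈ H) : ρ a v = ρ b v := by
  rw [← mul_inv_cancel_left a b, map_mul, End.mul_apply, mem_subgroupInvariants.1 hv _ hab]

/-- The map `gH ↦ ρ(g) v` on cosets, for `v` fixed by `H`. -/
def cosetOrbitMap (v : subgroupInvariants ρ H) : G ⧸ H → V :=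
  Quotient.lift (fun g ↦ ρ g v) fun _ _ hab ↦
    apply_eq_of_mem_subgroupInvariants v.2 (QuotientGroup.leftRel_apply.1 hab)

variable (ρ H)

/-- Frobenius reciprocity for the permutation representation on `G ⧸ H`: an intertwining map is
determined by the image of the coset `H`, which can be any vector fixed by `H`. -/
noncomputable def intertwiningMapOfMulActionEquiv :
    IntertwiningMap (ofMulAction k G (G ⧸ H)) ρ ≃ₗ[k] subgroupInvariants ρ H where
  toFun f := ⟨f (.single ((1 : G) : G ⧸ H) 1), mem_subgroupInvariants.2 fun h hh ↦ by
    have hcoset : h • ((1 : G) : G ⧸ H) = (1 : G) := by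
      rw [MulAction.Quotient.smul_coe, QuotientGroup.eq]
      simpa using hh
    rw [← f.isIntertwining _ _, ofMulAction_single, hcoset]⟩
  map_add' _ _ := rfl
  map_smul' _ _ := rfl
  invFun v :=
    { toLinearMap := (MonoidAlgebra.basis (G ⧸ H) k).constr k (cosetOrbitMap v)
      isIntertwining' := fun g ↦ by
        refine (MonoidAlgebra.basis (G ⧸ H) k).ext fun q ↦ ?_
        induction q using QuotientGroup.induction_on with
        | H x =>
          simp only [LinearMap.comp_apply, MonoidAlgebra.basis_apply, ofMulAction_single]
          simp only [← MonoidAlgebra.basis_apply, Basis.constr_basis, MulAction.Quotient.smul_coe]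
          exact LinearMap.congr_fun (map_mul ρ g x) v }
  left_inv f := by
    refine IntertwiningMap.ext ((MonoidAlgebra.basis (G ⧸ H) k).ext fun q ↦ ?_)
    induction q using QuotientGroup.induction_on with
    | H x =>
      have hf := f.isIntertwining _ _ x (.single ((1 : G) : G ⧸ H) 1)
      rw [ofMulAction_single, MulAction.Quotient.smul_coe, smul_eq_mul, mul_one] at hf
      exact (Basis.constr_basis _ _ _ _).trans hf.symm
  right_inv v := Subtype.ext <|
    (Basis.constr_basis _ _ _ ((1 : G) : G ⧸ H)).trans (LinearMap.congr_fun (map_one ρ) v)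

lemma finrank_intertwiningMap_ofMulAction :
    finrank k (IntertwiningMap (ofMulAction k G (G ⧸ H)) ρ) = finrank k (subgroupInvariants ρ H) :=
  (intertwiningMapOfMulActionEquiv ρ H).finrank_eq

end SubgroupInvariants

lemma subgroupInvariants_eq_bot_or_eq_top {k G V : Type*} [Field k] [Group G] [AddCommGroup V]
    [Module k V] {ρ : Representation k G V} [IsIrreducible ρ] {K : Subgroup G} [K.Normal] :
    subgroupInvariants ρ K = ⊥ ∨ subgroupInvariants ρ K = ⊤ :=
  (isIrreducible_iff_forall_submodule.1 ‹_›).2 _ fun g _ hv ↦ le_comap_invariants ρ K g hv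

universe u v w

section CompleteIrreducibleFamily

variable {k : Type u} {G : Type v} [Field k] [Group G]

/-- The `ρ i` form a set of representatives of the isomorphism classes of finite-dimensional
irreducible representations of `G` over `k`. The universe of the representations `W` to be
represented is the one in which the permutation representations `k[G ⧸ H]` live. -/
structure IsCompleteIrreducibleFamily {ι : Type*} {V : ι → Type w} [∀ i, AddCommGroup (V i)]
    [∀ i, Module k (V i)] (ρ : ∀ i, Representation k G (V i)) : Prop where
  isIrreducible : ∀ i, IsIrreducible (ρ i)
  eq_of_equiv : ∀ {i j}, (ρ i).Equiv (ρ j) → i = j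
  exists_equiv : ∀ (W : Type max u v) [AddCommGroup W] [Module k W] [FiniteDimensional k W]
    (π : Representation k G W), IsIrreducible π → ∃ i, Nonempty (π.Equiv (ρ i))

theorem finiteDimensional_representation_induction [Finite G] [NeZero (Nat.card G : k)]
    {motive : ∀ (W : Type w) [AddCommGroup W] [Module k W], Representation k G W → Prop}
    (subsingleton : ∀ (W : Type w) [AddCommGroup W] [Module k W] [Subsingleton W]
      (π : Representation k G W), motive W π)
    (irreducible : ∀ (W : Type w) [AddCommGroup W] [Module k W] [FiniteDimensional k W]
      (π : Representation k G W) [IsIrreducible π], motive W π)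
    (isCompl : ∀ (W : Type w) [AddCommGroup W] [Module k W] [FiniteDimensional k W]
      (π : Representation k G W) (A B : Subrepresentation π), IsCompl A B →
      motive A.toSubmodule A.toRepresentation → motive B.toSubmodule B.toRepresentation →
      motive W π)
    (W : Type w) [AddCommGroup W] [Module k W] [FiniteDimensional k W]
    (π : Representation k G W) : motive W π := by
  induction hn : finrank k W using Nat.strong_induction_on generalizing W with
  | _ n ih =>
  rcases subsingleton_or_nontrivial W with _ | _
  · exact subsingleton W π
  by_cases hπ : ∀ U : Submodule k W, (∀ g, ∀ v ∈ U, π g v ∈ U) → U = ⊥ ∨ U = ⊤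
  · have := isIrreducible_iff_forall_submodule.2 ⟨‹_›, hπ⟩
    exact irreducible W π
  · push Not at hπ
    obtain ⟨U, hU, hU_bot, hU_top⟩ := hπ
    let A : Subrepresentation π := ⟨U, hU⟩
    obtain ⟨B, hAB⟩ := exists_isCompl A
    have hadd := Submodule.finrank_add_eq_of_isCompl (isCompl_toSubmodule hAB)
    have hA_lt : finrank k A.toSubmodule < finrank k W := Submodule.finrank_lt hU_top
    have hA_pos : 0 < finrank k A.toSubmodule := Submodule.one_le_finrank_iff.2 hU_bot
    exact isCompl W π A B hAB (ih _ (hn ▸ hA_lt) _ _ rfl) (ih _ (by lia) _ _ rfl)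

namespace IsCompleteIrreducibleFamily

variable {ι : Type*} [Fintype ι] {V : ι → Type w} [∀ i, AddCommGroup (V i)]
  [∀ i, Module k (V i)] {ρ : ∀ i, Representation k G (V i)}

lemma finrank_eq_sum_of_isIrreducible [IsAlgClosed k] (hρ : IsCompleteIrreducibleFamily ρ)
    {W : Type max u v} [AddCommGroup W] [Module k W] [FiniteDimensional k W]
    (π : Representation k G W) [IsIrreducible π] :
    finrank k W = ∑ i, finrank k (V i) * finrank k (IntertwiningMap π (ρ i)) := by
  obtain ⟨i, ⟨e⟩⟩ := hρ.exists_equiv W π inferInstance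
  rw [Finset.sum_eq_single i _ (by simp), finrank_intertwiningMap_eq_one_of_equiv e, mul_one,
    e.toLinearEquiv.finrank_eq]
  intro j _ hj
  have := hρ.isIrreducible j
  have : IsEmpty (π.Equiv (ρ j)) := ⟨fun e' ↦ hj (hρ.eq_of_equiv (e.symm.trans e')).symm⟩
  rw [finrank_zero_of_subsingleton (M := IntertwiningMap π (ρ j)), mul_zero]

variable [IsAlgClosed k] [Finite G] [NeZero (Nat.card G : k)] [∀ i, FiniteDimensional k (V i)]

theorem finrank_eq_sum (hρ : IsCompleteIrreducibleFamily ρ)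
    {W : Type max u v} [AddCommGroup W] [Module k W] [FiniteDimensional k W]
    (π : Representation k G W) :
    finrank k W = ∑ i, finrank k (V i) * finrank k (IntertwiningMap π (ρ i)) := by
  induction W, π using finiteDimensional_representation_induction with
  | subsingleton W π =>
    have (i : ι) : Subsingleton (IntertwiningMap π (ρ i)) :=
      (IntertwiningMap.toLinearMap_injective π (ρ i)).subsingleton
    simp only [finrank_zero_of_subsingleton, mul_zero, Finset.sum_const_zero]
  | irreducible W π => exact hρ.finrank_eq_sum_of_isIrreducible π
  | isCompl W π A B hAB hA hB =>
    simp_rw [finrank_intertwiningMap_of_isCompl _ hAB, mul_add, Finset.sum_add_distrib, ← hA, ← hB]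
    exact (Submodule.finrank_add_eq_of_isCompl (isCompl_toSubmodule hAB)).symm

theorem sum_finrank_mul_finrank_subgroupInvariants (hρ : IsCompleteIrreducibleFamily ρ)
    (H : Subgroup G) :
    ∑ i, finrank k (V i) * finrank k (subgroupInvariants (ρ i) H) = H.index := by
  rw [Subgroup.index, ← finrank_eq_nat_card_basis (MonoidAlgebra.basis (G ⧸ H) k),
    hρ.finrank_eq_sum (ofMulAction k G (G ⧸ H))]
  simp_rw [finrank_intertwiningMap_ofMulAction]

end IsCompleteIrreducibleFamily

end CompleteIrreducibleFamily

section WeakFourierSampling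

lemma two_mul_card_le_card_of_lt {G : Type*} [Group G] {H K : Subgroup G} [Finite K]
    (h : H < K) : 2 * Nat.card H ≤ Nat.card K := by
  have hlt : Nat.card H < Nat.card K := (Subgroup.card_le_of_le h.le).lt_of_ne fun e ↦
    h.ne (Subgroup.eq_of_le_of_card_ge h.le e.ge)
  have hle : Nat.card H ≤ Nat.card K - Nat.card H :=
    Nat.le_of_dvd (Nat.sub_pos_of_lt hlt) (Nat.dvd_sub (Subgroup.card_dvd_of_le h.le) dvd_rfl)
  lia

/-- The probability `dim V · |H| · dim V^H / |G|` that weak Fourier sampling with hidden subgroup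
`H` returns the name of the irreducible representation `ρ`. -/
noncomputable def weakSamplingProb {k G V : Type*} [Field k] [Group G] [AddCommGroup V]
    [Module k V] (ρ : Representation k G V) (H : Subgroup G) : ℝ :=
  finrank k V / Nat.card G * (Nat.card H * finrank k (subgroupInvariants ρ H))

section Single

variable {k G V : Type*} [Field k] [Group G] [AddCommGroup V] [Module k V]
  {ρ : Representation k G V} {H K : Subgroup G}

lemma weakSamplingProb_nonneg : 0 ≤ weakSamplingProb ρ H := by
  unfold weakSamplingProb; positivity

lemma abs_weakSamplingProb_sub (ρ : Representation k G V) (H₁ H₂ : Subgroup G) :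
    |weakSamplingProb ρ H₁ - weakSamplingProb ρ H₂| =
      (finrank k V : ℝ) / Nat.card G *
        |(Nat.card H₁ : ℝ) * finrank k (subgroupInvariants ρ H₁) -
          Nat.card H₂ * finrank k (subgroupInvariants ρ H₂)| := by
  rw [weakSamplingProb, weakSamplingProb, ← mul_sub, abs_mul, abs_of_nonneg (by positivity)]

lemma weakSamplingProb_eq_zero [IsIrreducible ρ] [K.Normal] (hKH : K ≤ H)
    (hK : subgroupInvariants ρ K ≠ ⊤) : weakSamplingProb ρ H = 0 := by
  have hH : subgroupInvariants ρ H = ⊥ :=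
    eq_bot_mono (subgroupInvariants_anti hKH) (subgroupInvariants_eq_bot_or_eq_top.resolve_right hK)
  rw [weakSamplingProb, hH, finrank_bot, Nat.cast_zero, mul_zero, mul_zero]

lemma two_mul_weakSamplingProb_le_sup [Finite G] (hKH : ¬ K ≤ H)
    (hK : subgroupInvariants ρ K = ⊤) :
    2 * weakSamplingProb ρ H ≤ weakSamplingProb ρ (H ⊔ K) := by
  have hcard : (2 * Nat.card H : ℝ) ≤ Nat.card (H ⊔ K : Subgroup G) := by
    exact_mod_cast two_mul_card_le_card_of_lt (left_lt_sup.2 hKH)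
  calc 2 * weakSamplingProb ρ H
      = finrank k V / Nat.card G * (2 * Nat.card H * finrank k (subgroupInvariants ρ H)) := by
        rw [weakSamplingProb]; ring
    _ ≤ finrank k V / Nat.card G *
          (Nat.card (H ⊔ K : Subgroup G) * finrank k (subgroupInvariants ρ H)) := by gcongr
    _ = weakSamplingProb ρ (H ⊔ K) := by
        rw [weakSamplingProb, subgroupInvariants_sup, hK, inf_top_eq]

end Single

lemma two_mul_sum_sub_le_sum_abs_sub {ι : Type*} [Fintype ι] {p q : ι → ℝ}
    (h : ∑ i, p i = ∑ i, q i) (E : Finset ι) :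
    2 * (∑ i ∈ E, p i - ∑ i ∈ E, q i) ≤ ∑ i, |p i - q i| := by
  classical
  have hE : ∑ i ∈ E, p i - ∑ i ∈ E, q i ≤ ∑ i ∈ E, |p i - q i| := by
    rw [← Finset.sum_sub_distrib]
    exact Finset.sum_le_sum fun i _ ↦ le_abs_self _
  have hEc : ∑ i ∈ Eᶜ, q i - ∑ i ∈ Eᶜ, p i ≤ ∑ i ∈ Eᶜ, |p i - q i| := by
    rw [← Finset.sum_sub_distrib]
    exact Finset.sum_le_sum fun i _ ↦ abs_sub_comm (p i) (q i) ▸ le_abs_self _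
  rw [← Finset.sum_add_sum_compl E p, ← Finset.sum_add_sum_compl E q] at h
  rw [← Finset.sum_add_sum_compl E]
  linarith

variable {k : Type u} {G : Type v} [Field k] [IsAlgClosed k] [Group G] [Finite G]
  [NeZero (Nat.card G : k)] {ι : Type*} [Fintype ι] {V : ι → Type w} [∀ i, AddCommGroup (V i)]
  [∀ i, Module k (V i)] [∀ i, FiniteDimensional k (V i)] {ρ : ∀ i, Representation k G (V i)}

lemma sum_weakSamplingProb (hρ : IsCompleteIrreducibleFamily ρ) (H : Subgroup G) :
    ∑ i, weakSamplingProb (ρ i) H = 1 := by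
  have hG : (Nat.card G : ℝ) ≠ 0 := Nat.cast_ne_zero.2 Nat.card_pos.ne'
  have hsum := congrArg (Nat.cast (R := ℝ)) (hρ.sum_finrank_mul_finrank_subgroupInvariants H)
  push_cast at hsum
  calc ∑ i, weakSamplingProb (ρ i) H
      = Nat.card H / Nat.card G *
          ∑ i, (finrank k (V i) : ℝ) * finrank k (subgroupInvariants (ρ i) H) := by
        rw [Finset.mul_sum]
        exact Finset.sum_congr rfl fun i _ ↦ by rw [weakSamplingProb]; ring
    _ = 1 := by
        rw [hsum, div_mul_eq_mul_div, ← Nat.cast_mul, H.card_mul_index, div_self hG]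

theorem one_le_sum_abs_weakSamplingProb_sub_of_normal (hρ : IsCompleteIrreducibleFamily ρ)
    {H₁ H₂ K : Subgroup G} [K.Normal] (hK₁ : K ≤ H₁) (hK₂ : ¬ K ≤ H₂) :
    1 ≤ ∑ i, |weakSamplingProb (ρ i) H₁ - weakSamplingProb (ρ i) H₂| := by
  classical
  have := hρ.isIrreducible
  let E : Finset ι := {i | subgroupInvariants (ρ i) K = ⊤}
  have hE₁ : ∑ i ∈ E, weakSamplingProb (ρ i) H₁ = 1 := by
    rw [← sum_weakSamplingProb hρ H₁]
    refine Finset.sum_subset E.subset_univ fun i _ hi ↦ weakSamplingProb_eq_zero hK₁ ?_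
    simpa [E] using hi
  have hE₂ : 2 * ∑ i ∈ E, weakSamplingProb (ρ i) H₂ ≤ 1 := calc
    2 * ∑ i ∈ E, weakSamplingProb (ρ i) H₂ ≤ ∑ i ∈ E, weakSamplingProb (ρ i) (H₂ ⊔ K) := by
      rw [Finset.mul_sum]
      exact Finset.sum_le_sum fun i hi ↦
        two_mul_weakSamplingProb_le_sup hK₂ (Finset.mem_filter.1 hi).2
    _ ≤ ∑ i, weakSamplingProb (ρ i) (H₂ ⊔ K) :=
      Finset.sum_le_univ_sum_of_nonneg fun _ ↦ weakSamplingProb_nonneg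
    _ = 1 := sum_weakSamplingProb hρ _
  have hsum := two_mul_sum_sub_le_sum_abs_sub
    ((sum_weakSamplingProb hρ H₁).trans (sum_weakSamplingProb hρ H₂).symm) E
  linarith

theorem weak_fourier_sampling_distinct_cores_general (hρ : IsCompleteIrreducibleFamily ρ)
    {H₁ H₂ : Subgroup G} (hcore : H₁.normalCore ≠ H₂.normalCore) :
    1 ≤ ∑ i, (finrank k (V i) : ℝ) / Nat.card G *
      |(Nat.card H₁ : ℝ) * finrank k (subgroupInvariants (ρ i) H₁) -
        Nat.card H₂ * finrank k (subgroupInvariants (ρ i) H₂)| := by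
  simp_rw [← abs_weakSamplingProb_sub]
  by_cases h₁ : H₁.normalCore ≤ H₂
  · have h₂ : ¬ H₂.normalCore ≤ H₁ := fun h₂ ↦ hcore <|
      le_antisymm (Subgroup.normal_le_normalCore.2 h₁) (Subgroup.normal_le_normalCore.2 h₂)
    simp_rw [abs_sub_comm (weakSamplingProb _ H₁)]
    exact one_le_sum_abs_weakSamplingProb_sub_of_normal hρ H₂.normalCore_le h₂
  · exact one_le_sum_abs_weakSamplingProb_sub_of_normal hρ H₁.normalCore_le h₁

end WeakFourierSampling

lemma finrank_fixedSub {G V : Type} [Group G] [AddCommGroup V] [Module ℂ V]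
    (ρ : Representation ℂ G V) (H : Subgroup G) :
    finrank ℂ (fixedSub ρ H) = finrank ℂ (subgroupInvariants ρ H) :=
  congrArg (fun U : Submodule ℂ V ↦ finrank ℂ U) <|
    Submodule.ext fun _ ↦ mem_subgroupInvariants.symm

/-- Let `G` be a finite group and `H₁, H₂ ≤ G` subgroups with distinct
normal cores. Let `(ρ_i)_{i ∈ ι}` be a finite family of pairwise non-isomorphic
irreducible finite-dimensional complex representations of `G` containing every
irreducible up to isomorphism. Then
`∑_i (dim V_i/|G|)·| |H₁|·dim(V_i^{H₁}) − |H₂|·dim(V_i^{H₂}) | ≥ 1/2`,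
i.e. the total variation distance between the weak Fourier sampling distributions of
`H₁` and `H₂` is at least `1/2`. -/
theorem weak_fourier_sampling_distinct_cores
    (G : Type) [Group G] [Finite G] (H₁ H₂ : Subgroup G)
    (hcore : H₁.normalCore ≠ H₂.normalCore)
    (ι : Type) [Fintype ι] (V : ι → Type)
    [∀ i, AddCommGroup (V i)] [∀ i, Module ℂ (V i)] [∀ i, FiniteDimensional ℂ (V i)]
    (ρ : ∀ i, Representation ℂ G (V i))
    (hnontriv : ∀ i, Nontrivial (V i))
    (hirr : ∀ i, ∀ W : Submodule ℂ (V i),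
      (∀ g : G, ∀ v ∈ W, ρ i g v ∈ W) → W = ⊥ ∨ W = ⊤)
    (hpairwise : ∀ i i', i ≠ i' →
      ¬∃ e : V i ≃ₗ[ℂ] V i', ∀ (g : G) (v : V i), e (ρ i g v) = ρ i' g (e v))
    (hcomplete : ∀ (W : Type) [AddCommGroup W] [Module ℂ W] [FiniteDimensional ℂ W],
      ∀ π : Representation ℂ G W, Nontrivial W →
        (∀ U : Submodule ℂ W, (∀ g : G, ∀ v ∈ U, π g v ∈ U) → U = ⊥ ∨ U = ⊤) →
        ∃ i, ∃ e : W ≃ₗ[ℂ] V i, ∀ (g : G) (v : W), e (π g v) = ρ i g (e v)) :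
    (1 : ℝ) / 2 ≤
      ∑ i, (Module.finrank ℂ (V i) : ℝ) / (Nat.card G) *
        |(Nat.card H₁ : ℝ) * (Module.finrank ℂ (fixedSub (ρ i) H₁)) -
          (Nat.card H₂ : ℝ) * (Module.finrank ℂ (fixedSub (ρ i) H₂))| := by
  have hρ : IsCompleteIrreducibleFamily ρ :=
    { isIrreducible := fun i ↦ isIrreducible_iff_forall_submodule.2 ⟨hnontriv i, hirr i⟩
      eq_of_equiv := fun {i j} e ↦ by_contra fun hij ↦
        hpairwise i j hij (nonempty_equiv_iff.1 ⟨e⟩)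
      exists_equiv := fun W _ _ _ π hπ ↦ by
        obtain ⟨hW, hU⟩ := isIrreducible_iff_forall_submodule.1 hπ
        exact (hcomplete W π hW hU).imp fun _ ↦ nonempty_equiv_iff.2 }
  simp_rw [finrank_fixedSub]
  exact one_half_lt_one.le.trans (weak_fourier_sampling_distinct_cores_general hρ hcore)
end

section
/- There exist constants c₁, c₂, c₃ > 0 such that the following holds for all integers d ≥ p ≥ 1: set α := c₁·d/p² − 2·log p and suppose α ≥ 1. Let U be a random element of the group U(d) of d×d complex unitary matrices distributed according to the Haar probability measure, and define the probability vector S by S_j := (1/p) ∑_{i=1}^p |U_{ij}|² for j = 1, …, d. Then with probability at least 1 − exp(−c₃·α) over the choice of U, one has ∑_{j=1}^d |S_j − 1/d| ≥ c₂/√p. -/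
open MeasureTheory

/-!
Right multiplication by a unitary matrix that is independent of the Haar-random `U` does not change
the law of `U`, so it suffices to show that for *every* orthonormal system of `p` rows, a suitable
random unitary acting on the columns makes the column masses uneven with high probability. We use
independent rotations of blocks of `m ≈ 4p` columns: with probability `1/2` the identity, otherwise
random signs followed by the discrete Fourier transform.

The Gram matrix of `m` vectors in `ℂ^p` of total mass `t` has squared Hilbert–Schmidt norm at least
`t²/p`. If its diagonal contributes half of this then the masses are already uneven, since `m ≥ 4p`.
Otherwise, after the rotation, the deviation of each mass from the mean is a quadratic form in the
signs; as `m` is odd, the squared off-diagonal entries are spread evenly over the Fourier modes, and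
Bonami's lemma bounds the first absolute moment of the form from below by its second moment. In
either case a block contributes `≳ t/√p` to the expected `ℓ¹` deviation, and Hoeffding's inequality
for the `≈ d/p` blocks yields a failure probability of `exp(-Ω(d/p²))`.
-/

open scoped BigOperators Matrix

section Walsh

variable {ι : Type*}

/-- The Walsh character `ε ↦ ∏ a ∈ S, ε a` on the discrete cube `ι → {±1}`, as a real function. -/
def walsh (S : Finset ι) (ε : ι → ℤˣ) : ℝ := ∏ a ∈ S, ((ε a : ℤ) : ℝ)

lemma intUnits_cast_mul_self (u : ℤˣ) : ((u : ℤ) : ℝ) * ((u : ℤ) : ℝ) = 1 := by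
  exact_mod_cast Int.units_coe_mul_self u

/-- The functions on the cube that are polynomials of degree at most `k` in the coordinates
belonging to `s`. -/
def walshPolynomials (s : Finset ι) (k : ℕ) : Submodule ℝ ((ι → ℤˣ) → ℝ) :=
  Submodule.span ℝ (walsh '' {S | S ⊆ s ∧ S.card ≤ k})

lemma walsh_mem_walshPolynomials {s S : Finset ι} {k : ℕ} (hS : S ⊆ s) (hk : S.card ≤ k) :
    walsh S ∈ walshPolynomials s k :=
  Submodule.subset_span ⟨S, ⟨hS, hk⟩, rfl⟩

lemma exists_eq_const_of_mem_walshPolynomials {s : Finset ι} {k : ℕ} (h : s = ∅ ∨ k = 0)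
    {f : (ι → ℤˣ) → ℝ} (hf : f ∈ walshPolynomials s k) : ∃ c, f = fun _ => c := by
  induction hf using Submodule.span_induction with
  | mem _ hf =>
    obtain ⟨S, ⟨hS, hk⟩, rfl⟩ := hf
    have : S = ∅ := h.elim (fun hs => Finset.subset_empty.mp (hs ▸ hS))
      fun hk0 => Finset.card_eq_zero.mp (by omega)
    exact ⟨1, funext fun ε => by simp only [this, walsh, Finset.prod_empty]⟩
  | zero => exact ⟨0, rfl⟩
  | add f g _ _ hf hg =>
    obtain ⟨⟨c, rfl⟩, ⟨c', rfl⟩⟩ := hf, hg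
    exact ⟨c + c', rfl⟩
  | smul r f _ hf =>
    obtain ⟨c, rfl⟩ := hf
    exact ⟨r * c, rfl⟩

variable [DecidableEq ι]

lemma walsh_pair {a b : ι} (hab : a ≠ b) (ε : ι → ℤˣ) :
    walsh {a, b} ε = ((ε a : ℤ) : ℝ) * ((ε b : ℤ) : ℝ) :=
  Finset.prod_pair hab

lemma walsh_insert {a : ι} {S : Finset ι} (ha : a ∉ S) (ε : ι → ℤˣ) :
    walsh (insert a S) ε = ((ε a : ℤ) : ℝ) * walsh S ε :=
  Finset.prod_insert ha

lemma walsh_mul_walsh (S T : Finset ι) (ε : ι → ℤˣ) :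
    walsh S ε * walsh T ε = walsh (symmDiff S T) ε := by
  have hsplit (A B : Finset ι) : walsh A ε = walsh (A ∩ B) ε * walsh (A \ B) ε :=
    (Finset.prod_inter_mul_prod_sdiff A B _).symm
  have hsq : walsh (S ∩ T) ε * walsh (S ∩ T) ε = 1 := by
    rw [walsh, ← Finset.prod_mul_distrib]
    exact Finset.prod_eq_one fun a _ => intUnits_cast_mul_self (ε a)
  have hdiff : walsh (symmDiff S T) ε = walsh (S \ T) ε * walsh (T \ S) ε :=
    Finset.prod_union disjoint_sdiff_sdiff
  rw [hsplit S T, hsplit T S, Finset.inter_comm T S, hdiff]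
  linear_combination walsh (S \ T) ε * walsh (T \ S) ε * hsq

/-- The involution of the cube that changes the sign of the coordinate `a`. -/
def flipSign (a : ι) : (ι → ℤˣ) ≃ (ι → ℤˣ) := Equiv.mulLeft (Pi.mulSingle a (-1))

lemma flipSign_apply_self (a : ι) (ε : ι → ℤˣ) : flipSign a ε a = -ε a := by
  simp [flipSign]

lemma flipSign_apply_of_ne {a b : ι} (h : b ≠ a) (ε : ι → ℤˣ) : flipSign a ε b = ε b := by
  simp [flipSign, h]

lemma walsh_flipSign {a : ι} {S : Finset ι} (ha : a ∉ S) (ε : ι → ℤˣ) :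
    walsh S (flipSign a ε) = walsh S ε :=
  Finset.prod_congr rfl fun b hb => by rw [flipSign_apply_of_ne (ne_of_mem_of_not_mem hb ha)]

lemma flipSign_apply_eq_of_mem_walshPolynomials {s : Finset ι} {k : ℕ} {f : (ι → ℤˣ) → ℝ}
    (hf : f ∈ walshPolynomials s k) {a : ι} (ha : a ∉ s) (ε : ι → ℤˣ) :
    f (flipSign a ε) = f ε := by
  induction hf using Submodule.span_induction with
  | mem _ hf =>
    obtain ⟨S, ⟨hS, -⟩, rfl⟩ := hf
    exact walsh_flipSign (fun h => ha (hS h)) ε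
  | zero => rfl
  | add f g _ _ hf hg => simp only [Pi.add_apply, hf, hg]
  | smul c f _ hf => simp only [Pi.smul_apply, hf]

lemma exists_eq_add_mul_of_mem_walshPolynomials_insert {s : Finset ι} {k : ℕ} {a : ι}
    {f : (ι → ℤˣ) → ℝ} (hf : f ∈ walshPolynomials (insert a s) (k + 1)) :
    ∃ g ∈ walshPolynomials s (k + 1), ∃ h ∈ walshPolynomials s k,
      ∀ ε, f ε = g ε + ((ε a : ℤ) : ℝ) * h ε := by
  induction hf using Submodule.span_induction with
  | mem _ hf =>
    obtain ⟨S, ⟨hS, hk⟩, rfl⟩ := hf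
    by_cases ha : a ∈ S
    · have hcard : (S.erase a).card ≤ k := by rw [Finset.card_erase_of_mem ha]; omega
      refine ⟨0, zero_mem _, walsh (S.erase a), walsh_mem_walshPolynomials
        (Finset.subset_insert_iff.mp hS) hcard, fun ε => ?_⟩
      rw [← walsh_insert (Finset.notMem_erase a S), Finset.insert_erase ha]
      simp
    · refine ⟨walsh S, walsh_mem_walshPolynomials ?_ hk, 0, zero_mem _, fun ε => by simp⟩
      exact (Finset.subset_insert_iff_of_notMem ha).mp hS
  | zero => exact ⟨0, zero_mem _, 0, zero_mem _, fun ε => by simp⟩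
  | add f f' _ _ hf hf' =>
    obtain ⟨g, hg, h, hh, hf⟩ := hf
    obtain ⟨g', hg', h', hh', hf'⟩ := hf'
    refine ⟨g + g', add_mem hg hg', h + h', add_mem hh hh', fun ε => ?_⟩
    simp only [Pi.add_apply, hf, hf']
    ring
  | smul c f _ hf =>
    obtain ⟨g, hg, h, hh, hf⟩ := hf
    refine ⟨c • g, Submodule.smul_mem _ c hg, c • h, Submodule.smul_mem _ c hh, fun ε => ?_⟩
    simp only [Pi.smul_apply, smul_eq_mul, hf]
    ring

variable [Fintype ι]

lemma expect_sign_mul_eq_zero {a : ι} {f : (ι → ℤˣ) → ℝ} (hf : ∀ ε, f (flipSign a ε) = f ε) :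
    𝔼 ε : ι → ℤˣ, ((ε a : ℤ) : ℝ) * f ε = 0 := by
  have hodd : 𝔼 ε : ι → ℤˣ, ((ε a : ℤ) : ℝ) * f ε = 𝔼 ε : ι → ℤˣ, -(((ε a : ℤ) : ℝ) * f ε) :=
    Fintype.expect_equiv (flipSign a) _ _ fun ε => by simp [flipSign_apply_self, hf]
  rw [Finset.expect_neg_distrib] at hodd
  linarith

lemma expect_walsh (S : Finset ι) : 𝔼 ε, walsh S ε = if S = ∅ then 1 else 0 := by
  split_ifs with hS
  · simp only [hS, walsh, Finset.prod_empty, Fintype.expect_const]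
  · obtain ⟨a, ha⟩ := Finset.nonempty_iff_ne_empty.mpr hS
    have hfactor (ε : ι → ℤˣ) : walsh S ε = ((ε a : ℤ) : ℝ) * walsh (S.erase a) ε := by
      rw [← walsh_insert (Finset.notMem_erase a S), Finset.insert_erase ha]
    simp only [hfactor]
    exact expect_sign_mul_eq_zero (walsh_flipSign (Finset.notMem_erase a S))

section Moments

variable {a : ι} {g h : (ι → ℤˣ) → ℝ}

lemma expect_add_sign_mul_pow_two (hg : ∀ ε, g (flipSign a ε) = g ε)
    (hh : ∀ ε, h (flipSign a ε) = h ε) :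
    𝔼 ε, (g ε + ((ε a : ℤ) : ℝ) * h ε) ^ 2 = 𝔼 ε, g ε ^ 2 + 𝔼 ε, h ε ^ 2 := by
  have hcross := expect_sign_mul_eq_zero (a := a) (f := fun ε => 2 * g ε * h ε)
    fun ε => by simp only [hg, hh]
  rw [← add_zero (_ + _), ← hcross, ← Finset.expect_add_distrib, ← Finset.expect_add_distrib]
  refine Finset.expect_congr rfl fun ε _ => ?_
  linear_combination h ε ^ 2 * intUnits_cast_mul_self (ε a)

lemma expect_add_sign_mul_pow_four (hg : ∀ ε, g (flipSign a ε) = g ε)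
    (hh : ∀ ε, h (flipSign a ε) = h ε) :
    𝔼 ε, (g ε + ((ε a : ℤ) : ℝ) * h ε) ^ 4
      = 𝔼 ε, g ε ^ 4 + 6 * 𝔼 ε, g ε ^ 2 * h ε ^ 2 + 𝔼 ε, h ε ^ 4 := by
  have hcross := expect_sign_mul_eq_zero (a := a)
    (f := fun ε => 4 * g ε ^ 3 * h ε + 4 * g ε * h ε ^ 3) fun ε => by simp only [hg, hh]
  rw [← add_zero (_ + _), ← hcross, Finset.mul_expect, ← Finset.expect_add_distrib,
    ← Finset.expect_add_distrib, ← Finset.expect_add_distrib]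
  refine Finset.expect_congr rfl fun ε _ => ?_
  have hsq := intUnits_cast_mul_self (ε a)
  set u := ((ε a : ℤ) : ℝ)
  linear_combination (6 * g ε ^ 2 * h ε ^ 2 + 4 * g ε * h ε ^ 3 * u + h ε ^ 4 * (u * u + 1)) * hsq

end Moments

/-- **Bonami's lemma**: when `f = g + ε_a h` with `g` and `h` independent of `ε_a`, the mixed term
`6 𝔼[g² h²]` of the fourth moment is controlled by the Cauchy–Schwarz inequality. -/
theorem expect_pow_four_le_of_mem_walshPolynomials {s : Finset ι} {k : ℕ} {f : (ι → ℤˣ) → ℝ}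
    (hf : f ∈ walshPolynomials s k) : 𝔼 ε, f ε ^ 4 ≤ 9 ^ k * (𝔼 ε, f ε ^ 2) ^ 2 := by
  have hconst (c : ℝ) (k : ℕ) :
      𝔼 _ε : ι → ℤˣ, c ^ 4 ≤ 9 ^ k * (𝔼 _ε : ι → ℤˣ, c ^ 2) ^ 2 := by
    simp only [Fintype.expect_const, ← pow_mul]
    exact le_mul_of_one_le_left (by positivity) (one_le_pow₀ (by norm_num))
  induction s using Finset.induction_on generalizing k f with
  | empty =>
    obtain ⟨c, rfl⟩ := exists_eq_const_of_mem_walshPolynomials (.inl rfl) hf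
    exact hconst c k
  | insert a s ha ih =>
    obtain _ | k := k
    · obtain ⟨c, rfl⟩ := exists_eq_const_of_mem_walshPolynomials (.inr rfl) hf
      exact hconst c 0
    obtain ⟨g, hg, h, hh, hgh⟩ := exists_eq_add_mul_of_mem_walshPolynomials_insert hf
    have hg_flip := flipSign_apply_eq_of_mem_walshPolynomials hg ha
    have hh_flip := flipSign_apply_eq_of_mem_walshPolynomials hh ha
    have hmixed : 𝔼 ε, g ε ^ 2 * h ε ^ 2 ≤ 3 * 9 ^ k * ((𝔼 ε, g ε ^ 2) * 𝔼 ε, h ε ^ 2) := by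
      refine le_of_sq_le_sq ?_ (by positivity)
      calc (𝔼 ε, g ε ^ 2 * h ε ^ 2) ^ 2
          ≤ (𝔼 ε, (g ε ^ 2) ^ 2) * 𝔼 ε, (h ε ^ 2) ^ 2 :=
            Finset.expect_mul_sq_le_sq_mul_sq _ _ _
        _ = (𝔼 ε, g ε ^ 4) * 𝔼 ε, h ε ^ 4 := by simp only [← pow_mul]
        _ ≤ (9 ^ (k + 1) * (𝔼 ε, g ε ^ 2) ^ 2) * (9 ^ k * (𝔼 ε, h ε ^ 2) ^ 2) := by
            gcongr
            exacts [ih hg, ih hh]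
        _ = (3 * 9 ^ k * ((𝔼 ε, g ε ^ 2) * 𝔼 ε, h ε ^ 2)) ^ 2 := by ring
    simp only [hgh]
    rw [expect_add_sign_mul_pow_two hg_flip hh_flip, expect_add_sign_mul_pow_four hg_flip hh_flip]
    have hslack : 0 ≤ 8 * 9 ^ k * (𝔼 ε, h ε ^ 2) ^ 2 := by positivity
    linear_combination ih hg + 6 * hmixed + ih hh + hslack

/-- Follows from Bonami's lemma by interpolating `L²` between `L¹` and `L⁴`. -/
theorem sqrt_expect_sq_le_of_mem_walshPolynomials {s : Finset ι} {k : ℕ} {f : (ι → ℤˣ) → ℝ}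
    (hf : f ∈ walshPolynomials s k) : √(𝔼 ε, f ε ^ 2) ≤ 3 ^ k * 𝔼 ε, |f ε| := by
  have hf0 : 0 ≤ 𝔼 ε, |f ε| := Finset.expect_nonneg fun ε _ => abs_nonneg (f ε)
  have h12 : (𝔼 ε, f ε ^ 2) ^ 2 ≤ (𝔼 ε, |f ε|) * 𝔼 ε, |f ε| * f ε ^ 2 := by
    have h := Finset.expect_mul_sq_le_sq_mul_sq Finset.univ
      (fun ε => √|f ε|) (fun ε => √|f ε| * |f ε|)
    simpa only [← mul_assoc, mul_pow, Real.mul_self_sqrt (abs_nonneg _),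
      Real.sq_sqrt (abs_nonneg _), sq_abs, abs_mul_abs_self, ← sq] using h
  have h24 : (𝔼 ε, |f ε| * f ε ^ 2) ^ 2 ≤ (𝔼 ε, f ε ^ 2) * 𝔼 ε, f ε ^ 4 := by
    have h := Finset.expect_mul_sq_le_sq_mul_sq Finset.univ (fun ε => |f ε|) (fun ε => f ε ^ 2)
    simpa only [sq_abs, ← pow_mul] using h
  have h4 := expect_pow_four_le_of_mem_walshPolynomials hf
  set q := 𝔼 ε, f ε ^ 2
  set e := 𝔼 ε, |f ε|
  have hq0 : 0 ≤ q := Finset.expect_nonneg fun ε _ => sq_nonneg (f ε)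
  obtain hq | hq := hq0.eq_or_lt
  · rw [← hq, Real.sqrt_zero]
    positivity
  rw [Real.sqrt_le_left (by positivity)]
  refine le_of_mul_le_mul_left ?_ (pow_pos hq 3)
  calc q ^ 3 * q = (q ^ 2) ^ 2 := by ring
    _ ≤ (e * 𝔼 ε, |f ε| * f ε ^ 2) ^ 2 := by gcongr
    _ = e ^ 2 * (𝔼 ε, |f ε| * f ε ^ 2) ^ 2 := mul_pow _ _ _
    _ ≤ e ^ 2 * (q * (9 ^ k * q ^ 2)) := by gcongr; exact h24.trans (by gcongr)
    _ = q ^ 3 * (3 ^ k * e) ^ 2 := by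
      rw [mul_pow, ← pow_mul, mul_comm k, pow_mul]
      ring

lemma expect_walsh_mul_walsh (S T : Finset ι) :
    𝔼 ε, walsh S ε * walsh T ε = if S = T then 1 else 0 := by
  simp only [walsh_mul_walsh, expect_walsh, ← Finset.bot_eq_empty, symmDiff_eq_bot]

end Walsh

section SignChaos

variable {ι : Type*} [Fintype ι]

/-- The homogeneous quadratic form `∑_{a ≠ b} K a b ε_a ε_b` in the signs `ε`. -/
def signChaos (K : ι → ι → ℝ) (ε : ι → ℤˣ) : ℝ :=
  ∑ x ∈ Finset.univ.offDiag, K x.1 x.2 * (((ε x.1 : ℤ) : ℝ) * ((ε x.2 : ℤ) : ℝ))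

lemma signChaos_eq_sum_walsh [DecidableEq ι] (K : ι → ι → ℝ) (ε : ι → ℤˣ) :
    signChaos K ε = ∑ x ∈ Finset.univ.offDiag, K x.1 x.2 * walsh {x.1, x.2} ε :=
  Finset.sum_congr rfl fun x hx => by rw [walsh_pair (Finset.mem_offDiag.mp hx).2.2]

lemma signChaos_mem_walshPolynomials (K : ι → ι → ℝ) :
    signChaos K ∈ walshPolynomials Finset.univ 2 := by
  classical
  have hsum : signChaos K = ∑ x ∈ Finset.univ.offDiag, K x.1 x.2 • walsh {x.1, x.2} := by
    ext ε
    simp only [signChaos_eq_sum_walsh, Finset.sum_apply, Pi.smul_apply, smul_eq_mul]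
  rw [hsum]
  exact sum_mem fun x _ => Submodule.smul_mem _ _ <|
    walsh_mem_walshPolynomials (Finset.subset_univ _) Finset.card_le_two

lemma expect_signChaos_sq [DecidableEq ι] {K : ι → ι → ℝ} (hK : ∀ a b, K a b = K b a) :
    𝔼 ε, signChaos K ε ^ 2 = 2 * ∑ x ∈ Finset.univ.offDiag, K x.1 x.2 ^ 2 := by
  have hexpand (ε : ι → ℤˣ) : signChaos K ε ^ 2 = ∑ x ∈ Finset.univ.offDiag,
      ∑ y ∈ Finset.univ.offDiag,
        K x.1 x.2 * K y.1 y.2 * (walsh {x.1, x.2} ε * walsh {y.1, y.2} ε) := by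
    rw [signChaos_eq_sum_walsh, sq, Finset.sum_mul_sum]
    exact Finset.sum_congr rfl fun x _ => Finset.sum_congr rfl fun y _ => by ring
  have hpair {x : ι × ι} (hx : x ∈ Finset.univ.offDiag) :
      (Finset.univ.offDiag.filter fun y : ι × ι => ({x.1, x.2} : Finset ι) = {y.1, y.2})
        = {x, x.swap} := by
    have hab : x.1 ≠ x.2 := (Finset.mem_offDiag.mp hx).2.2
    ext y
    simp only [Finset.mem_filter, Finset.mem_offDiag, Finset.mem_univ, true_and,
      Finset.mem_insert, Finset.mem_singleton, Prod.ext_iff, Prod.fst_swap, Prod.snd_swap,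
      ← Finset.coe_inj, Finset.coe_pair, Set.pair_eq_pair_iff]
    grind
  simp only [hexpand, Finset.expect_sum_comm, ← Finset.mul_expect, expect_walsh_mul_walsh,
    mul_ite, mul_one, mul_zero, ← Finset.sum_filter]
  rw [Finset.mul_sum]
  refine Finset.sum_congr rfl fun x hx => ?_
  have hne : x ≠ x.swap := fun h => (Finset.mem_offDiag.mp hx).2.2 (congrArg Prod.fst h)
  rw [hpair hx, Finset.sum_pair hne, Prod.fst_swap, Prod.snd_swap, hK x.2 x.1]
  ring

end SignChaos

section MeanDeviation

variable {κ : Type*} [Fintype κ]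

/-- The `ℓ¹` distance from `w` to the constant vector with the same total mass. -/
noncomputable def meanDeviation (w : κ → ℝ) : ℝ := ∑ j, |w j - 𝔼 i, w i|

lemma meanDeviation_nonneg (w : κ → ℝ) : 0 ≤ meanDeviation w :=
  Finset.sum_nonneg fun _ _ => abs_nonneg _

lemma meanDeviation_le_two_mul_sum_abs_sub (w : κ → ℝ) (c : ℝ) :
    meanDeviation w ≤ 2 * ∑ j, |w j - c| := by
  obtain _ | _ := isEmpty_or_nonempty κ
  · simp [meanDeviation]
  have hmean : |c - 𝔼 i, w i| ≤ 𝔼 i, |w i - c| := by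
    calc |c - 𝔼 i, w i| = |𝔼 i, (w i - c)| := by
          rw [abs_sub_comm, Finset.expect_sub_distrib, Fintype.expect_const]
      _ ≤ 𝔼 i, |w i - c| := Finset.abs_expect_le _ _
  calc meanDeviation w ≤ ∑ j, (|w j - c| + |c - 𝔼 i, w i|) :=
        Finset.sum_le_sum fun j _ => abs_sub_le _ _ _
    _ = ∑ j, |w j - c| + Fintype.card κ * |c - 𝔼 i, w i| := by
        rw [Finset.sum_add_distrib, Finset.sum_const, Finset.card_univ, nsmul_eq_mul]
    _ ≤ ∑ j, |w j - c| + Fintype.card κ * 𝔼 i, |w i - c| := by gcongr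
    _ = 2 * ∑ j, |w j - c| := by rw [Fintype.card_mul_expect, two_mul]

lemma sum_sq_le_sum_sq_div_card_add_meanDeviation_sq (w : κ → ℝ) :
    ∑ j, w j ^ 2 ≤ (∑ j, w j) ^ 2 / Fintype.card κ + meanDeviation w ^ 2 := by
  have hvar : ∑ j, w j ^ 2 = (∑ j, w j) ^ 2 / Fintype.card κ + ∑ j, (w j - 𝔼 i, w i) ^ 2 := by
    have hexpand (j : κ) : (w j - 𝔼 i, w i) ^ 2
        = w j ^ 2 - 2 * (𝔼 i, w i) * w j + (𝔼 i, w i) ^ 2 := by ring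
    simp only [hexpand, Finset.sum_add_distrib, Finset.sum_sub_distrib, ← Finset.mul_sum,
      Finset.sum_const, Finset.card_univ, nsmul_eq_mul, sq (𝔼 i, w i),
      Fintype.card_mul_expect]
    rw [Fintype.expect_eq_sum_div_card]
    ring
  have hl1 : ∑ j, (w j - 𝔼 i, w i) ^ 2 ≤ meanDeviation w ^ 2 := by
    simpa only [meanDeviation, sq_abs] using
      Finset.sum_sq_le_sq_sum_of_nonneg fun j (_ : j ∈ Finset.univ) => abs_nonneg (w j - 𝔼 i, w i)
  rw [hvar]
  gcongr

end MeanDeviation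

section ColumnMass

variable {ρ κ : Type*} [Fintype ρ]

/-- The squared Euclidean norm of the column `j` of `A`. -/
noncomputable def columnMass (A : Matrix ρ κ ℂ) (j : κ) : ℝ := ∑ i, ‖A i j‖ ^ 2

lemma columnMass_nonneg (A : Matrix ρ κ ℂ) (j : κ) : 0 ≤ columnMass A j :=
  Finset.sum_nonneg fun _ _ => sq_nonneg _

lemma conjTranspose_mul_self_apply_self (A : Matrix ρ κ ℂ) (j : κ) :
    (Aᴴ * A) j j = columnMass A j := by
  simp [Matrix.mul_apply, columnMass, Complex.conj_mul']

variable [Fintype κ]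

lemma trace_conjTranspose_mul_self (A : Matrix ρ κ ℂ) :
    (Aᴴ * A).trace = (∑ j, columnMass A j : ℝ) := by
  simp [Matrix.trace, conjTranspose_mul_self_apply_self]

lemma sum_columnMass_mul_of_mem_unitaryGroup [DecidableEq κ] (A : Matrix ρ κ ℂ)
    {V : Matrix κ κ ℂ} (hV : V ∈ Matrix.unitaryGroup κ ℂ) :
    ∑ j, columnMass (A * V) j = ∑ j, columnMass A j := by
  have hVV : V * Vᴴ = 1 := Matrix.mem_unitaryGroup_iff.mp hV
  have htrace : ((A * V)ᴴ * (A * V)).trace = (Aᴴ * A).trace := by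
    rw [Matrix.conjTranspose_mul, Matrix.mul_assoc, Matrix.trace_mul_comm, Matrix.mul_assoc,
      Matrix.mul_assoc, hVV, Matrix.mul_one]
  simpa only [trace_conjTranspose_mul_self, Complex.ofReal_inj] using htrace

lemma sum_columnMass_conjTranspose (A : Matrix ρ κ ℂ) :
    ∑ i, columnMass Aᴴ i = ∑ j, columnMass A j := by
  simp only [columnMass, Matrix.conjTranspose_apply, norm_star]
  exact Finset.sum_comm

lemma sum_columnMass_conjTranspose_mul_self (A : Matrix ρ κ ℂ) :
    ∑ j, columnMass (Aᴴ * A) j = ∑ i, columnMass (A * Aᴴ) i := by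
  have htrace : ((Aᴴ * A)ᴴ * (Aᴴ * A)).trace = ((A * Aᴴ)ᴴ * (A * Aᴴ)).trace := by
    simp only [Matrix.conjTranspose_mul, Matrix.conjTranspose_conjTranspose]
    rw [Matrix.mul_assoc, Matrix.trace_mul_comm]
    simp only [Matrix.mul_assoc]
  simpa only [trace_conjTranspose_mul_self, Complex.ofReal_inj] using htrace

lemma sum_columnMass_sq_le (A : Matrix ρ κ ℂ) :
    (∑ j, columnMass A j) ^ 2 ≤ Fintype.card ρ * ∑ j, columnMass (Aᴴ * A) j := by
  have hdiag (i : ρ) : columnMass Aᴴ i ^ 2 ≤ columnMass (A * Aᴴ) i := by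
    have hii : ‖(A * Aᴴ) i i‖ = columnMass Aᴴ i := by
      rw [← Matrix.conjTranspose_conjTranspose A, Matrix.conjTranspose_conjTranspose Aᴴ,
        conjTranspose_mul_self_apply_self,
        Complex.norm_of_nonneg (columnMass_nonneg _ i)]
    rw [← hii]
    exact Finset.single_le_sum (f := fun k => ‖(A * Aᴴ) k i‖ ^ 2) (fun _ _ => sq_nonneg _)
      (Finset.mem_univ i)
  calc (∑ j, columnMass A j) ^ 2 = (∑ i, columnMass Aᴴ i) ^ 2 := by
        rw [sum_columnMass_conjTranspose]
    _ ≤ Fintype.card ρ * ∑ i, columnMass Aᴴ i ^ 2 := by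
        exact sq_sum_le_card_mul_sum_sq
    _ ≤ Fintype.card ρ * ∑ i, columnMass (A * Aᴴ) i := by gcongr with i; exact hdiag i
    _ = Fintype.card ρ * ∑ j, columnMass (Aᴴ * A) j := by
        rw [sum_columnMass_conjTranspose_mul_self]

end ColumnMass

lemma sum_sum_eq_sum_diag_add_sum_offDiag {κ M : Type*} [Fintype κ] [AddCommMonoid M]
    (f : κ → κ → M) :
    ∑ a, ∑ b, f a b = ∑ a, f a a + ∑ x ∈ Finset.univ.offDiag, f x.1 x.2 := by
  classical
  rw [← Finset.sum_product', ← Finset.diag_union_offDiag,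
    Finset.sum_union (Finset.disjoint_diag_offDiag _), Finset.sum_diag]

section SignedDFT

open scoped ComplexConjugate

lemma conj_stdAddChar {m : ℕ} [NeZero m] (x : ZMod m) :
    conj (ZMod.stdAddChar x : ℂ) = ZMod.stdAddChar (-x) := by
  rw [ZMod.stdAddChar_apply, ZMod.stdAddChar_apply, AddChar.map_neg_eq_inv,
    Circle.coe_inv_eq_conj]

lemma norm_stdAddChar {m : ℕ} [NeZero m] (x : ZMod m) : ‖(ZMod.stdAddChar x : ℂ)‖ = 1 := by
  rw [ZMod.stdAddChar_apply]
  exact Circle.norm_coe _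

variable {m : ℕ} [NeZero m]

/-- The unitary discrete Fourier transform on `ZMod m`, preceded by multiplication by the
diagonal matrix of the signs `ε`. -/
noncomputable def signedDFT (ε : ZMod m → ℤˣ) : Matrix (ZMod m) (ZMod m) ℂ :=
  Matrix.of fun a j => ((ε a : ℤ) : ℂ) * (ZMod.stdAddChar (a * j) * ((√m)⁻¹ : ℝ))

lemma conj_signedDFT_mul_signedDFT (ε : ZMod m → ℤˣ) (a b j k : ZMod m) :
    conj (signedDFT ε a j) * signedDFT ε b k
      = (((ε a : ℤ) : ℂ) * ((ε b : ℤ) : ℂ)) * (m : ℂ)⁻¹ * ZMod.stdAddChar (b * k - a * j) := by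
  have hsqrt : (((√m)⁻¹ : ℝ) : ℂ) * ((√m)⁻¹ : ℝ) = (m : ℂ)⁻¹ := by
    rw [← Complex.ofReal_mul, ← mul_inv, Real.mul_self_sqrt (Nat.cast_nonneg m)]
    push_cast
    rfl
  rw [← hsqrt, sub_eq_add_neg, AddChar.map_add_eq_mul, ← conj_stdAddChar]
  simp only [signedDFT, Matrix.of_apply, map_mul, Complex.conj_ofReal, map_intCast]
  ring

lemma signedDFT_mem_unitaryGroup (ε : ZMod m → ℤˣ) :
    signedDFT ε ∈ Matrix.unitaryGroup (ZMod m) ℂ := by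
  rw [Matrix.mem_unitaryGroup_iff]
  ext a b
  have hentry (j : ZMod m) : signedDFT ε a j * star (signedDFT ε b j)
      = ((ε b : ℤ) : ℂ) * ((ε a : ℤ) : ℂ) * (m : ℂ)⁻¹ * ZMod.stdAddChar (j * (a - b)) := by
    rw [mul_comm, Complex.star_def, conj_signedDFT_mul_signedDFT, mul_comm a, mul_comm b, mul_sub]
  simp only [Matrix.mul_apply, Matrix.star_apply, hentry, ← Finset.mul_sum,
    AddChar.sum_mulShift _ (ZMod.isPrimitive_stdAddChar m), ZMod.card, sub_eq_zero]
  obtain rfl | hab := eq_or_ne a b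
  · have hsign : ((ε a : ℤ) : ℂ) * ((ε a : ℤ) : ℂ) = 1 := by
      exact_mod_cast Int.units_coe_mul_self (ε a)
    simp [hsign, NeZero.ne m]
  · simp [hab]

variable {ρ : Type*} [Fintype ρ] (A : Matrix ρ (ZMod m) ℂ)

/-- The coefficients of the quadratic form in the signs `ε` which expresses `m` times the mass of
the column `j` of `A * signedDFT ε`. -/
noncomputable def gramKernel (j a b : ZMod m) : ℝ :=
  (ZMod.stdAddChar (j * (b - a)) * (Aᴴ * A) a b).re

lemma gramKernel_comm (j a b : ZMod m) : gramKernel A j a b = gramKernel A j b a := by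
  have hherm : (Aᴴ * A) b a = conj ((Aᴴ * A) a b) :=
    ((Matrix.isHermitian_conjTranspose_mul_self A).apply b a).symm
  rw [gramKernel, gramKernel, hherm, ← Complex.conj_re, map_mul, conj_stdAddChar, ← mul_neg,
    neg_sub]

lemma gramKernel_self (j a : ZMod m) : gramKernel A j a a = columnMass A a := by
  simp [gramKernel, conjTranspose_mul_self_apply_self]

lemma gramKernel_sq_le (j a b : ZMod m) : gramKernel A j a b ^ 2 ≤ ‖(Aᴴ * A) a b‖ ^ 2 := by
  have habs := Complex.abs_re_le_norm (ZMod.stdAddChar (j * (b - a)) * (Aᴴ * A) a b)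
  rw [norm_mul, norm_stdAddChar, one_mul] at habs
  exact sq_le_sq.mpr (habs.trans (le_abs_self _))

lemma sum_gramKernel_sq (hm : Odd m) {a b : ZMod m} (hab : a ≠ b) :
    ∑ j, gramKernel A j a b ^ 2 = m * ‖(Aᴴ * A) a b‖ ^ 2 / 2 := by
  set z := (Aᴴ * A) a b
  have hre_sq (w : ℂ) : w.re ^ 2 = (‖w‖ ^ 2 + (w * w).re) / 2 := by
    rw [← Complex.normSq_eq_norm_sq, Complex.normSq_apply, Complex.mul_re]
    ring
  have htwo : IsUnit (2 : ZMod m) := by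
    exact_mod_cast (ZMod.isUnit_iff_coprime 2 m).mpr (Nat.coprime_two_left.mpr hm)
  have hne : (2 : ZMod m) * (b - a) ≠ 0 := by
    rw [Ne, htwo.mul_right_eq_zero, sub_eq_zero]
    exact hab.symm
  have hcancel : ∑ j : ZMod m, (ZMod.stdAddChar (j * (b - a)) * z) *
      (ZMod.stdAddChar (j * (b - a)) * z) = 0 := by
    have hterm (j : ZMod m) : (ZMod.stdAddChar (j * (b - a)) * z) *
        (ZMod.stdAddChar (j * (b - a)) * z) = z * z * ZMod.stdAddChar (j * (2 * (b - a))) := by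
      rw [mul_left_comm j, two_mul, AddChar.map_add_eq_mul]
      ring
    simp only [hterm, ← Finset.mul_sum, AddChar.sum_mulShift _ (ZMod.isPrimitive_stdAddChar m),
      if_neg hne, Nat.cast_zero, mul_zero]
  simp only [gramKernel, hre_sq, norm_mul, norm_stdAddChar, one_mul]
  rw [← Finset.sum_div, Finset.sum_add_distrib, ← Complex.re_sum, hcancel]
  simp [ZMod.card, z]

lemma columnMass_mul_signedDFT_eq_sum (ε : ZMod m → ℤˣ) (j : ZMod m) :
    columnMass (A * signedDFT ε) j
      = (∑ a, ∑ b, gramKernel A j a b * (((ε a : ℤ) : ℝ) * ((ε b : ℤ) : ℝ))) / m := by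
  have hentry : ((columnMass (A * signedDFT ε) j : ℝ) : ℂ)
      = ∑ a, ∑ b, conj (signedDFT ε a j) * signedDFT ε b j * (Aᴴ * A) a b := by
    rw [← conjTranspose_mul_self_apply_self, Matrix.conjTranspose_mul, Matrix.mul_assoc,
      ← Matrix.mul_assoc Aᴴ, Matrix.mul_apply]
    refine Finset.sum_congr rfl fun a _ => ?_
    rw [Matrix.mul_apply, Finset.mul_sum, Matrix.conjTranspose_apply, Complex.star_def]
    exact Finset.sum_congr rfl fun b _ => by ring
  have hreal (a b : ZMod m) : conj (signedDFT ε a j) * signedDFT ε b j * (Aᴴ * A) a b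
      = ((((ε a : ℤ) : ℝ) * ((ε b : ℤ) : ℝ) / m : ℝ) : ℂ)
        * (ZMod.stdAddChar (j * (b - a)) * (Aᴴ * A) a b) := by
    rw [conj_signedDFT_mul_signedDFT, ← sub_mul, mul_comm j]
    push_cast
    ring
  rw [← Complex.ofReal_re (columnMass _ _), hentry]
  simp only [hreal, Complex.re_sum, Complex.re_ofReal_mul, Finset.sum_div]
  refine Finset.sum_congr rfl fun a _ => Finset.sum_congr rfl fun b _ => ?_
  rw [gramKernel]
  ring

lemma columnMass_mul_signedDFT (ε : ZMod m → ℤˣ) (j : ZMod m) :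
    columnMass (A * signedDFT ε) j
      = (∑ a, columnMass A a + signChaos (gramKernel A j) ε) / m := by
  rw [columnMass_mul_signedDFT_eq_sum, sum_sum_eq_sum_diag_add_sum_offDiag, signChaos]
  simp only [gramKernel_self, intUnits_cast_mul_self, mul_one]

lemma meanDeviation_columnMass_mul_signedDFT (ε : ZMod m → ℤˣ) :
    meanDeviation (columnMass (A * signedDFT ε)) = (∑ j, |signChaos (gramKernel A j) ε|) / m := by
  have hmean : 𝔼 j, columnMass (A * signedDFT ε) j = (∑ a, columnMass A a) / m := by
    rw [Fintype.expect_eq_sum_div_card, ZMod.card,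
      sum_columnMass_mul_of_mem_unitaryGroup A (signedDFT_mem_unitaryGroup ε)]
  rw [meanDeviation, Finset.sum_div, hmean]
  refine Finset.sum_congr rfl fun j _ => ?_
  rw [columnMass_mul_signedDFT, ← sub_div, add_sub_cancel_left, abs_div, Nat.abs_cast]

/-- The squared Hilbert–Schmidt norm of the off-diagonal part of the Gram matrix of the columns
of `A`. -/
noncomputable def offDiagEnergy : ℝ := ∑ x ∈ Finset.univ.offDiag, ‖(Aᴴ * A) x.1 x.2‖ ^ 2

lemma offDiagEnergy_nonneg : 0 ≤ offDiagEnergy A := Finset.sum_nonneg fun _ _ => sq_nonneg _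

lemma sum_columnMass_conjTranspose_mul_self_eq :
    ∑ j, columnMass (Aᴴ * A) j = ∑ j, columnMass A j ^ 2 + offDiagEnergy A := by
  have hdiag (a : ZMod m) : ‖(Aᴴ * A) a a‖ = columnMass A a := by
    rw [conjTranspose_mul_self_apply_self, Complex.norm_of_nonneg (columnMass_nonneg A a)]
  simp only [columnMass.eq_1 (Aᴴ * A)]
  rw [Finset.sum_comm, sum_sum_eq_sum_diag_add_sum_offDiag]
  simp only [hdiag, offDiagEnergy]

lemma offDiagEnergy_le_sqrt_mul_expect_meanDeviation (hm : Odd m) :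
    offDiagEnergy A ≤ √(2 * offDiagEnergy A) *
      (9 * 𝔼 ε : ZMod m → ℤˣ, meanDeviation (columnMass (A * signedDFT ε))) := by
  set E := offDiagEnergy A
  have hm0 : (0 : ℝ) < m := by exact_mod_cast NeZero.pos m
  set q : ZMod m → ℝ := fun j => 𝔼 ε, signChaos (gramKernel A j) ε ^ 2
  have hq (j : ZMod m) : q j = 2 * ∑ x ∈ Finset.univ.offDiag, gramKernel A j x.1 x.2 ^ 2 :=
    expect_signChaos_sq (gramKernel_comm A j)
  have hq_le (j : ZMod m) : q j ≤ 2 * E := by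
    rw [hq]
    gcongr
    exact Finset.sum_le_sum fun x _ => gramKernel_sq_le A j x.1 x.2
  have hq_sum : ∑ j, q j = m * E := by
    simp only [hq, ← Finset.mul_sum]
    rw [Finset.sum_comm, Finset.sum_congr rfl fun x hx =>
      sum_gramKernel_sq A hm (Finset.mem_offDiag.mp hx).2.2, ← Finset.sum_div, ← Finset.mul_sum]
    exact mul_div_cancel₀ _ two_ne_zero
  have hq_abs (j : ZMod m) : q j ≤ √(2 * E) * (9 * 𝔼 ε, |signChaos (gramKernel A j) ε|) := by
    have hq0 : 0 ≤ q j := Finset.expect_nonneg fun ε _ => sq_nonneg _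
    have hbonami := sqrt_expect_sq_le_of_mem_walshPolynomials
      (signChaos_mem_walshPolynomials (gramKernel A j))
    calc q j = √(q j) * √(q j) := (Real.mul_self_sqrt hq0).symm
      _ ≤ √(2 * E) * (3 ^ 2 * 𝔼 ε, |signChaos (gramKernel A j) ε|) :=
        mul_le_mul (Real.sqrt_le_sqrt (hq_le j)) hbonami (Real.sqrt_nonneg _) (Real.sqrt_nonneg _)
      _ = √(2 * E) * (9 * 𝔼 ε, |signChaos (gramKernel A j) ε|) := by norm_num
  simp only [meanDeviation_columnMass_mul_signedDFT, ← Finset.expect_div, Finset.expect_sum_comm]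
  refine le_of_mul_le_mul_left ?_ hm0
  calc m * E = ∑ j, q j := hq_sum.symm
    _ ≤ ∑ j, √(2 * E) * (9 * 𝔼 ε, |signChaos (gramKernel A j) ε|) :=
      Finset.sum_le_sum fun j _ => hq_abs j
    _ = m * (√(2 * E) * (9 * ((∑ j, 𝔼 ε, |signChaos (gramKernel A j) ε|) / m))) := by
      rw [← Finset.mul_sum, ← Finset.mul_sum]
      field_simp

lemma sqrt_offDiagEnergy_le_expect_meanDeviation (hm : Odd m) :
    √(offDiagEnergy A / 2)
      ≤ 9 * 𝔼 ε : ZMod m → ℤˣ, meanDeviation (columnMass (A * signedDFT ε)) := by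
  have hE0 := offDiagEnergy_nonneg A
  have hE_le := offDiagEnergy_le_sqrt_mul_expect_meanDeviation A hm
  set E := offDiagEnergy A
  set S := 𝔼 ε : ZMod m → ℤˣ, meanDeviation (columnMass (A * signedDFT ε))
  obtain hE | hE := hE0.eq_or_lt
  · rw [← hE, zero_div, Real.sqrt_zero]
    exact mul_nonneg (by norm_num) (Finset.expect_nonneg fun ε _ => meanDeviation_nonneg _)
  refine le_of_mul_le_mul_left ?_ (Real.sqrt_pos.mpr (mul_pos two_pos hE))
  calc √(2 * E) * √(E / 2) = √(E * E) := by
        rw [← Real.sqrt_mul (mul_pos two_pos hE).le]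
        congr 1
        ring
    _ = E := Real.sqrt_mul_self hE.le
    _ ≤ √(2 * E) * (9 * S) := hE_le

/-- Either the identity or a `signedDFT`; under the uniform distribution on the index set each of
the two has probability `1 / 2`. -/
noncomputable def blockRotation (σ : Bool × (ZMod m → ℤˣ)) : Matrix (ZMod m) (ZMod m) ℂ :=
  if σ.1 then 1 else signedDFT σ.2

lemma blockRotation_mem_unitaryGroup (σ : Bool × (ZMod m → ℤˣ)) :
    blockRotation σ ∈ Matrix.unitaryGroup (ZMod m) ℂ := by
  unfold blockRotation
  split_ifs
  exacts [one_mem _, signedDFT_mem_unitaryGroup σ.2]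

lemma expect_meanDeviation_columnMass_mul_blockRotation :
    𝔼 σ : Bool × (ZMod m → ℤˣ), meanDeviation (columnMass (A * blockRotation σ))
      = (meanDeviation (columnMass A)
        + 𝔼 ε : ZMod m → ℤˣ, meanDeviation (columnMass (A * signedDFT ε))) / 2 := by
  rw [← Finset.univ_product_univ, Finset.expect_product]
  simp only [Fintype.expect_eq_sum_div_card (ι := Bool), Fintype.sum_bool, Fintype.card_bool,
    blockRotation, Fintype.expect_const, Matrix.mul_one, if_true, Bool.false_eq_true, if_false,
    Nat.cast_ofNat]

lemma sum_columnMass_le_mul_meanDeviation (hρ : 4 * Fintype.card ρ ≤ m)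
    (hA : offDiagEnergy A ≤ ∑ j, columnMass A j ^ 2) :
    ∑ j, columnMass A j ≤ 2 * √(Fintype.card ρ) * meanDeviation (columnMass A) := by
  set p := (Fintype.card ρ : ℝ) with hp
  set t := ∑ j, columnMass A j
  set D := ∑ j, columnMass A j ^ 2
  set M := meanDeviation (columnMass A)
  have ht : t ^ 2 ≤ p * (D + D) :=
    calc t ^ 2 ≤ p * ∑ j, columnMass (Aᴴ * A) j := sum_columnMass_sq_le A
      _ ≤ p * (D + D) := by rw [sum_columnMass_conjTranspose_mul_self_eq]; gcongr
  have hDM : D ≤ t ^ 2 / m + M ^ 2 := by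
    simpa only [ZMod.card] using sum_sq_le_sum_sq_div_card_add_meanDeviation_sq (columnMass A)
  have hpm : p * (t ^ 2 / m) ≤ t ^ 2 / 4 := by
    have h4p : 4 * p ≤ m := by rw [hp]; exact_mod_cast hρ
    rw [mul_div_assoc', div_le_div_iff₀ (by exact_mod_cast NeZero.pos m) (by norm_num)]
    nlinarith [sq_nonneg t]
  have hM : 0 ≤ M := meanDeviation_nonneg _
  refine le_of_sq_le_sq ?_ (by positivity)
  rw [mul_pow, mul_pow, Real.sq_sqrt (Nat.cast_nonneg _)]
  linear_combination 2 * ht + 4 * p * hDM + 4 * hpm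

lemma sum_columnMass_le_mul_sqrt_offDiagEnergy (hA : ∑ j, columnMass A j ^ 2 ≤ offDiagEnergy A) :
    ∑ j, columnMass A j ≤ 2 * √(Fintype.card ρ) * √(offDiagEnergy A / 2) := by
  refine le_of_sq_le_sq ?_ (by positivity)
  rw [mul_pow, mul_pow, Real.sq_sqrt (Nat.cast_nonneg _),
    Real.sq_sqrt (div_nonneg (offDiagEnergy_nonneg A) zero_le_two)]
  calc (∑ j, columnMass A j) ^ 2
      ≤ Fintype.card ρ * ∑ j, columnMass (Aᴴ * A) j := sum_columnMass_sq_le A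
    _ ≤ Fintype.card ρ * (offDiagEnergy A + offDiagEnergy A) := by
        rw [sum_columnMass_conjTranspose_mul_self_eq]
        gcongr
    _ = 2 ^ 2 * Fintype.card ρ * (offDiagEnergy A / 2) := by ring

/-- If the diagonal of the Gram matrix dominates then the columns already have unequal masses, and
otherwise the random signs before the Fourier transform spread the off-diagonal part over the
columns. -/
theorem sum_columnMass_le_expect_meanDeviation (hm : Odd m) (hρ : 4 * Fintype.card ρ ≤ m) :
    ∑ j, columnMass A j ≤ 36 * √(Fintype.card ρ) *
      𝔼 σ : Bool × (ZMod m → ℤˣ), meanDeviation (columnMass (A * blockRotation σ)) := by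
  set r := √(Fintype.card ρ)
  have hM : 0 ≤ meanDeviation (columnMass A) := meanDeviation_nonneg _
  have hM' : 0 ≤ 𝔼 ε : ZMod m → ℤˣ, meanDeviation (columnMass (A * signedDFT ε)) :=
    Finset.expect_nonneg fun ε _ => meanDeviation_nonneg _
  have hrM := mul_nonneg (Real.sqrt_nonneg _ : 0 ≤ r) hM
  have hrM' := mul_nonneg (Real.sqrt_nonneg _ : 0 ≤ r) hM'
  rw [expect_meanDeviation_columnMass_mul_blockRotation]
  obtain hED | hDE := le_total (offDiagEnergy A) (∑ j, columnMass A j ^ 2)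
  · linear_combination sum_columnMass_le_mul_meanDeviation A hρ hED + 16 * hrM + 18 * hrM'
  · calc ∑ j, columnMass A j ≤ 2 * r * √(offDiagEnergy A / 2) :=
          sum_columnMass_le_mul_sqrt_offDiagEnergy A hDE
      _ ≤ 2 * r * (9 * 𝔼 ε : ZMod m → ℤˣ, meanDeviation (columnMass (A * signedDFT ε))) := by
          gcongr
          exact sqrt_offDiagEnergy_le_expect_meanDeviation A hm
      _ ≤ _ := by linear_combination 18 * hrM

end SignedDFT

section Concentration

open ProbabilityTheory

lemma measureReal_pi_sum_le_sub_le {ι : Type*} [Fintype ι] {Ω : ι → Type*}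
    [∀ i, MeasurableSpace (Ω i)] {ν : ∀ i, Measure (Ω i)} [∀ i, IsProbabilityMeasure (ν i)]
    {g : ∀ i, Ω i → ℝ} {b : ι → ℝ} (hg : ∀ i, AEMeasurable (g i) (ν i))
    (hb : ∀ i, ∀ᵐ x ∂ν i, g i x ∈ Set.Icc 0 (b i)) (s : Finset ι) {r : ℝ} (hr : 0 ≤ r) :
    (Measure.pi ν).real {w | ∑ i ∈ s, g i (w i) ≤ ∑ i ∈ s, ∫ x, g i x ∂ν i - r}
      ≤ Real.exp (-(2 * r ^ 2 / ∑ i ∈ s, b i ^ 2)) := by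
  set Y : ∀ i, Ω i → ℝ := fun i x => -(g i x - ∫ y, g i y ∂ν i)
  have hindep : iIndepFun (fun i (w : ∀ i, Ω i) => Y i (w i)) (Measure.pi ν) :=
    iIndepFun_pi fun i => ((hg i).sub_const _).neg
  have hsubG (i : ι) :
      HasSubgaussianMGF (fun w : ∀ i, Ω i => Y i (w i)) ((‖b i - 0‖₊ / 2) ^ 2) (Measure.pi ν) := by
    have h : HasSubgaussianMGF (Y i) ((‖b i - 0‖₊ / 2) ^ 2) (ν i) :=
      (hasSubgaussianMGF_of_mem_Icc (hg i) (hb i)).neg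
    rw [← (measurePreserving_eval ν i).map_eq] at h
    exact HasSubgaussianMGF.of_map (X := Y i) (measurable_pi_apply i).aemeasurable h
  have hevent : {w : ∀ i, Ω i | ∑ i ∈ s, g i (w i) ≤ ∑ i ∈ s, ∫ x, g i x ∂ν i - r}
      = {w | r ≤ ∑ i ∈ s, Y i (w i)} := by
    ext w
    simp only [Y, Set.mem_ofPred_eq, Finset.sum_neg_distrib, Finset.sum_sub_distrib]
    constructor <;> intro h <;> linarith
  have hexponent : -r ^ 2 / (2 * ∑ i ∈ s, ((‖b i - 0‖₊ / 2) ^ 2 : NNReal))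
      = -(2 * r ^ 2 / ∑ i ∈ s, b i ^ 2) := by
    have hsum : (∑ i ∈ s, ((‖b i - 0‖₊ / 2) ^ 2 : NNReal) : ℝ) = (∑ i ∈ s, b i ^ 2) / 4 := by
      simp only [sub_zero, NNReal.coe_pow, NNReal.coe_div, coe_nnnorm, div_pow,
        Real.norm_eq_abs, sq_abs, Finset.sum_div, NNReal.coe_ofNat]
      norm_num
    rw [NNReal.coe_sum, hsum]
    obtain h0 | h0 := eq_or_ne (∑ i ∈ s, b i ^ 2) 0
    · simp [h0]
    · field_simp
      ring
  rw [hevent, ← hexponent]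
  exact_mod_cast HasSubgaussianMGF.measure_sum_ge_le_of_iIndepFun hindep (s := s)
    (fun i _ => hsubG i) hr

lemma sum_le_sum_filter_add {K : Type*} [Fintype K] (t : K → ℝ) (τ : ℝ) :
    ∑ k, t k ≤ ∑ k with t k ≤ 2 * τ, t k + 2 * ∑ k, |t k - τ| := by
  rw [Finset.sum_filter, Finset.mul_sum, ← Finset.sum_add_distrib]
  refine Finset.sum_le_sum fun k _ => ?_
  split_ifs with h
  · exact le_add_of_nonneg_right (by positivity)
  · linarith [le_abs_self (t k - τ)]

lemma sum_filter_sq_le {K : Type*} [Fintype K] {t : K → ℝ} (ht : ∀ k, 0 ≤ t k) {τ : ℝ}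
    (hτ : 0 ≤ τ) : ∑ k with t k ≤ 2 * τ, t k ^ 2 ≤ 2 * τ * ∑ k, t k := by
  rw [Finset.sum_filter, Finset.mul_sum]
  refine Finset.sum_le_sum fun k _ => ?_
  split_ifs with h
  · rw [sq]
    exact mul_le_mul_of_nonneg_right h (ht k)
  · exact mul_nonneg (mul_nonneg zero_le_two hτ) (ht k)

lemma abs_sum_sub_card_mul_le {J : Type*} [Fintype J] (w : J → ℝ) (a : ℝ) :
    |∑ j, w j - Fintype.card J * a| ≤ ∑ j, |w j - a| := by
  calc |∑ j, w j - Fintype.card J * a| = |∑ j, (w j - a)| := by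
        rw [Finset.sum_sub_distrib, Finset.sum_const, Finset.card_univ, nsmul_eq_mul]
    _ ≤ ∑ j, |w j - a| := Finset.abs_sum_le_sum_abs _ _

lemma sum_meanDeviation_le_two_mul_sum_sum_abs_sub {K J : Type*} [Fintype K] [Fintype J]
    (w : K → J → ℝ) (s : Finset K) (a : ℝ) :
    ∑ k ∈ s, meanDeviation (w k) ≤ 2 * ∑ k, ∑ j, |w k j - a| := by
  rw [Finset.mul_sum]
  calc ∑ k ∈ s, meanDeviation (w k) ≤ ∑ k, meanDeviation (w k) :=
        Finset.sum_le_sum_of_subset_of_nonneg s.subset_univ fun k _ _ => meanDeviation_nonneg _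
    _ ≤ ∑ k, 2 * ∑ j, |w k j - a| :=
        Finset.sum_le_sum fun k _ => meanDeviation_le_two_mul_sum_abs_sub _ a

variable {K J Ω : Type*} [Fintype K] [Fintype J] [MeasurableSpace Ω] [DiscreteMeasurableSpace Ω]
  {ν : Measure Ω} [IsProbabilityMeasure ν] {W : K → Ω → J → ℝ} {t : K → ℝ}

lemma measureReal_pi_sum_meanDeviation_le (hW : ∀ k ω j, 0 ≤ W k ω j)
    (ht : ∀ k ω, ∑ j, W k ω j = t k) (s : Finset K) {r : ℝ} (hr : 0 ≤ r) :
    (Measure.pi fun _ : K => ν).real {w | ∑ k ∈ s, meanDeviation (W k (w k))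
        ≤ ∑ k ∈ s, ∫ ω, meanDeviation (W k ω) ∂ν - r}
      ≤ Real.exp (-(r ^ 2 / (2 * ∑ k ∈ s, t k ^ 2))) := by
  have hrange (k : K) (ω : Ω) : meanDeviation (W k ω) ∈ Set.Icc 0 (2 * t k) := by
    refine ⟨meanDeviation_nonneg _, (meanDeviation_le_two_mul_sum_abs_sub _ 0).trans_eq ?_⟩
    simp only [sub_zero, abs_of_nonneg (hW k ω _), ht]
  refine (measureReal_pi_sum_le_sub_le (fun k => (Measurable.of_discrete).aemeasurable)
    (fun k => .of_forall (hrange k)) s hr).trans_eq ?_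
  simp only [mul_pow, ← Finset.mul_sum]
  rw [show (2 : ℝ) ^ 2 = 2 * 2 by norm_num, mul_assoc, mul_div_mul_left _ _ two_ne_zero]

/-- Only the blocks whose mass is at most twice the mass `card J * a` they should have are used:
they carry most of the mass, and their contributions to Hoeffding's inequality are bounded. -/
theorem measureReal_pi_sum_sum_abs_sub_lt_le (hW : ∀ k ω j, 0 ≤ W k ω j)
    (ht : ∀ k ω, ∑ j, W k ω j = t k) {a c δ r : ℝ} (hc : 0 ≤ c)
    (hmean : ∀ k, c * t k ≤ ∫ ω, meanDeviation (W k ω) ∂ν) (ha : 0 ≤ a) (hr : 0 < r)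
    (hδ : 2 * δ + r ≤ c * (∑ k, t k - 2 * δ)) :
    (Measure.pi fun _ : K => ν).real {w | ∑ k, ∑ j, |W k (w k) j - a| < δ}
      ≤ Real.exp (-(r ^ 2 / (4 * (Fintype.card J * a) * ∑ k, t k))) := by
  obtain hempty | ⟨w₀, hw₀ : ∑ k, ∑ j, |W k (w₀ k) j - a| < δ⟩ :=
    Set.eq_empty_or_nonempty {w : K → Ω | ∑ k, ∑ j, |W k (w k) j - a| < δ}
  · rw [hempty, measureReal_empty]
    exact Real.exp_nonneg _
  set τ := Fintype.card J * a
  set G := Finset.univ.filter fun k => t k ≤ 2 * τ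
  have hδ0 : 0 < δ := hw₀.trans_le' (by positivity)
  have ht0 (k : K) : 0 ≤ t k := ht k (w₀ k) ▸ Finset.sum_nonneg fun j _ => hW k _ j
  have hbalance : ∑ k, |t k - τ| ≤ ∑ k, ∑ j, |W k (w₀ k) j - a| :=
    Finset.sum_le_sum fun k _ => ht k (w₀ k) ▸ abs_sum_sub_card_mul_le _ a
  have hG : c * (∑ k, t k - 2 * δ) ≤ c * ∑ k ∈ G, t k := by
    gcongr
    linarith [sum_le_sum_filter_add t τ]
  have hmeanG : 2 * δ ≤ ∑ k ∈ G, ∫ ω, meanDeviation (W k ω) ∂ν - r := by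
    have : c * ∑ k ∈ G, t k ≤ ∑ k ∈ G, ∫ ω, meanDeviation (W k ω) ∂ν := by
      rw [Finset.mul_sum]
      exact Finset.sum_le_sum fun k _ => hmean k
    linarith
  have hsub : {w : K → Ω | ∑ k, ∑ j, |W k (w k) j - a| < δ} ⊆ {w | ∑ k ∈ G,
      meanDeviation (W k (w k)) ≤ ∑ k ∈ G, ∫ ω, meanDeviation (W k ω) ∂ν - r} := by
    intro w (hw : _ < δ)
    have := sum_meanDeviation_le_two_mul_sum_sum_abs_sub (fun k => W k (w k)) G a
    exact Set.mem_ofPred.mpr (by linarith)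
  have hsq_pos : 0 < ∑ k ∈ G, t k ^ 2 := by
    have hmass : ∑ k ∈ G, 0 < ∑ k ∈ G, t k := by
      rw [Finset.sum_const_zero]
      exact pos_of_mul_pos_right (a := c) (by linarith) hc
    obtain ⟨k, hk, htk⟩ := Finset.exists_lt_of_sum_lt hmass
    exact Finset.sum_pos' (fun k _ => sq_nonneg _) ⟨k, hk, pow_pos htk 2⟩
  calc _ ≤ _ := measureReal_mono hsub
    _ ≤ Real.exp (-(r ^ 2 / (2 * ∑ k ∈ G, t k ^ 2))) :=
        measureReal_pi_sum_meanDeviation_le hW ht G hr.le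
    _ ≤ Real.exp (-(r ^ 2 / (2 * (2 * τ * ∑ k, t k)))) := by
        gcongr
        exact sum_filter_sq_le ht0 (by positivity)
    _ = _ := by ring_nf

end Concentration

section BlockExtension

/-- The columns of `A` which belong to the block `k`. -/
def columnBlock {ρ τ κ ι : Type*} (A : Matrix ρ ((τ × κ) ⊕ ι) ℂ) (k : κ) : Matrix ρ τ ℂ :=
  A.submatrix id fun j => .inl (j, k)

lemma sum_columnMass_columnBlock_add_sum_columnMass_inr {ρ τ κ ι : Type*} [Fintype ρ] [Fintype τ]
    [Fintype κ] [Fintype ι] (A : Matrix ρ ((τ × κ) ⊕ ι) ℂ) :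
    ∑ k, ∑ j, columnMass (columnBlock A k) j + ∑ x : ι, columnMass A (.inr x)
      = ∑ c, columnMass A c := by
  rw [Fintype.sum_sum_type, Fintype.sum_prod_type, Finset.sum_comm]
  rfl

variable {τ κ ι : Type*} [DecidableEq κ] [DecidableEq ι]

/-- The square matrix which acts as `V k` on the block `k` of indices and as the identity on the
indices in `ι`. -/
def blockExtension (ι : Type*) [DecidableEq ι] (V : κ → Matrix τ τ ℂ) :
    Matrix ((τ × κ) ⊕ ι) ((τ × κ) ⊕ ι) ℂ :=
  Matrix.fromBlocks (Matrix.blockDiagonal V) 0 0 1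

variable [Fintype τ] [Fintype κ] [Fintype ι]

lemma blockExtension_mem_unitaryGroup [DecidableEq τ] {V : κ → Matrix τ τ ℂ}
    (hV : ∀ k, V k ∈ Matrix.unitaryGroup τ ℂ) :
    blockExtension ι V ∈ Matrix.unitaryGroup ((τ × κ) ⊕ ι) ℂ := by
  have hVV : (fun k => V k * (V k)ᴴ) = 1 := funext fun k => Matrix.mem_unitaryGroup_iff.mp (hV k)
  rw [Matrix.mem_unitaryGroup_iff, Matrix.star_eq_conjTranspose, blockExtension,
    Matrix.fromBlocks_conjTranspose, Matrix.fromBlocks_multiply, Matrix.blockDiagonal_conjTranspose,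
    ← Matrix.blockDiagonal_mul, hVV]
  simp

variable {ρ : Type*} [Fintype ρ] (A : Matrix ρ ((τ × κ) ⊕ ι) ℂ) (V : κ → Matrix τ τ ℂ)

lemma columnMass_mul_blockExtension_inl (j : τ) (k : κ) :
    columnMass (A * blockExtension ι V) (.inl (j, k))
      = columnMass (columnBlock A k * V k) j := by
  simp [columnMass, columnBlock, blockExtension, Matrix.mul_apply, Fintype.sum_prod_type,
    Matrix.blockDiagonal_apply]

lemma columnMass_mul_blockExtension_inr (x : ι) :
    columnMass (A * blockExtension ι V) (.inr x) = columnMass A (.inr x) := by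
  simp [columnMass, blockExtension, Matrix.mul_apply, Matrix.one_apply]

lemma sum_abs_columnMass_mul_blockExtension_sub (a : ℝ) :
    ∑ c, |columnMass (A * blockExtension ι V) c - a|
      = ∑ k, ∑ j, |columnMass (columnBlock A k * V k) j - a|
        + ∑ x : ι, |columnMass A (.inr x) - a| := by
  rw [Fintype.sum_sum_type, Fintype.sum_prod_type, Finset.sum_comm]
  simp only [columnMass_mul_blockExtension_inl, columnMass_mul_blockExtension_inr]

lemma sum_columnMass_sub_le (a : ℝ) :
    ∑ c, columnMass A c - Fintype.card ι * a
      ≤ ∑ k, ∑ j, columnMass (columnBlock A k) j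
        + ∑ c, |columnMass (A * blockExtension ι V) c - a| := by
  have hinr : ∑ x : ι, columnMass A (.inr x) - Fintype.card ι * a
      ≤ ∑ x : ι, |columnMass A (.inr x) - a| :=
    (le_abs_self _).trans (abs_sum_sub_card_mul_le _ a)
  have hinl : 0 ≤ ∑ k, ∑ j, |columnMass (columnBlock A k * V k) j - a| := by positivity
  rw [sum_abs_columnMass_mul_blockExtension_sub]
  linarith [sum_columnMass_columnBlock_add_sum_columnMass_inr A]

end BlockExtension

section UniformMeasure

instance {M : Type*} [Monoid M] [MeasurableSpace M] [MeasurableSingletonClass M] :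
    MeasurableSingletonClass Mˣ :=
  ⟨fun u => ⟨{(u : M)}, measurableSet_singleton _, by ext; simp [Units.ext_iff]⟩⟩

lemma integral_toMeasure_uniformOfFintype {Ω : Type*} [Fintype Ω] [Nonempty Ω] [MeasurableSpace Ω]
    [MeasurableSingletonClass Ω] (f : Ω → ℝ) :
    ∫ ω, f ω ∂(PMF.uniformOfFintype Ω).toMeasure = 𝔼 ω, f ω := by
  simp [PMF.integral_eq_sum, Fintype.expect_eq_sum_div_card, div_eq_inv_mul, Finset.mul_sum]

end UniformMeasure

section RandomBlocks

variable {m : ℕ} [NeZero m] {κ ι ρ : Type*} [Fintype κ] [DecidableEq κ] [Fintype ι]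
  [DecidableEq ι] [Fintype ρ]

/-- The law of a family of independent uniformly distributed indices of `blockRotation`. -/
noncomputable def blockLaw (m : ℕ) [NeZero m] (κ : Type*) [Fintype κ] :
    Measure (κ → Bool × (ZMod m → ℤˣ)) :=
  Measure.pi fun _ => (PMF.uniformOfFintype (Bool × (ZMod m → ℤˣ))).toMeasure

instance : IsProbabilityMeasure (blockLaw m κ) := by
  unfold blockLaw
  infer_instance

theorem blockLaw_real_sum_abs_columnMass_sub_lt_le (A : Matrix ρ ((ZMod m × κ) ⊕ ι) ℂ)
    {a δ r : ℝ} (hm : Odd m) (hρ : 4 * Fintype.card ρ ≤ m) (hρ0 : 0 < Fintype.card ρ) (ha : 0 < a)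
    (hr : 0 < r) (hδ : 36 * √(Fintype.card ρ) * (2 * δ + r)
      ≤ ∑ c, columnMass A c - Fintype.card ι * a - 3 * δ) :
    (blockLaw m κ).real
        {w | ∑ c, |columnMass (A * blockExtension ι fun k => blockRotation (w k)) c - a| < δ}
      ≤ Real.exp (-(r ^ 2 / (4 * (m * a) * ∑ c, columnMass A c))) := by
  set t : κ → ℝ := fun k => ∑ j, columnMass (columnBlock A k) j
  obtain hempty | ⟨w₀, hw₀⟩ := Set.eq_empty_or_nonempty {w : κ → Bool × (ZMod m → ℤˣ) |
    ∑ c, |columnMass (A * blockExtension ι fun k => blockRotation (w k)) c - a| < δ}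
  · rw [hempty, measureReal_empty]
    exact Real.exp_nonneg _
  have hm0 : (0 : ℝ) < m := by exact_mod_cast NeZero.pos m
  have hδ0 : 0 < δ := hw₀.trans_le' (by positivity)
  have hmass : 36 * √(Fintype.card ρ) * (2 * δ + r) ≤ ∑ k, t k - 2 * δ := by
    linarith [sum_columnMass_sub_le A (fun k => blockRotation (w₀ k)) a, Set.mem_ofPred.mp hw₀]
  have ht0 : 0 < ∑ k, t k := by
    have : 0 ≤ 36 * √(Fintype.card ρ) * (2 * δ + r) := by positivity
    linarith
  have htM : ∑ k, t k ≤ ∑ c, columnMass A c := by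
    rw [← sum_columnMass_columnBlock_add_sum_columnMass_inr]
    exact le_add_of_nonneg_right (Finset.sum_nonneg fun x _ => columnMass_nonneg A _)
  have hdev (k : κ) : (36 * √(Fintype.card ρ))⁻¹ * t k
      ≤ ∫ σ, meanDeviation (columnMass (columnBlock A k * blockRotation σ))
        ∂(PMF.uniformOfFintype (Bool × (ZMod m → ℤˣ))).toMeasure := by
    rw [integral_toMeasure_uniformOfFintype, inv_mul_le_iff₀ (by positivity)]
    exact sum_columnMass_le_expect_meanDeviation (columnBlock A k) hm hρ
  calc _ ≤ (blockLaw m κ).real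
        {w | ∑ k, ∑ j, |columnMass (columnBlock A k * blockRotation (w k)) j - a| < δ} := by
        simp only [sum_abs_columnMass_mul_blockExtension_sub]
        refine measureReal_mono fun w hw =>
          Set.mem_ofPred.mpr ((le_add_of_nonneg_right ?_).trans_lt (Set.mem_ofPred.mp hw))
        positivity
    _ ≤ Real.exp (-(r ^ 2 / (4 * (Fintype.card (ZMod m) * a) * ∑ k, t k))) :=
      measureReal_pi_sum_sum_abs_sub_lt_le
        (W := fun k σ => columnMass (columnBlock A k * blockRotation σ))
        (fun k σ => columnMass_nonneg _)
        (fun k σ => sum_columnMass_mul_of_mem_unitaryGroup _ (blockRotation_mem_unitaryGroup σ))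
        (by positivity) hdev ha.le hr ((le_inv_mul_iff₀ (by positivity)).mpr hmass)
    _ ≤ _ := by rw [ZMod.card]; gcongr

end RandomBlocks

section Symmetrization

lemma isMulRightInvariant_of_compactSpace {G : Type*} [Group G] [TopologicalSpace G]
    [IsTopologicalGroup G] [CompactSpace G] [MeasurableSpace G] [BorelSpace G] (μ : Measure G)
    [IsProbabilityMeasure μ] [μ.IsMulLeftInvariant] : μ.IsMulRightInvariant := by
  have : μ.IsOpenPosMeasure :=
    isOpenPosMeasure_of_mulLeftInvariant_of_compact Set.univ isCompact_univ (by simp)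
  have : μ.IsHaarMeasure := {}
  exact ⟨fun g => by
    have : IsProbabilityMeasure (μ.map (· * g)) :=
      Measure.isProbabilityMeasure_map (measurable_mul_const g).aemeasurable
    exact Measure.isHaarMeasure_eq_of_isProbabilityMeasure _ _⟩

lemma measureReal_le_of_forall_measureReal_mul_mem_le {G Ω : Type*} [Mul G] [MeasurableSpace G]
    [MeasurableMul G] (μ : Measure G) [IsProbabilityMeasure μ] [μ.IsMulRightInvariant]
    [Countable Ω] [MeasurableSpace Ω] [MeasurableSingletonClass Ω] (ν : Measure Ω)
    [IsProbabilityMeasure ν] (B : Ω → G) {E : Set G} (hE : MeasurableSet E) {ε : ℝ}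
    (h : ∀ x, ν.real {ω | x * B ω ∈ E} ≤ ε) : μ.real E ≤ ε := by
  have hmeas : MeasurableSet {z : G × Ω | z.1 * B z.2 ∈ E} :=
    measurable_from_prod_countable_left (fun ω => measurable_mul_const (B ω)) hE
  have hright (ω : Ω) : μ {x | x * B ω ∈ E} = μ E :=
    (measurePreserving_mul_right μ (B ω)).measure_preimage hE.nullMeasurableSet
  have hfubini : μ E = ∫⁻ x, ν {ω | x * B ω ∈ E} ∂μ :=
    calc μ E = ∫⁻ ω, μ {x | x * B ω ∈ E} ∂ν := by simp [hright]
      _ = μ.prod ν {z | z.1 * B z.2 ∈ E} := (Measure.prod_apply_symm hmeas).symm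
      _ = ∫⁻ x, ν {ω | x * B ω ∈ E} ∂μ := Measure.prod_apply hmeas
  have hε : 0 ≤ ε := by
    obtain ⟨x⟩ := (inferInstance : (ae μ).NeBot).nonempty
    exact measureReal_nonneg.trans (h x)
  refine ENNReal.toReal_le_of_le_ofReal hε ?_
  calc μ E = ∫⁻ x, ν {ω | x * B ω ∈ E} ∂μ := hfubini
    _ ≤ ∫⁻ _, ENNReal.ofReal ε ∂μ := by
        gcongr with x
        rw [← ofReal_measureReal]
        exact ENNReal.ofReal_le_ofReal (h x)
    _ = ENNReal.ofReal ε := by simp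

end Symmetrization

instance {n : Type*} [Fintype n] [DecidableEq n] : CompactSpace (Matrix.unitaryGroup n ℂ) := by
  have hbox : IsCompact (Set.univ.pi fun _ : n => Set.univ.pi fun _ : n =>
      Metric.closedBall (0 : ℂ) 1) :=
    isCompact_univ_pi fun _ => isCompact_univ_pi fun _ => isCompact_closedBall _ _
  have hclosed : IsClosed (Matrix.unitaryGroup n ℂ : Set (Matrix n n ℂ)) := isClosed_unitary
  refine isCompact_iff_compactSpace.mp (hbox.of_isClosed_subset hclosed ?_)
  intro U hU i _ j _
  exact mem_closedBall_zero_iff.mpr (entry_norm_bound_of_unitary hU i j)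

section RowBlock

lemma sum_abs_columnMass_mul_reindex_sub {ρ n N : Type*} [Fintype ρ] [Fintype n] [Fintype N]
    (A : Matrix ρ n ℂ) (e : N ≃ n) (B : Matrix N N ℂ) (a : ℝ) :
    ∑ j, |columnMass (A * Matrix.reindex e e B) j - a|
      = ∑ c, |columnMass (A.submatrix id e * B) c - a| := by
  have hcol (c : N) :
      columnMass (A * Matrix.reindex e e B) (e c) = columnMass (A.submatrix id e * B) c := by
    simp [columnMass, Matrix.mul_apply, ← Equiv.sum_comp e]
  simp only [← Equiv.sum_comp e, hcol]

lemma reindex_mem_unitaryGroup {n N : Type*} [Fintype n] [DecidableEq n] [Fintype N]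
    [DecidableEq N] (e : N ≃ n) {B : Matrix N N ℂ} (hB : B ∈ Matrix.unitaryGroup N ℂ) :
    Matrix.reindex e e B ∈ Matrix.unitaryGroup n ℂ := by
  rw [Matrix.mem_unitaryGroup_iff, Matrix.star_eq_conjTranspose] at hB ⊢
  simp [Matrix.submatrix_mul_equiv, hB]

lemma sum_columnMass_submatrix_of_mem_unitaryGroup {ρ n N : Type*} [Fintype ρ] [Fintype n]
    [DecidableEq n] [Fintype N] {U : Matrix n n ℂ} (hU : U ∈ Matrix.unitaryGroup n ℂ)
    (f : ρ → n) (e : N ≃ n) : ∑ c, columnMass (U.submatrix f e) c = Fintype.card ρ := by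
  have hrow (i : ρ) : columnMass (U.submatrix f e)ᴴ i = 1 := by
    have hone : U * Uᴴ = 1 := Matrix.mem_unitaryGroup_iff.mp hU
    rw [← Complex.ofReal_inj, ← conjTranspose_mul_self_apply_self,
      Matrix.conjTranspose_conjTranspose, Matrix.conjTranspose_submatrix,
      Matrix.submatrix_mul_equiv, hone]
    simp
  simp only [← sum_columnMass_conjTranspose (U.submatrix f e), hrow, Finset.sum_const,
    Finset.card_univ, nsmul_eq_mul, mul_one]

lemma blockLaw_real_lt_sqrt_card_div_le {m : ℕ} [NeZero m] {κ ι ρ : Type*} [Fintype κ]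
    [DecidableEq κ] [Fintype ι] [DecidableEq ι] [Fintype ρ] [Nonempty ρ]
    {A : Matrix ρ ((ZMod m × κ) ⊕ ι) ℂ} {d : ℝ} (hA : ∑ c, columnMass A c = Fintype.card ρ)
    (hm : Odd m) (hρ : 4 * Fintype.card ρ ≤ m) (hmρ : m ≤ 5 * Fintype.card ρ)
    (hι : Fintype.card ι ≤ m) (hd : 20 * (Fintype.card ρ : ℝ) ^ 2 ≤ d) :
    (blockLaw m κ).real {w | ∑ c, |columnMass (A * blockExtension ι fun k => blockRotation (w k)) c
        - Fintype.card ρ / d| < √(Fintype.card ρ) / 300}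
      ≤ Real.exp (-(d / (120000 * Fintype.card ρ ^ 2))) := by
  have hp1 : (1 : ℝ) ≤ Fintype.card ρ := by exact_mod_cast Fintype.card_pos (α := ρ)
  have hmp : (m : ℝ) ≤ 5 * Fintype.card ρ := by exact_mod_cast hmρ
  have hιm : (Fintype.card ι : ℝ) ≤ m := by exact_mod_cast hι
  set p := (Fintype.card ρ : ℝ)
  have hm0 : (0 : ℝ) < m := by exact_mod_cast NeZero.pos m
  have hd0 : 0 < d := by nlinarith
  have hsq : √p * √p = p := Real.mul_self_sqrt (by positivity)
  have hsp : √p ≤ p := by nlinarith [Real.one_le_sqrt.mpr hp1]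
  have hrest : Fintype.card ι * (p / d) ≤ p / 4 := by
    rw [mul_div_assoc', div_le_div_iff₀ hd0 (by norm_num)]
    nlinarith
  refine (blockLaw_real_sum_abs_columnMass_sub_lt_le A (r := √p / 73) hm hρ Fintype.card_pos
    (by positivity) (by positivity) ?_).trans ?_
  · rw [hA]
    linear_combination hrest + hsp / 100 + 36 * (2 / 300 + 1 / 73) * hsq + hp1 / 146
  · rw [hA, Real.exp_le_exp, neg_le_neg_iff, div_le_div_iff₀ (by positivity) (by positivity)]
    calc d * (4 * (m * (p / d)) * p) = 4 * m * p ^ 2 := by field_simp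
      _ ≤ (√p / 73) ^ 2 * (120000 * p ^ 2) := by
        rw [div_pow, Real.sq_sqrt (by positivity)]
        nlinarith [sq_nonneg p]

lemma sum_abs_columnMass_submatrix_sub_eq_card_mul {n : Type*} [Fintype n] (A : Matrix n n ℂ)
    {R : Finset n} (hR : R.Nonempty) :
    ∑ j, |columnMass (A.submatrix ((↑) : R → n) id) j - Fintype.card R / Fintype.card n|
      = R.card * ∑ j, |1 / (R.card : ℝ) * ∑ i ∈ R, ‖A i j‖ ^ 2 - 1 / (Fintype.card n : ℝ)| := by
  have hp : (0 : ℝ) < R.card := by exact_mod_cast hR.card_pos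
  rw [Finset.mul_sum]
  refine Finset.sum_congr rfl fun j _ => ?_
  rw [← abs_of_pos hp, ← abs_mul, abs_of_pos hp, mul_sub, ← mul_assoc, mul_one_div_cancel hp.ne',
    one_mul, mul_one_div, ← Finset.sum_coe_sort R, Fintype.card_coe]
  rfl

variable {n : Type*} [Fintype n] [DecidableEq n]

lemma measurable_sum_abs_columnMass_submatrix_sub {ρ : Type*} [Fintype ρ]
    [MeasurableSpace (Matrix.unitaryGroup n ℂ)] [BorelSpace (Matrix.unitaryGroup n ℂ)] (f : ρ → n)
    (a : ℝ) : Measurable fun U : Matrix.unitaryGroup n ℂ =>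
      ∑ j, |columnMass ((U : Matrix n n ℂ).submatrix f id) j - a| := by
  refine Continuous.measurable ?_
  unfold columnMass
  fun_prop

theorem measureReal_sum_abs_columnMass_submatrix_sub_lt_le {ρ : Type*} [Fintype ρ] [Nonempty ρ]
    [MeasurableSpace (Matrix.unitaryGroup n ℂ)] [BorelSpace (Matrix.unitaryGroup n ℂ)]
    (μ : Measure (Matrix.unitaryGroup n ℂ)) [IsProbabilityMeasure μ] [μ.IsMulLeftInvariant]
    (f : ρ → n) (h : 20 * (Fintype.card ρ) ^ 2 ≤ Fintype.card n) :
    μ.real {U | ∑ j, |columnMass ((U : Matrix n n ℂ).submatrix f id) j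
        - Fintype.card ρ / Fintype.card n| < √(Fintype.card ρ) / 300}
      ≤ Real.exp (-(Fintype.card n / (120000 * Fintype.card ρ ^ 2))) := by
  have := isMulRightInvariant_of_compactSpace μ
  set m := 4 * Fintype.card ρ + 1
  have hp : 0 < Fintype.card ρ := Fintype.card_pos
  obtain ⟨e⟩ : Nonempty ((ZMod m × Fin (Fintype.card n / m)) ⊕ Fin (Fintype.card n % m) ≃ n) :=
    Fintype.card_eq.mp (by simp [ZMod.card, Nat.div_add_mod])
  set B : (Fin (Fintype.card n / m) → Bool × (ZMod m → ℤˣ)) → Matrix.unitaryGroup n ℂ := fun w =>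
    ⟨Matrix.reindex e e (blockExtension _ fun k => blockRotation (w k)),
      reindex_mem_unitaryGroup e
        (blockExtension_mem_unitaryGroup fun k => blockRotation_mem_unitaryGroup (w k))⟩
  refine measureReal_le_of_forall_measureReal_mul_mem_le μ (blockLaw m _) B
    (measurableSet_lt (measurable_sum_abs_columnMass_submatrix_sub f _) measurable_const)
    fun U => ?_
  have hmul (w) : ((U * B w : Matrix.unitaryGroup n ℂ) : Matrix n n ℂ).submatrix f id
      = (U : Matrix n n ℂ).submatrix f id
        * Matrix.reindex e e (blockExtension _ fun k => blockRotation (w k)) := rfl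
  simp only [Set.mem_ofPred_eq, hmul, sum_abs_columnMass_mul_reindex_sub,
    Matrix.submatrix_submatrix]
  exact blockLaw_real_lt_sqrt_card_div_le
    (sum_columnMass_submatrix_of_mem_unitaryGroup U.2 _ e) ⟨2 * Fintype.card ρ, by omega⟩
    (by omega) (by omega) (by simpa using (Nat.mod_lt _ (by omega)).le) (by exact_mod_cast h)

end RowBlock

theorem random_basis_row_block_far_from_uniform_general {n : Type*} [Fintype n] [DecidableEq n]
    [MeasurableSpace (Matrix.unitaryGroup n ℂ)] [BorelSpace (Matrix.unitaryGroup n ℂ)]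
    (μ : Measure (Matrix.unitaryGroup n ℂ)) [IsProbabilityMeasure μ] [μ.IsMulLeftInvariant]
    {R : Finset n} (hR : R.Nonempty) (h : 20 * R.card ^ 2 ≤ Fintype.card n) :
    1 - Real.exp (-(Fintype.card n / (120000 * R.card ^ 2))) ≤
      μ.real {U | 1 / 300 / √R.card ≤ ∑ j, |1 / (R.card : ℝ) *
        ∑ i ∈ R, ‖(U : Matrix n n ℂ) i j‖ ^ 2 - 1 / (Fintype.card n : ℝ)|} := by
  have : Nonempty R := hR.to_subtype
  have hp : (0 : ℝ) < R.card := by exact_mod_cast hR.card_pos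
  have hthreshold : √R.card / 300 = R.card * (1 / 300 / √R.card) := by
    rw [mul_div_left_comm, Real.div_sqrt]
    ring
  have hcompl : {U : Matrix.unitaryGroup n ℂ | 1 / 300 / √R.card ≤ ∑ j, |1 / (R.card : ℝ) *
        ∑ i ∈ R, ‖(U : Matrix n n ℂ) i j‖ ^ 2 - 1 / (Fintype.card n : ℝ)|}
      = {U : Matrix.unitaryGroup n ℂ | ∑ j, |columnMass
          ((U : Matrix n n ℂ).submatrix ((↑) : R → n) id) j
          - Fintype.card R / Fintype.card n| < √(Fintype.card R) / 300}ᶜ := by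
    ext U
    rw [Set.mem_compl_iff, Set.mem_ofPred_eq, Set.mem_ofPred_eq, not_lt,
      sum_abs_columnMass_submatrix_sub_eq_card_mul _ hR, Fintype.card_coe, hthreshold,
      mul_le_mul_iff_right₀ hp]
  have hnear := measureReal_sum_abs_columnMass_submatrix_sub_lt_le μ ((↑) : R → n)
    (by simpa using h)
  rw [hcompl, probReal_compl_eq_one_sub (measurableSet_lt
    (measurable_sum_abs_columnMass_submatrix_sub _ _) measurable_const)]
  rw [Fintype.card_coe] at hnear ⊢
  linarith

/-- There are constants `c₁, c₂, c₃ > 0` such that for all integers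
`d ≥ p ≥ 1` with `α := c₁·d/p² − 2·log p ≥ 1`, the following holds. Let `U` be a
Haar-random `d×d` unitary (i.e. distributed according to the unique left-invariant
probability measure on `U(d)`), and let `S_j := (1/p)∑_{i<p} |U_{ij}|²`. Then with
probability at least `1 − exp(−c₃·α)`, the total variation distance of `S` from the
uniform distribution satisfies `∑_j |S_j − 1/d| ≥ c₂/√p`. -/
theorem random_basis_row_block_far_from_uniform :
    ∃ c₁ c₂ c₃ : ℝ, 0 < c₁ ∧ 0 < c₂ ∧ 0 < c₃ ∧
      ∀ (p d : ℕ), 1 ≤ p → p ≤ d →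
        ∀ α : ℝ, α = c₁ * d / (p : ℝ) ^ 2 - 2 * Real.log p → 1 ≤ α →
          ∀ [MeasurableSpace (Matrix.unitaryGroup (Fin d) ℂ)]
            [BorelSpace (Matrix.unitaryGroup (Fin d) ℂ)]
            (μ : Measure (Matrix.unitaryGroup (Fin d) ℂ)),
            IsProbabilityMeasure μ →
            (∀ U₀ : Matrix.unitaryGroup (Fin d) ℂ,
              Measure.map (fun U => U₀ * U) μ = μ) →
            1 - Real.exp (-(c₃ * α)) ≤
              (μ {U : Matrix.unitaryGroup (Fin d) ℂ |
                  c₂ / Real.sqrt p ≤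
                    ∑ j : Fin d,
                      |(1 / (p : ℝ)) *
                          ∑ i ∈ Finset.univ.filter (fun i : Fin d => (i : ℕ) < p),
                            ‖(U : Matrix (Fin d) (Fin d) ℂ) i j‖ ^ 2 -
                        1 / (d : ℝ)|}).toReal := by
  refine ⟨1 / 20, 1 / 300, 1 / 6000, by norm_num, by norm_num, by norm_num, ?_⟩
  intro p d hp hpd α hα hα1 _ _ μ _ hinv
  have : μ.IsMulLeftInvariant := ⟨hinv⟩
  have : (0 : ℝ) < p := by exact_mod_cast hp
  have hcard : (Finset.univ.filter fun i : Fin d => (i : ℕ) < p).card = p := by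
    rw [Fin.card_filter_val_lt, min_eq_right hpd]
  have hα_le : α ≤ d / (20 * p ^ 2) :=
    calc α ≤ 1 / 20 * d / p ^ 2 := by linarith [Real.log_natCast_nonneg p]
      _ = d / (20 * p ^ 2) := by ring
  have hd : 20 * (p : ℝ) ^ 2 ≤ d := (one_le_div (by positivity)).mp (hα1.trans hα_le)
  have hfar := random_basis_row_block_far_from_uniform_general μ
    (R := Finset.univ.filter fun i : Fin d => (i : ℕ) < p)
    (Finset.card_pos.mp (hcard.symm ▸ hp)) (by rw [hcard, Fintype.card_fin]; exact_mod_cast hd)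
  rw [hcard, Fintype.card_fin] at hfar
  have hexponent : 1 / 6000 * α ≤ d / (120000 * p ^ 2) :=
    calc 1 / 6000 * α ≤ 1 / 6000 * (d / (20 * p ^ 2)) := by gcongr
      _ = d / (120000 * p ^ 2) := by ring
  exact (sub_le_sub_left (Real.exp_le_exp.mpr (neg_le_neg hexponent)) 1).trans hfar
end

section
/- There exist constants c₁, c₂, c₃ > 0 such that the following holds for all integers p, q, r ≥ 1 and d with p + q + r ≤ d: set m := p + q + r and α := c₁·d/m³ − 2·log m, and suppose α ≥ 1. Let U be a random element of the group U(d) of d×d complex unitary matrices distributed according to the Haar probability measure, and define probability vectors S, T by S_j := (1/(p+r)) (∑_{i=1}^{p} |U_{ij}|² + ∑_{i=p+q+1}^{m} |U_{ij}|²) and T_j := (1/(q+r)) (∑_{i=p+1}^{p+q} |U_{ij}|² + ∑_{i=p+q+1}^{m} |U_{ij}|²) for j = 1, …, d. Then with probability at least 1 − exp(−c₃·α) over the choice of U, one has ∑_{j=1}^d |S_j − T_j| ≥ c₂·(√p/(p+r) + √q/(q+r)). -/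
open MeasureTheory

/-!
Let `G` be a `d × m` matrix of independent complex Gaussians and fix signed row weights `w`. The
signed masses of the rows of `G` are independent, and `𝔼 exp (-|X|) ≤ (3 + 𝔼 cos X) / 4` bounds
their Laplace transforms through a characteristic function, which factors over the entries. By
Chernoff's bound, the `ℓ¹` norm of the signed masses is at least of order `d ‖w‖`, with
exponentially small exceptional probability.

With probability at least one half the Gram matrix of `G` is within `2 d δ` of `2 d • 1`, and then
`G / √(2 d)` is within `δ` of the isometry in its polar decomposition. That isometry is a frame of
rows of some unitary `U`. Applying a Haar-random `V` keeps the law of `G` and makes `U V`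
Haar-random, so the probability of a small signed mass norm for a Haar frame is at most twice the
corresponding probability for `G`. The closeness of `G` to a frame is needed only with constant
probability, so Markov's inequality for the Gram matrix suffices.
-/

section Frobenius

open scoped Matrix Matrix.Norms.Frobenius MatrixOrder ComplexOrder

variable {𝕜 m n : Type*} [RCLike 𝕜] [Fintype m] [Fintype n]

lemma frobenius_norm_sq (A : Matrix m n 𝕜) : ‖A‖ ^ 2 = ∑ i, ∑ j, ‖A i j‖ ^ 2 := by
  rw [Matrix.frobenius_norm_def, ← Real.sqrt_eq_rpow, Real.sq_sqrt (by positivity)]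
  simp only [Real.rpow_ofNat]

lemma frobenius_norm_sq_eq_re_trace (A : Matrix m n 𝕜) :
    ‖A‖ ^ 2 = RCLike.re (Aᴴ * A).trace := by
  simp only [frobenius_norm_sq, Matrix.trace, Matrix.diag, Matrix.mul_apply,
    Matrix.conjTranspose_apply, map_sum, RCLike.star_def, RCLike.conj_mul, ← RCLike.ofReal_pow,
    RCLike.ofReal_re]
  exact Finset.sum_comm

lemma frobenius_norm_mul_of_conjTranspose_mul_self_eq_one {l : Type*} [Fintype l] [DecidableEq m]
    {W : Matrix l m 𝕜} (hW : Wᴴ * W = 1) (A : Matrix m n 𝕜) : ‖W * A‖ = ‖A‖ := by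
  have h : (W * A)ᴴ * (W * A) = Aᴴ * A := by
    rw [Matrix.conjTranspose_mul, Matrix.mul_assoc, ← Matrix.mul_assoc Wᴴ, hW, Matrix.one_mul]
  rw [← sq_eq_sq₀ (norm_nonneg _) (norm_nonneg _), frobenius_norm_sq_eq_re_trace, h,
    frobenius_norm_sq_eq_re_trace]

-- On eigenvalues this is `(s - 1) ^ 2 ≤ (s ^ 2 - 1) ^ 2` for `0 ≤ s`.
lemma frobenius_norm_sub_one_le_mul_self_sub_one [DecidableEq n] {S : Matrix n n 𝕜}
    (hS : S.PosSemidef) : ‖S - 1‖ ≤ ‖S * S - 1‖ := by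
  have hdiff : (S * S - 1)ᴴ * (S * S - 1) - (S - 1)ᴴ * (S - 1) =
      (S - 1)ᴴ * (Sᴴ * S + (S + S)) * (S - 1) := by
    simp only [Matrix.conjTranspose_sub, Matrix.conjTranspose_one, Matrix.conjTranspose_mul,
      hS.isHermitian.eq]
    noncomm_ring
  have hpos : ((S - 1)ᴴ * (Sᴴ * S + (S + S)) * (S - 1)).PosSemidef :=
    ((Matrix.posSemidef_conjTranspose_mul_self S).add (hS.add hS)).conjTranspose_mul_mul_same _
  have htrace := (RCLike.nonneg_iff.1 hpos.trace_nonneg).1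
  rw [← hdiff, Matrix.trace_sub, map_sub, ← frobenius_norm_sq_eq_re_trace,
    ← frobenius_norm_sq_eq_re_trace, sub_nonneg] at htrace
  exact le_of_sq_le_sq htrace (norm_nonneg _)

lemma exists_isometry_norm_sub_le [DecidableEq n] {H : Matrix m n 𝕜} (hH : ‖Hᴴ * H - 1‖ < 1) :
    ∃ Q : Matrix m n 𝕜, Qᴴ * Q = 1 ∧ ‖H - Q‖ ≤ ‖Hᴴ * H - 1‖ := by
  have hnonneg : 0 ≤ Hᴴ * H := (Matrix.posSemidef_conjTranspose_mul_self H).nonneg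
  obtain ⟨S, hS, hSS⟩ : ∃ S : Matrix n n 𝕜, S.PosSemidef ∧ S * S = Hᴴ * H :=
    ⟨CFC.sqrt (Hᴴ * H), Matrix.nonneg_iff_posSemidef.1 (CFC.sqrt_nonneg _),
      CFC.sqrt_mul_sqrt_self _ hnonneg⟩
  have hclose : ‖S - 1‖ ≤ ‖Hᴴ * H - 1‖ := hSS ▸ frobenius_norm_sub_one_le_mul_self_sub_one hS
  have hdet : IsUnit S.det := by
    have : CompleteSpace (Matrix n n 𝕜) := FiniteDimensional.complete 𝕜 _
    have hunit := isUnit_one_sub_of_norm_lt_one ((norm_sub_rev 1 S).trans_lt (hclose.trans_lt hH))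
    rwa [sub_sub_cancel, Matrix.isUnit_iff_isUnit_det] at hunit
  have hQ : (H * S⁻¹)ᴴ * (H * S⁻¹) = 1 := by
    calc (H * S⁻¹)ᴴ * (H * S⁻¹) = S⁻¹ * (Hᴴ * H) * S⁻¹ := by
          rw [Matrix.conjTranspose_mul, Matrix.conjTranspose_nonsing_inv, hS.isHermitian.eq]
          simp only [Matrix.mul_assoc]
      _ = 1 := by
          rw [← hSS, ← Matrix.mul_assoc, Matrix.nonsing_inv_mul _ hdet, Matrix.one_mul,
            Matrix.mul_nonsing_inv _ hdet]
  refine ⟨H * S⁻¹, hQ, ?_⟩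
  have hfactor : H - H * S⁻¹ = H * S⁻¹ * (S - 1) := by
    rw [Matrix.mul_sub, Matrix.mul_assoc, Matrix.nonsing_inv_mul _ hdet, Matrix.mul_one,
      Matrix.mul_one]
  rwa [hfactor, frobenius_norm_mul_of_conjTranspose_mul_self_eq_one hQ]

end Frobenius

section RowFrame

open scoped Matrix

variable {𝕜 n ι : Type*} [RCLike 𝕜] [Fintype n]

lemma orthonormal_col_of_conjTranspose_mul_self_eq_one [DecidableEq ι] {Q : Matrix n ι 𝕜}
    (hQ : Qᴴ * Q = 1) :
    Orthonormal 𝕜 fun i => WithLp.toLp 2 (Q.col i) := by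
  rw [← Matrix.gram_eq_one_iff_orthonormal,
    Matrix.gram_eq_conjTranspose_mul (EuclideanSpace.basisFun n 𝕜)]
  exact hQ

variable [DecidableEq n]

/-- The rows of the unitary matrix `U` selected by `e`, written as the columns of a matrix so that
right multiplication of `U` becomes left multiplication of the frame. -/
def rowFrame (e : ι → n) (U : Matrix.unitaryGroup n 𝕜) : Matrix n ι 𝕜 :=
  ((U : Matrix n n 𝕜).submatrix e id)ᵀ

@[simp]
lemma rowFrame_apply (e : ι → n) (U : Matrix.unitaryGroup n 𝕜) (j : n) (i : ι) :
    rowFrame e U j i = (U : Matrix n n 𝕜) (e i) j :=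
  rfl

lemma rowFrame_mul (e : ι → n) (U V : Matrix.unitaryGroup n 𝕜) :
    rowFrame e (U * V) = (V : Matrix n n 𝕜)ᵀ * rowFrame e U := by
  ext j i
  simp only [rowFrame_apply, Matrix.UnitaryGroup.mul_val, Matrix.mul_apply,
    Matrix.transpose_apply, mul_comm]

lemma conjTranspose_transpose_mul_transpose (V : Matrix.unitaryGroup n 𝕜) :
    (V : Matrix n n 𝕜)ᵀᴴ * (V : Matrix n n 𝕜)ᵀ = 1 :=
  Matrix.mem_unitaryGroup_iff'.1 (Matrix.transpose_mem_unitaryGroup_iff.2 V.2)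

lemma conjTranspose_rowFrame_mul_rowFrame [DecidableEq ι] {e : ι → n} (he : e.Injective)
    (U : Matrix.unitaryGroup n 𝕜) : (rowFrame e U)ᴴ * rowFrame e U = 1 := by
  have hsub : rowFrame e U = (U : Matrix n n 𝕜)ᵀ.submatrix id e := rfl
  rw [hsub, Matrix.conjTranspose_submatrix,
    ← Matrix.submatrix_mul _ _ _ _ _ Function.bijective_id, conjTranspose_transpose_mul_transpose,
    Matrix.submatrix_one _ he]

lemma exists_rowFrame_eq [DecidableEq ι] {e : ι → n} (he : e.Injective)
    {Q : Matrix n ι 𝕜} (hQ : Qᴴ * Q = 1) : ∃ U : Matrix.unitaryGroup n 𝕜, rowFrame e U = Q := by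
  set col : ι → EuclideanSpace 𝕜 n := fun i => WithLp.toLp 2 (Q.col i) with hcol
  have hortho : Orthonormal 𝕜 col := orthonormal_col_of_conjTranspose_mul_self_eq_one hQ
  have hrestrict : Orthonormal 𝕜 ((Set.range e).domRestrict (Function.extend e col 0)) := by
    convert hortho.comp _ (Equiv.ofInjective e he).symm.injective using 1
    funext ⟨_, i, rfl⟩
    simp [he.extend_apply]
  obtain ⟨b, hb⟩ := hrestrict.exists_orthonormalBasis_extension_of_card_eq finrank_euclideanSpace
  refine ⟨Matrix.UnitaryGroup.transpose
    ⟨_, (EuclideanSpace.basisFun n 𝕜).toMatrix_orthonormalBasis_mem_unitary b⟩, ?_⟩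
  ext j i
  simp [Module.Basis.toMatrix_apply, hb (e i) ⟨i, rfl⟩, he.extend_apply, hcol]

end RowFrame

section ComplexGaussian

open ProbabilityTheory Complex

lemma integral_cexp_mul_sq_gaussianReal_sq {c : ℂ} (hc : c.re < 1 / 2) :
    (∫ x : ℝ, cexp (c * x ^ 2) ∂gaussianReal 0 1) ^ 2 = (1 - 2 * c)⁻¹ := by
  have hdensity (x : ℝ) : gaussianPDFReal 0 1 x • cexp (c * x ^ 2) =
      ((√(2 * Real.pi))⁻¹ : ℝ) * cexp (-(1 / 2 - c) * x ^ 2) := by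
    rw [gaussianPDFReal_def, real_smul, ofReal_mul, ofReal_exp, mul_assoc, ← Complex.exp_add]
    simp only [NNReal.coe_one, mul_one, sub_zero]
    congr 2
    push_cast
    ring
  have hre : 0 < (1 / 2 - c).re := by simpa using hc
  have hroot : (((Real.pi : ℂ) / (1 / 2 - c)) ^ (1 / 2 : ℂ)) ^ 2 = Real.pi / (1 / 2 - c) := by
    rw [one_div 2]
    exact cpow_ofNat_inv_pow _ 2
  have hscale : ((((√(2 * Real.pi))⁻¹ : ℝ) : ℂ)) ^ 2 = (2 * (Real.pi : ℂ))⁻¹ := by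
    rw [← ofReal_pow, inv_pow, Real.sq_sqrt (by positivity), ofReal_inv, ofReal_mul, ofReal_ofNat]
  simp_rw [integral_gaussianReal_eq_integral_smul one_ne_zero, hdensity]
  rw [integral_const_mul, integral_gaussian_complex hre, mul_pow, hroot, hscale]
  have hpi : (Real.pi : ℂ) ≠ 0 := ofReal_ne_zero.2 Real.pi_ne_zero
  rw [show 1 - 2 * c = 2 * (1 / 2 - c) by ring, mul_inv, mul_inv, div_eq_mul_inv]
  field_simp

lemma integral_cexp_mul_sq_norm_stdGaussian {c : ℂ} (hc : c.re < 1 / 2) :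
    ∫ z : ℂ, cexp (c * ‖z‖ ^ 2) ∂stdGaussian ℂ = (1 - 2 * c)⁻¹ := by
  have hprod (x : Fin 2 → ℝ) : cexp (c * ‖∑ i, x i • orthonormalBasisOneI i‖ ^ 2) =
      ∏ i, cexp (c * x i ^ 2) := by
    have hnorm : ‖∑ i, x i • orthonormalBasisOneI i‖ ^ 2 = x 0 ^ 2 + x 1 ^ 2 := by
      rw [← normSq_eq_norm_sq]
      simp [normSq_apply, sq]
    rw [Fin.prod_univ_two, ← Complex.exp_add, ← mul_add, ← ofReal_pow, hnorm]
    push_cast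
    rfl
  rw [stdGaussian_eq_map_pi_orthonormalBasis orthonormalBasisOneI,
    integral_map (Measurable.aemeasurable (by fun_prop)) (by fun_prop)]
  simp_rw [hprod]
  rw [integral_fintype_prod_eq_pow (fun x : ℝ => cexp (c * x ^ 2)), Fintype.card_fin,
    integral_cexp_mul_sq_gaussianReal_sq hc]

lemma integral_norm_sq_stdGaussian : ∫ z : ℂ, ‖z‖ ^ 2 ∂stdGaussian ℂ = 2 := by
  have hsecond (L : StrongDual ℝ ℂ) : ∫ z, L z ^ 2 ∂stdGaussian ℂ = ‖L‖ ^ 2 := by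
    rw [← variance_dual_stdGaussian, variance_of_integral_eq_zero (by fun_prop)
      (integral_strongDual_stdGaussian L)]
  have hint (L : StrongDual ℝ ℂ) : Integrable (fun z => L z ^ 2) (stdGaussian ℂ) :=
    (IsGaussian.memLp_dual _ L 2 (by simp)).integrable_sq
  have hre_im (z : ℂ) : ‖z‖ ^ 2 = reCLM z ^ 2 + imCLM z ^ 2 := by
    rw [← normSq_eq_norm_sq, normSq_apply, reCLM_apply, imCLM_apply]
    ring
  simp_rw [hre_im]
  rw [integral_add (hint _) (hint _), hsecond, hsecond, reCLM_norm, imCLM_norm]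
  norm_num

lemma integral_exp_mul_sq_norm_stdGaussian {c : ℝ} (hc : c < 1 / 2) :
    ∫ z : ℂ, Real.exp (c * ‖z‖ ^ 2) ∂stdGaussian ℂ = (1 - 2 * c)⁻¹ := by
  have h := integral_cexp_mul_sq_norm_stdGaussian (c := c) (by simpa using hc)
  simp only [← ofReal_pow, ← ofReal_mul, ← ofReal_exp, integral_complex_ofReal] at h
  exact_mod_cast h

lemma integrable_exp_mul_sq_norm_stdGaussian {c : ℝ} (hc : c < 1 / 2) :
    Integrable (fun z : ℂ => Real.exp (c * ‖z‖ ^ 2)) (stdGaussian ℂ) := by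
  refine Integrable.of_integral_ne_zero ?_
  rw [integral_exp_mul_sq_norm_stdGaussian hc]
  exact inv_ne_zero (by linarith)

lemma norm_pow_four_le_exp (z : ℂ) : ‖z‖ ^ 4 ≤ 32 * Real.exp (1 / 4 * ‖z‖ ^ 2) := by
  have h := Real.pow_div_factorial_le_exp (1 / 4 * ‖z‖ ^ 2) (by positivity) 2
  norm_num [Nat.factorial] at h
  linarith

lemma integrable_norm_pow_four_stdGaussian :
    Integrable (fun z : ℂ => ‖z‖ ^ 4) (stdGaussian ℂ) :=
  (IsGaussian.memLp_id (stdGaussian ℂ) 4 (by simp)).integrable_norm_pow (by simp)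

lemma integral_norm_pow_four_stdGaussian_le : ∫ z : ℂ, ‖z‖ ^ 4 ∂stdGaussian ℂ ≤ 64 := by
  have hexp := integrable_exp_mul_sq_norm_stdGaussian (c := 1 / 4) (by norm_num)
  calc ∫ z : ℂ, ‖z‖ ^ 4 ∂stdGaussian ℂ
      ≤ ∫ z : ℂ, 32 * Real.exp (1 / 4 * ‖z‖ ^ 2) ∂stdGaussian ℂ :=
        integral_mono integrable_norm_pow_four_stdGaussian (hexp.const_mul 32) norm_pow_four_le_exp
    _ = 64 := by
        rw [integral_const_mul, integral_exp_mul_sq_norm_stdGaussian (by norm_num)]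
        norm_num

end ComplexGaussian

section GaussianMatrix

open ProbabilityTheory
open scoped Matrix Matrix.Norms.Frobenius

lemma map_toLp_pi_stdGaussian {κ F : Type*} [Fintype κ] [NormedAddCommGroup F]
    [InnerProductSpace ℝ F] [FiniteDimensional ℝ F] [MeasurableSpace F] [BorelSpace F] :
    (Measure.pi fun _ : κ => stdGaussian F).map (WithLp.toLp 2) =
      stdGaussian (PiLp 2 fun _ : κ => F) := by
  have : SecondCountableTopology F :=
    have := FiniteDimensional.proper ℝ F
    inferInstance
  refine Measure.ext_of_charFun (funext fun t => ?_)
  simp_rw [charFun_stdGaussian, charFun_pi, charFun_stdGaussian, ← Complex.exp_sum]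
  rw [← Complex.ofReal_pow, PiLp.norm_sq_eq_of_L2]
  push_cast
  simp only [Finset.sum_div, neg_div, Finset.sum_neg_distrib]

/-- The law of an `n × ι` matrix whose entries are independent standard Gaussian vectors of the
real plane `ℂ`, so that `𝔼 |z|² = 2` for each entry `z`. It lives on the function type because
`Matrix` carries no measurable structure. -/
noncomputable def gaussianMatrix (n ι : Type*) [Fintype n] [Fintype ι] : Measure (n → ι → ℂ) :=
  Measure.pi fun _ => Measure.pi fun _ => stdGaussian ℂ

variable {n ι : Type*} [Fintype n] [Fintype ι]

instance : IsProbabilityMeasure (gaussianMatrix n ι) := by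
  unfold gaussianMatrix; infer_instance

/-- Matrices as vectors of the Euclidean space whose norm is the Frobenius norm, so that facts on
`stdGaussian`, which needs a real inner product space, transfer to `gaussianMatrix`. -/
noncomputable def toFrobeniusLp (n ι : Type*) :
    (n → ι → ℂ) ≃L[ℝ] PiLp 2 fun _ : n => EuclideanSpace ℂ ι :=
  (ContinuousLinearEquiv.piCongrRight fun _ =>
    (PiLp.continuousLinearEquiv 2 ℝ fun _ : ι => ℂ).symm).trans
      (PiLp.continuousLinearEquiv 2 ℝ fun _ : n => EuclideanSpace ℂ ι).symm

lemma norm_toFrobeniusLp (G : n → ι → ℂ) : ‖toFrobeniusLp n ι G‖ = ‖Matrix.of G‖ := by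
  rw [← sq_eq_sq₀ (norm_nonneg _) (norm_nonneg _), frobenius_norm_sq, PiLp.norm_sq_eq_of_L2]
  simp_rw [EuclideanSpace.norm_sq_eq]
  rfl

lemma map_toFrobeniusLp_gaussianMatrix :
    (gaussianMatrix n ι).map (toFrobeniusLp n ι) =
      stdGaussian (PiLp 2 fun _ : n => EuclideanSpace ℂ ι) := by
  have hrows : (gaussianMatrix n ι).map (fun G j => WithLp.toLp 2 (G j)) =
      Measure.pi fun _ : n => stdGaussian (EuclideanSpace ℂ ι) := by
    rw [gaussianMatrix, Measure.pi_map_pi (by fun_prop)]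
    simp_rw [map_toLp_pi_stdGaussian]
  rw [← map_toLp_pi_stdGaussian, ← hrows, Measure.map_map (by fun_prop) (by fun_prop)]
  rfl

lemma map_linearMap_gaussianMatrix {T : (n → ι → ℂ) →ₗ[ℝ] n → ι → ℂ}
    (hT : ∀ G, ‖Matrix.of (T G)‖ = ‖Matrix.of G‖) :
    (gaussianMatrix n ι).map T = gaussianMatrix n ι := by
  set φ := toFrobeniusLp n ι with hφ
  let f : (PiLp 2 fun _ : n => EuclideanSpace ℂ ι) →ₗᵢ[ℝ] PiLp 2 fun _ : n => EuclideanSpace ℂ ι :=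
    { toLinearMap := φ.toLinearEquiv.conj T
      norm_map' := fun x => by
        calc ‖φ (T (φ.symm x))‖ = ‖φ (φ.symm x)‖ := by
              rw [norm_toFrobeniusLp, hT, norm_toFrobeniusLp]
          _ = ‖x‖ := by rw [φ.apply_symm_apply] }
  have hstd : gaussianMatrix n ι = (stdGaussian _).map φ.symm := by
    rw [← map_toFrobeniusLp_gaussianMatrix, Measure.map_map (by fun_prop) (by fun_prop)]
    simp [Function.comp_def, hφ]
  have hconj : T ∘ φ.symm = φ.symm ∘ f.toLinearIsometryEquiv rfl :=
    funext fun x => (φ.symm_apply_apply _).symm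
  have hTmeas : Measurable T := T.continuous_of_finiteDimensional.measurable
  have hfmeas : Measurable (f.toLinearIsometryEquiv rfl) :=
    (LinearIsometryEquiv.continuous _).measurable
  calc (gaussianMatrix n ι).map T
      = ((stdGaussian _).map (f.toLinearIsometryEquiv rfl)).map φ.symm := by
        rw [hstd, Measure.map_map hTmeas (by fun_prop), hconj,
          Measure.map_map (by fun_prop) hfmeas]
    _ = gaussianMatrix n ι := by rw [stdGaussian_map, hstd]

lemma map_mul_gaussianMatrix [DecidableEq n] {W : Matrix n n ℂ} (hW : Wᴴ * W = 1) :
    (gaussianMatrix n ι).map (fun G => Matrix.of.symm (W * Matrix.of G)) = gaussianMatrix n ι :=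
  map_linearMap_gaussianMatrix
    (T := (Matrix.ofLinearEquiv ℝ).symm.toLinearMap ∘ₗ mulLeftLinearMap ι ℝ W ∘ₗ
      (Matrix.ofLinearEquiv ℝ).toLinearMap)
    fun G => frobenius_norm_mul_of_conjTranspose_mul_self_eq_one hW (Matrix.of G)

end GaussianMatrix

section IndependentSums

open ProbabilityTheory

variable {Ω E : Type*} [MeasurableSpace Ω] {μ : Measure Ω} [IsProbabilityMeasure μ]
  [NormedAddCommGroup E] {f : Ω → E}

lemma memLp_sum_eval (n : Type*) [Fintype n] {p : ENNReal} (hf : MemLp f p μ) :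
    MemLp (fun ω : n → Ω => ∑ j, f (ω j)) p (Measure.pi fun _ => μ) :=
  memLp_finsetSum _ fun j _ => hf.comp_measurePreserving (measurePreserving_eval _ j)

lemma integral_eval {n : Type*} [Fintype n] [NormedSpace ℝ E] (j : n)
    (hf : AEStronglyMeasurable f μ) :
    ∫ ω : n → Ω, f (ω j) ∂(Measure.pi fun _ => μ) = ∫ x, f x ∂μ :=
  integral_comp_eval (μ := fun _ : n => μ) hf

lemma integral_sq_sum_sub_card_mul_integral_le (n : Type*) [Fintype n] {f : Ω → ℝ}
    (hf : MemLp f 2 μ) :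
    ∫ ω : n → Ω, (∑ j, f (ω j) - Fintype.card n * ∫ x, f x ∂μ) ^ 2 ∂(Measure.pi fun _ => μ) ≤
      Fintype.card n * ∫ x, f x ^ 2 ∂μ := by
  set S : (n → Ω) → ℝ := fun ω => ∑ j, f (ω j) with hS
  have hmean : ∫ ω, S ω ∂(Measure.pi fun _ => μ) = Fintype.card n * ∫ x, f x ∂μ := by
    rw [hS, integral_finsetSum _ fun j _ =>
      integrable_comp_eval (μ := fun _ => μ) (hf.integrable one_le_two)]
    simp_rw [integral_eval _ hf.aestronglyMeasurable]
    rw [Finset.sum_const, Finset.card_univ, nsmul_eq_mul]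
  have hvar : Var[S; Measure.pi fun _ => μ] = Fintype.card n * Var[f; μ] := by
    have h := variance_sum_pi (ι := n) (X := fun _ => f) fun _ => hf
    rw [Finset.sum_const, Finset.card_univ, nsmul_eq_mul] at h
    rw [← h]
    congr 1
    ext ω
    simp only [hS, Finset.sum_apply]
  calc ∫ ω, (S ω - Fintype.card n * ∫ x, f x ∂μ) ^ 2 ∂(Measure.pi fun _ => μ)
      = Fintype.card n * Var[f; μ] := by
        rw [← hvar, variance_eq_integral (memLp_sum_eval n hf).aestronglyMeasurable.aemeasurable,
          hmean]
    _ ≤ Fintype.card n * ∫ x, f x ^ 2 ∂μ := by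
        gcongr
        exact variance_le_expectation_sq hf.aestronglyMeasurable

lemma integral_norm_sq_sum_sub_card_smul_integral_le [InnerProductSpace ℝ E]
    [FiniteDimensional ℝ E] (n : Type*) [Fintype n] (hf : MemLp f 2 μ) :
    ∫ ω : n → Ω, ‖∑ j, f (ω j) - (Fintype.card n : ℝ) • ∫ x, f x ∂μ‖ ^ 2
        ∂(Measure.pi fun _ => μ) ≤ Fintype.card n * ∫ x, ‖f x‖ ^ 2 ∂μ := by
  have : CompleteSpace E := FiniteDimensional.complete ℝ E
  set b := stdOrthonormalBasis ℝ E
  have hcoord (k) : MemLp (fun x => inner ℝ (b k) (f x)) 2 μ := hf.const_inner _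
  have hinner (k) (ω : n → Ω) :
      inner ℝ (b k) (∑ j, f (ω j) - (Fintype.card n : ℝ) • ∫ x, f x ∂μ) =
        ∑ j, inner ℝ (b k) (f (ω j)) - Fintype.card n * ∫ x, inner ℝ (b k) (f x) ∂μ := by
    rw [inner_sub_right, inner_sum, real_inner_smul_right,
      integral_inner (hf.integrable one_le_two)]
  have hint (k) : Integrable (fun ω : n → Ω => (∑ j, inner ℝ (b k) (f (ω j)) -
      Fintype.card n * ∫ x, inner ℝ (b k) (f x) ∂μ) ^ 2) (Measure.pi fun _ => μ) :=
    ((memLp_sum_eval n (hcoord k)).sub (memLp_const _)).integrable_sq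
  simp_rw [← b.sum_sq_inner_right, hinner]
  rw [integral_finsetSum _ fun k _ => hint k,
    integral_finsetSum _ fun k _ => (hcoord k).integrable_sq, Finset.mul_sum]
  exact Finset.sum_le_sum fun k _ => integral_sq_sum_sub_card_mul_integral_le n (hcoord k)

end IndependentSums

section Gram

open ProbabilityTheory ComplexConjugate
open scoped Matrix Matrix.Norms.Frobenius

variable {n ι : Type*} [Fintype n] [Fintype ι]

lemma integrable_norm_eval_pow_four (i : ι) :
    Integrable (fun c : ι → ℂ => ‖c i‖ ^ 4) (Measure.pi fun _ => stdGaussian ℂ) :=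
  integrable_comp_eval (μ := fun _ => stdGaussian ℂ) (f := fun z => ‖z‖ ^ 4)
    integrable_norm_pow_four_stdGaussian

lemma norm_conj_mul_sq_le (z w : ℂ) : ‖conj z * w‖ ^ 2 ≤ (‖z‖ ^ 4 + ‖w‖ ^ 4) / 2 := by
  rw [norm_mul, RCLike.norm_conj]
  nlinarith [sq_nonneg (‖z‖ ^ 2 - ‖w‖ ^ 2)]

lemma memLp_conj_mul_eval (i k : ι) :
    MemLp (fun c : ι → ℂ => conj (c i) * c k) 2 (Measure.pi fun _ => stdGaussian ℂ) := by
  rw [memLp_two_iff_integrable_sq_norm (by fun_prop)]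
  refine (((integrable_norm_eval_pow_four i).add (integrable_norm_eval_pow_four k)).div_const
    2).mono' (by fun_prop) (.of_forall fun c => ?_)
  rw [Real.norm_of_nonneg (by positivity)]
  exact norm_conj_mul_sq_le _ _

lemma integral_norm_conj_mul_eval_sq_le (i k : ι) :
    ∫ c : ι → ℂ, ‖conj (c i) * c k‖ ^ 2 ∂(Measure.pi fun _ => stdGaussian ℂ) ≤ 64 := by
  have hfourth (l : ι) : ∫ c : ι → ℂ, ‖c l‖ ^ 4 ∂(Measure.pi fun _ => stdGaussian ℂ) ≤ 64 := by
    rw [integral_eval (f := fun z : ℂ => ‖z‖ ^ 4) _ (by fun_prop)]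
    exact integral_norm_pow_four_stdGaussian_le
  calc ∫ c : ι → ℂ, ‖conj (c i) * c k‖ ^ 2 ∂(Measure.pi fun _ => stdGaussian ℂ)
      ≤ ∫ c : ι → ℂ, (‖c i‖ ^ 4 + ‖c k‖ ^ 4) / 2 ∂(Measure.pi fun _ => stdGaussian ℂ) :=
        integral_mono (memLp_conj_mul_eval i k).norm.integrable_sq
          (((integrable_norm_eval_pow_four i).add (integrable_norm_eval_pow_four k)).div_const 2)
          fun c => norm_conj_mul_sq_le _ _
    _ ≤ 64 := by
        rw [integral_div, integral_add (integrable_norm_eval_pow_four i)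
          (integrable_norm_eval_pow_four k)]
        linarith [hfourth i, hfourth k]

lemma integral_conj_mul_eval [DecidableEq ι] (i k : ι) :
    ∫ c : ι → ℂ, conj (c i) * c k ∂(Measure.pi fun _ => stdGaussian ℂ) =
      (2 : ℝ) • (1 : Matrix ι ι ℂ) i k := by
  rcases eq_or_ne i k with rfl | hik
  · simp_rw [Complex.conj_mul', ← Complex.ofReal_pow]
    rw [integral_eval (f := fun z : ℂ => ((‖z‖ ^ 2 : ℝ) : ℂ)) _ (by fun_prop),
      integral_complex_ofReal, integral_norm_sq_stdGaussian]
    simp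
  · have hindep := (iIndepFun_pi (μ := fun _ : ι => stdGaussian ℂ) (X := fun _ z => z)
      fun _ => by fun_prop).indepFun hik
    have hprod := (hindep.comp (φ := conj) (ψ := fun z => z) (by fun_prop)
      (by fun_prop)).integral_mul_eq_mul_integral
      (Measurable.aestronglyMeasurable (by fun_prop))
      (Measurable.aestronglyMeasurable (by fun_prop))
    have hmean : ∫ c : ι → ℂ, c k ∂(Measure.pi fun _ => stdGaussian ℂ) = 0 := by
      rw [integral_eval (f := fun z : ℂ => z) _ (by fun_prop), integral_id_stdGaussian]
    simpa [hmean, Matrix.one_apply_ne hik] using hprod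

lemma gram_sub_apply [DecidableEq ι] (G : n → ι → ℂ) (i k : ι) :
    ((Matrix.of G)ᴴ * Matrix.of G - (2 * Fintype.card n : ℝ) • (1 : Matrix ι ι ℂ)) i k =
      ∑ j, conj (G j i) * G j k - (Fintype.card n : ℝ) •
        ∫ c : ι → ℂ, conj (c i) * c k ∂(Measure.pi fun _ => stdGaussian ℂ) := by
  rw [integral_conj_mul_eval, smul_smul, mul_comm (Fintype.card n : ℝ)]
  rfl

lemma integrable_norm_gram_sub_apply_sq [DecidableEq ι] (i k : ι) :
    Integrable (fun G => ‖((Matrix.of G)ᴴ * Matrix.of G -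
      (2 * Fintype.card n : ℝ) • (1 : Matrix ι ι ℂ)) i k‖ ^ 2) (gaussianMatrix n ι) := by
  simp_rw [gram_sub_apply]
  exact ((memLp_sum_eval n (memLp_conj_mul_eval i k)).sub (memLp_const _)).norm.integrable_sq

lemma integral_norm_gram_sub_apply_sq_le [DecidableEq ι] (i k : ι) :
    ∫ G, ‖((Matrix.of G)ᴴ * Matrix.of G -
      (2 * Fintype.card n : ℝ) • (1 : Matrix ι ι ℂ)) i k‖ ^ 2 ∂gaussianMatrix n ι ≤
        Fintype.card n * 64 := by
  simp_rw [gram_sub_apply]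
  refine (integral_norm_sq_sum_sub_card_smul_integral_le n (memLp_conj_mul_eval i k)).trans ?_
  gcongr
  exact integral_norm_conj_mul_eval_sq_le i k

lemma integrable_norm_gram_sub_sq [DecidableEq ι] :
    Integrable (fun G => ‖(Matrix.of G)ᴴ * Matrix.of G -
      (2 * Fintype.card n : ℝ) • (1 : Matrix ι ι ℂ)‖ ^ 2) (gaussianMatrix n ι) := by
  simp_rw [frobenius_norm_sq]
  exact integrable_finsetSum _ fun i _ => integrable_finsetSum _ fun k _ =>
    integrable_norm_gram_sub_apply_sq i k

lemma integral_norm_gram_sub_sq_le [DecidableEq ι] :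
    ∫ G, ‖(Matrix.of G)ᴴ * Matrix.of G - (2 * Fintype.card n : ℝ) • (1 : Matrix ι ι ℂ)‖ ^ 2
      ∂gaussianMatrix n ι ≤ 64 * Fintype.card n * Fintype.card ι ^ 2 := by
  simp_rw [frobenius_norm_sq]
  rw [integral_finsetSum _ fun i _ => integrable_finsetSum _ fun k _ =>
    integrable_norm_gram_sub_apply_sq i k]
  simp_rw [integral_finsetSum _ fun k _ => integrable_norm_gram_sub_apply_sq _ k]
  calc _ ≤ ∑ _i : ι, ∑ _k : ι, (Fintype.card n * 64 : ℝ) :=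
        Finset.sum_le_sum fun i _ => Finset.sum_le_sum fun k _ =>
          integral_norm_gram_sub_apply_sq_le i k
    _ = 64 * Fintype.card n * Fintype.card ι ^ 2 := by
        simp only [Finset.sum_const, Finset.card_univ, nsmul_eq_mul]
        ring

lemma one_half_le_measureReal_norm_gram_sub_lt [DecidableEq ι] [Nonempty n] {δ : ℝ} (hδ : 0 < δ)
    (hcard : 32 * (Fintype.card ι : ℝ) ^ 2 ≤ δ ^ 2 * Fintype.card n) :
    1 / 2 ≤ (gaussianMatrix n ι).real {G | ‖(Matrix.of G)ᴴ * Matrix.of G -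
      (2 * Fintype.card n : ℝ) • (1 : Matrix ι ι ℂ)‖ < 2 * Fintype.card n * δ} := by
  have hD : (0 : ℝ) < Fintype.card n := Nat.cast_pos.2 Fintype.card_pos
  set X : (n → ι → ℂ) → ℝ := fun G => ‖(Matrix.of G)ᴴ * Matrix.of G -
    (2 * Fintype.card n : ℝ) • (1 : Matrix ι ι ℂ)‖
  set t : ℝ := 2 * Fintype.card n * δ with ht
  have ht_pos : 0 < t := mul_pos (mul_pos two_pos hD) hδ
  have hmarkov := mul_meas_ge_le_integral_of_nonneg (.of_forall fun G => sq_nonneg (X G))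
    integrable_norm_gram_sub_sq (t ^ 2)
  have hbad : (gaussianMatrix n ι).real {G | t ^ 2 ≤ X G ^ 2} ≤ 1 / 2 := by
    refine le_of_mul_le_mul_left ((hmarkov.trans integral_norm_gram_sub_sq_le).trans ?_)
      (pow_pos ht_pos 2)
    calc 64 * (Fintype.card n : ℝ) * Fintype.card ι ^ 2
        = 2 * Fintype.card n * (32 * Fintype.card ι ^ 2) := by ring
      _ ≤ 2 * Fintype.card n * (δ ^ 2 * Fintype.card n) := by gcongr
      _ = t ^ 2 * (1 / 2) := by rw [ht]; ring
  have hcover : (1 : ℝ) ≤ (gaussianMatrix n ι).real {G | X G < t} +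
      (gaussianMatrix n ι).real {G | t ^ 2 ≤ X G ^ 2} := by
    rw [← probReal_univ (μ := gaussianMatrix n ι)]
    refine (measureReal_mono fun G _ => ?_).trans (measureReal_union_le _ _)
    exact (lt_or_ge (X G) t).imp id fun h => pow_le_pow_left₀ ht_pos.le h 2
  linarith

end Gram

section Chernoff

open ProbabilityTheory

lemma measureReal_sum_eval_le_le {Ω : Type*} [MeasurableSpace Ω] {μ : Measure Ω}
    [IsProbabilityMeasure μ] (n : Type*) [Fintype n] {f : Ω → ℝ} {a : ℝ}
    (hint : Integrable (fun x => Real.exp (-f x)) μ)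
    (hf : ∫ x, Real.exp (-f x) ∂μ ≤ Real.exp (-a)) (t : ℝ) :
    (Measure.pi fun _ : n => μ).real {ω | ∑ j, f (ω j) ≤ t} ≤
      Real.exp (t - Fintype.card n * a) := by
  have hexp (ω : n → Ω) : Real.exp (-1 * ∑ j, f (ω j)) = ∏ j, Real.exp (-f (ω j)) := by
    rw [neg_one_mul, ← Finset.sum_neg_distrib, Real.exp_sum]
  have hint_sum : Integrable (fun ω : n → Ω => Real.exp (-1 * ∑ j, f (ω j)))
      (Measure.pi fun _ => μ) := by
    simp_rw [hexp]
    exact Integrable.fintype_prod fun _ => hint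
  refine (measure_le_le_exp_mul_mgf t (by norm_num) hint_sum).trans ?_
  calc Real.exp (- -1 * t) * ∫ ω : n → Ω, Real.exp (-1 * ∑ j, f (ω j)) ∂(Measure.pi fun _ => μ)
      = Real.exp t * (∫ x, Real.exp (-f x) ∂μ) ^ Fintype.card n := by
        simp_rw [hexp]
        rw [integral_fintype_prod_eq_pow fun x => Real.exp (-f x), neg_neg, one_mul]
    _ ≤ Real.exp t * Real.exp (-a) ^ Fintype.card n := by
        gcongr
    _ = Real.exp (t - Fintype.card n * a) := by
        rw [← Real.exp_nat_mul, ← Real.exp_add]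
        ring_nf

end Chernoff

section SignedMass

open ProbabilityTheory

lemma one_add_sum_le_prod_one_add {ι : Type*} (s : Finset ι) {a : ι → ℝ} (ha : ∀ i, 0 ≤ a i) :
    1 + ∑ i ∈ s, a i ≤ ∏ i ∈ s, (1 + a i) := by
  induction s using Finset.cons_induction with
  | empty => simp
  | cons i s hi ih =>
    have hsum : 0 ≤ ∑ i ∈ s, a i := Finset.sum_nonneg fun k _ => ha k
    rw [Finset.sum_cons, Finset.prod_cons]
    nlinarith [ha i, mul_nonneg (ha i) hsum, mul_le_mul_of_nonneg_left ih (ha i)]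

variable {n ι : Type*} [Fintype n] [Fintype ι]

/-- The mass `∑ i, w i * |c i|²` of a complex vector with respect to signed weights `w`. -/
noncomputable def signedMass (w : EuclideanSpace ℝ ι) (c : ι → ℂ) : ℝ :=
  ∑ i, w i * ‖c i‖ ^ 2

/-- The `ℓ¹` norm of the vector of signed masses of the rows of `A`. -/
noncomputable def signedMassNorm (w : EuclideanSpace ℝ ι) (A : Matrix n ι ℂ) : ℝ :=
  ∑ j, |signedMass w (A.row j)|

lemma signedMassNorm_nonneg (w : EuclideanSpace ℝ ι) (A : Matrix n ι ℂ) :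
    0 ≤ signedMassNorm w A :=
  Finset.sum_nonneg fun _ _ => abs_nonneg _

lemma signedMass_smul_left (a : ℝ) (w : EuclideanSpace ℝ ι) (c : ι → ℂ) :
    signedMass (a • w) c = a * signedMass w c := by
  simp only [signedMass, PiLp.smul_apply, smul_eq_mul, Finset.mul_sum, mul_assoc]

lemma signedMass_smul_right (a : ℝ) (w : EuclideanSpace ℝ ι) (c : ι → ℂ) :
    signedMass w (a • c) = a ^ 2 * signedMass w c := by
  simp only [signedMass, Pi.smul_apply, norm_smul, mul_pow, Real.norm_eq_abs, sq_abs,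
    Finset.mul_sum, mul_left_comm]

@[fun_prop]
lemma measurable_signedMass (w : EuclideanSpace ℝ ι) : Measurable (signedMass w) := by
  unfold signedMass
  fun_prop

lemma signedMassNorm_smul_left (a : ℝ) (w : EuclideanSpace ℝ ι) (A : Matrix n ι ℂ) :
    signedMassNorm (a • w) A = |a| * signedMassNorm w A := by
  simp only [signedMassNorm, signedMass_smul_left, abs_mul, Finset.mul_sum]

lemma signedMassNorm_smul_right (a : ℝ) (w : EuclideanSpace ℝ ι) (A : Matrix n ι ℂ) :
    signedMassNorm w (a • A) = a ^ 2 * signedMassNorm w A := by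
  have hrow (j : n) : (a • A).row j = a • A.row j := rfl
  simp only [signedMassNorm, hrow, signedMass_smul_right, abs_mul, abs_sq, Finset.mul_sum]

lemma norm_integral_cexp_I_mul_signedMass_le {w : EuclideanSpace ℝ ι} (hw : ‖w‖ = 1) :
    ‖∫ c, Complex.exp (Complex.I * signedMass w c) ∂(Measure.pi fun _ => stdGaussian ℂ)‖ ≤
      1 / 2 := by
  have hprod (c : ι → ℂ) : Complex.exp (Complex.I * signedMass w c) =
      ∏ i, Complex.exp (Complex.I * w i * ‖c i‖ ^ 2) := by
    simp only [signedMass, Complex.ofReal_sum, Complex.ofReal_mul, Complex.ofReal_pow,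
      Finset.mul_sum, Complex.exp_sum, mul_assoc]
  have hfactor (i : ι) : ‖(1 - 2 * (Complex.I * w i) : ℂ)⁻¹‖ ^ 2 = (1 + 4 * w i ^ 2)⁻¹ := by
    rw [norm_inv, inv_pow, ← Complex.normSq_eq_norm_sq, Complex.normSq_apply]
    congr 1
    simp
    ring
  have hsq : 5 ≤ ∏ i, (1 + 4 * w i ^ 2) := by
    refine le_trans ?_ (one_add_sum_le_prod_one_add _ fun i => by positivity)
    rw [← Finset.mul_sum, ← EuclideanSpace.real_norm_sq_eq, hw]
    norm_num
  refine le_of_sq_le_sq ?_ (by norm_num)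
  simp_rw [hprod]
  rw [integral_fintype_prod_eq_prod fun i z => Complex.exp (Complex.I * w i * ‖z‖ ^ 2)]
  simp_rw [integral_cexp_mul_sq_norm_stdGaussian (c := Complex.I * w _) (by simp)]
  rw [norm_prod, ← Finset.prod_pow]
  simp_rw [hfactor]
  rw [Finset.prod_inv_distrib]
  exact (inv_anti₀ (by norm_num) hsq).trans (by norm_num)

lemma exp_neg_abs_le (x : ℝ) : Real.exp (-|x|) ≤ (3 + Real.cos x) / 4 := by
  rcases le_total |x| 1 with hx | hx
  · have hcos : 1 - |x| ^ 2 / 2 ≤ Real.cos x := by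
      rw [sq_abs]
      exact Real.one_sub_sq_div_two_le_cos
    have hexp : Real.exp (-|x|) ≤ (|x| + 1)⁻¹ := by
      rw [Real.exp_neg]
      exact inv_anti₀ (by positivity) (Real.add_one_le_exp _)
    have hinv : (|x| + 1)⁻¹ ≤ 1 - |x| / 2 := by
      rw [inv_le_iff_one_le_mul₀' (by positivity)]
      nlinarith [abs_nonneg x]
    nlinarith [abs_nonneg x]
  · have hexp : Real.exp (-|x|) ≤ Real.exp (-1) := Real.exp_le_exp.2 (by linarith)
    linarith [Real.exp_neg_one_lt_d9, Real.neg_one_le_cos x]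

lemma integral_cos_signedMass_le {w : EuclideanSpace ℝ ι} (hw : ‖w‖ = 1) :
    ∫ c, Real.cos (signedMass w c) ∂(Measure.pi fun _ => stdGaussian ℂ) ≤ 1 / 2 := by
  have hint : Integrable (fun c => Complex.exp (Complex.I * signedMass w c))
      (Measure.pi fun _ => stdGaussian ℂ) :=
    Integrable.of_bound (Measurable.aestronglyMeasurable (by fun_prop)) 1
      (.of_forall fun c => by rw [mul_comm, Complex.norm_exp_ofReal_mul_I])
  have hre (c : ι → ℂ) :
      Real.cos (signedMass w c) = RCLike.re (Complex.exp (Complex.I * signedMass w c)) := by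
    rw [mul_comm]
    exact (Complex.exp_ofReal_mul_I_re _).symm
  simp_rw [hre]
  rw [integral_re hint]
  exact (Complex.re_le_norm _).trans (norm_integral_cexp_I_mul_signedMass_le hw)

lemma integrable_exp_neg_abs_signedMass (w : EuclideanSpace ℝ ι) :
    Integrable (fun c => Real.exp (-|signedMass w c|)) (Measure.pi fun _ => stdGaussian ℂ) :=
  Integrable.of_bound (Measurable.aestronglyMeasurable (by fun_prop)) 1
    (.of_forall fun c => by simp [abs_of_pos (Real.exp_pos _)])

lemma integral_exp_neg_abs_signedMass_le {w : EuclideanSpace ℝ ι} (hw : ‖w‖ = 1) :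
    ∫ c, Real.exp (-|signedMass w c|) ∂(Measure.pi fun _ => stdGaussian ℂ) ≤
      Real.exp (-(1 / 8)) := by
  have hcos : Integrable (fun c => Real.cos (signedMass w c))
      (Measure.pi fun _ => stdGaussian ℂ) :=
    Integrable.of_bound (Measurable.aestronglyMeasurable (by fun_prop)) 1
      (.of_forall fun c => Real.abs_cos_le_one _)
  calc ∫ c, Real.exp (-|signedMass w c|) ∂(Measure.pi fun _ => stdGaussian ℂ)
      ≤ ∫ c, (3 + Real.cos (signedMass w c)) / 4 ∂(Measure.pi fun _ => stdGaussian ℂ) :=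
        integral_mono (integrable_exp_neg_abs_signedMass w)
          (((integrable_const 3).add hcos).div_const 4) fun c => exp_neg_abs_le _
    _ = (3 + ∫ c, Real.cos (signedMass w c) ∂(Measure.pi fun _ => stdGaussian ℂ)) / 4 := by
        rw [integral_div, integral_add (integrable_const 3) hcos]
        simp
    _ ≤ -(1 / 8) + 1 := by linarith [integral_cos_signedMass_le hw]
    _ ≤ Real.exp (-(1 / 8)) := Real.add_one_le_exp _

lemma gaussianMatrix_signedMassNorm_le_le {w : EuclideanSpace ℝ ι} (hw : ‖w‖ = 1) :
    (gaussianMatrix n ι).real {G | signedMassNorm w (Matrix.of G) ≤ Fintype.card n / 16} ≤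
      Real.exp (-(Fintype.card n / 16)) := by
  refine (measureReal_sum_eval_le_le n (integrable_exp_neg_abs_signedMass w)
    (integral_exp_neg_abs_signedMass_le hw) _).trans_eq ?_
  ring_nf

end SignedMass

section Perturbation

open scoped Matrix Matrix.Norms.Frobenius

variable {n ι : Type*} [Fintype n] [Fintype ι]

lemma abs_norm_sq_sub_norm_sq_le {E : Type*} [SeminormedAddCommGroup E] (x y : E) :
    |‖x‖ ^ 2 - ‖y‖ ^ 2| ≤ 2 * (‖y‖ * ‖x - y‖) + ‖x - y‖ ^ 2 := by
  have hx : ‖x‖ ≤ ‖y‖ + ‖x - y‖ := norm_le_norm_add_norm_sub' x y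
  have hy : ‖y‖ ≤ ‖x‖ + ‖x - y‖ := norm_le_norm_add_norm_sub x y
  rw [abs_le]
  constructor <;> nlinarith [norm_nonneg x, norm_nonneg y, norm_nonneg (x - y)]

lemma sum_abs_norm_sq_sub_norm_sq_le {𝕜 : Type*} [RCLike 𝕜] (x y : EuclideanSpace 𝕜 n) :
    ∑ j, |‖x j‖ ^ 2 - ‖y j‖ ^ 2| ≤ 2 * (‖y‖ * ‖x - y‖) + ‖x - y‖ ^ 2 := by
  calc ∑ j, |‖x j‖ ^ 2 - ‖y j‖ ^ 2|
      ≤ ∑ j, (2 * (‖y j‖ * ‖(x - y) j‖) + ‖(x - y) j‖ ^ 2) :=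
        Finset.sum_le_sum fun j _ => abs_norm_sq_sub_norm_sq_le (x j) (y j)
    _ = 2 * ∑ j, ‖y j‖ * ‖(x - y) j‖ + ‖x - y‖ ^ 2 := by
        rw [Finset.sum_add_distrib, ← Finset.mul_sum, EuclideanSpace.norm_sq_eq (x - y)]
    _ ≤ 2 * (‖y‖ * ‖x - y‖) + ‖x - y‖ ^ 2 := by
        gcongr
        simp only [EuclideanSpace.norm_eq]
        exact Real.sum_mul_le_sqrt_mul_sqrt _ _ _

lemma sum_norm_col_sq (X : Matrix n ι ℂ) :
    ∑ i, ‖WithLp.toLp 2 (X.col i)‖ ^ 2 = ‖X‖ ^ 2 := by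
  simp_rw [frobenius_norm_sq, EuclideanSpace.norm_sq_eq]
  exact Finset.sum_comm

lemma signedMassNorm_le_add [DecidableEq ι] (w : EuclideanSpace ℝ ι) (A : Matrix n ι ℂ)
    {B : Matrix n ι ℂ} (hB : Bᴴ * B = 1) :
    signedMassNorm w A ≤ signedMassNorm w B + ‖w‖ * (2 * ‖A - B‖ + ‖A - B‖ ^ 2) := by
  set δ : ι → ℝ := fun i => ‖WithLp.toLp 2 ((A - B).col i)‖
  have hcol (i : ι) : ∑ j, |‖A j i‖ ^ 2 - ‖B j i‖ ^ 2| ≤ 2 * δ i + δ i ^ 2 := by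
    have hsum := sum_abs_norm_sq_sub_norm_sq_le (WithLp.toLp 2 (A.col i)) (WithLp.toLp 2 (B.col i))
    rwa [(orthonormal_col_of_conjTranspose_mul_self_eq_one hB).1 i, one_mul] at hsum
  have hrow (j : n) : |signedMass w (A.row j)| ≤
      |signedMass w (B.row j)| + ∑ i, |w i| * |‖A j i‖ ^ 2 - ‖B j i‖ ^ 2| := by
    rw [← sub_le_iff_le_add']
    refine (abs_sub_abs_le_abs_sub _ _).trans ?_
    simp_rw [signedMass, ← Finset.sum_sub_distrib, ← mul_sub, ← abs_mul]
    exact Finset.abs_sum_le_sum_abs _ _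
  have hlinear : ∑ i, |w i| * δ i ≤ ‖w‖ * ‖A - B‖ := by
    refine (Real.sum_mul_le_sqrt_mul_sqrt _ _ _).trans_eq ?_
    rw [sum_norm_col_sq, Real.sqrt_sq (norm_nonneg _), EuclideanSpace.norm_eq]
    rfl
  have hquadratic : ∑ i, |w i| * δ i ^ 2 ≤ ‖w‖ * ‖A - B‖ ^ 2 := by
    rw [← sum_norm_col_sq, Finset.mul_sum]
    gcongr with i
    exact PiLp.norm_apply_le w i
  calc signedMassNorm w A
      ≤ signedMassNorm w B + ∑ j, ∑ i, |w i| * |‖A j i‖ ^ 2 - ‖B j i‖ ^ 2| := by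
        rw [signedMassNorm, signedMassNorm, ← Finset.sum_add_distrib]
        exact Finset.sum_le_sum fun j _ => hrow j
    _ ≤ signedMassNorm w B + ∑ i, |w i| * (2 * δ i + δ i ^ 2) := by
        rw [Finset.sum_comm]
        simp_rw [← Finset.mul_sum]
        gcongr with i
        exact hcol i
    _ = signedMassNorm w B + (2 * ∑ i, |w i| * δ i + ∑ i, |w i| * δ i ^ 2) := by
        rw [Finset.mul_sum, ← Finset.sum_add_distrib]
        simp only [mul_add, mul_left_comm]
    _ ≤ signedMassNorm w B + ‖w‖ * (2 * ‖A - B‖ + ‖A - B‖ ^ 2) := by linarith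

lemma exists_norm_smul_sub_rowFrame_le [DecidableEq n] [DecidableEq ι] {e : ι → n}
    (he : e.Injective) {s δ : ℝ} (hs : s ≠ 0) (hδ : δ < 1) {G : Matrix n ι ℂ}
    (hG : ‖Gᴴ * G - s ^ 2 • (1 : Matrix ι ι ℂ)‖ ≤ s ^ 2 * δ) :
    ∃ U : Matrix.unitaryGroup n ℂ, ‖s⁻¹ • G - rowFrame e U‖ ≤ δ := by
  have hgram : ‖(s⁻¹ • G)ᴴ * (s⁻¹ • G) - 1‖ ≤ δ := by
    have hscale : (s⁻¹ • G)ᴴ * (s⁻¹ • G) - 1 =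
        (s ^ 2)⁻¹ • (Gᴴ * G - s ^ 2 • (1 : Matrix ι ι ℂ)) := by
      rw [Matrix.conjTranspose_smul, star_trivial, Matrix.smul_mul, Matrix.mul_smul, smul_smul,
        smul_sub, inv_smul_smul₀ (by positivity), ← mul_inv, sq]
    rw [hscale, norm_smul, norm_inv, norm_pow, Real.norm_eq_abs, sq_abs,
      inv_mul_le_iff₀ (by positivity)]
    exact hG
  obtain ⟨Q, hQ, hQG⟩ := exists_isometry_norm_sub_le (hgram.trans_lt hδ)
  obtain ⟨U, rfl⟩ := exists_rowFrame_eq he hQ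
  exact ⟨U, hQG.trans hgram⟩

lemma exists_forall_signedMassNorm_mul_le [DecidableEq n] [DecidableEq ι] {e : ι → n}
    (he : e.Injective) (w : EuclideanSpace ℝ ι) {s δ : ℝ} (hs : s ≠ 0) (hδ : δ < 1)
    {G : Matrix n ι ℂ} (hG : ‖Gᴴ * G - s ^ 2 • (1 : Matrix ι ι ℂ)‖ ≤ s ^ 2 * δ) :
    ∃ U : Matrix.unitaryGroup n ℂ, ∀ V : Matrix.unitaryGroup n ℂ,
      signedMassNorm w ((V : Matrix n n ℂ)ᵀ * G) ≤
        s ^ 2 * (signedMassNorm w (rowFrame e (U * V)) + ‖w‖ * (2 * δ + δ ^ 2)) := by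
  obtain ⟨U, hU⟩ := exists_norm_smul_sub_rowFrame_le he hs hδ hG
  refine ⟨U, fun V => ?_⟩
  have hdist : ‖(V : Matrix n n ℂ)ᵀ * (s⁻¹ • G) - rowFrame e (U * V)‖ ≤ δ := by
    rwa [rowFrame_mul, ← Matrix.mul_sub, frobenius_norm_mul_of_conjTranspose_mul_self_eq_one
      (conjTranspose_transpose_mul_transpose V)]
  have hscale : (V : Matrix n n ℂ)ᵀ * G = s • ((V : Matrix n n ℂ)ᵀ * (s⁻¹ • G)) := by
    rw [Matrix.mul_smul, smul_inv_smul₀ hs]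
  rw [hscale, signedMassNorm_smul_right]
  gcongr
  refine (signedMassNorm_le_add w _ (conjTranspose_rowFrame_mul_rowFrame he (U * V))).trans ?_
  gcongr

end Perturbation

section Coupling

lemma measure_mul_measure_le_of_measurePreserving_of_forall_exists {K Ω : Type*} [Group K]
    [MeasurableSpace K] [MeasurableMul K] [MeasurableSpace Ω] {μ : Measure K}
    [IsProbabilityMeasure μ] [μ.IsMulLeftInvariant] {ν : Measure Ω} [SFinite ν] {act : K → Ω → Ω}
    (hact : Measurable (Function.uncurry act)) (hpres : ∀ V, MeasurePreserving (act V) ν ν)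
    {F : Set K} {S A : Set Ω} (hA : MeasurableSet A)
    (hcouple : ∀ G ∈ S, ∃ U, ∀ V, U * V ∈ F → act V G ∈ A) :
    μ F * ν S ≤ ν A := by
  have hE : MeasurableSet {x : K × Ω | act x.1 x.2 ∈ A} := hact hA
  calc μ F * ν S = ∫⁻ _ in S, μ F ∂ν := (setLIntegral_const _ _).symm
    _ ≤ ∫⁻ G in S, μ {V | act V G ∈ A} ∂ν := by
        refine setLIntegral_mono (measurable_measure_prodMk_right hE) fun G hG => ?_
        obtain ⟨U, hU⟩ := hcouple G hG
        rw [← measure_preimage_mul μ U F]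
        exact measure_mono hU
    _ ≤ ∫⁻ G, μ {V | act V G ∈ A} ∂ν := setLIntegral_le_lintegral _ _
    _ = ∫⁻ V, ν (act V ⁻¹' A) ∂μ := by
        exact (Measure.prod_apply_symm hE).symm.trans (Measure.prod_apply hE)
    _ = ν A := by
        simp_rw [fun V => (hpres V).measure_preimage hA.nullMeasurableSet]
        rw [lintegral_const, measure_univ, mul_one]

end Coupling

section HaarAntiConcentration

open scoped Matrix

variable {n ι : Type*} [Fintype n]

lemma measurable_signedMassNorm [Fintype ι] (w : EuclideanSpace ℝ ι) :
    Measurable fun G : n → ι → ℂ => signedMassNorm w (Matrix.of G) :=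
  Finset.measurable_sum _ fun j _ =>
    ((measurable_signedMass w).comp (measurable_pi_apply j)).abs

variable [DecidableEq n] [MeasurableSpace (Matrix.unitaryGroup n ℂ)]
  [BorelSpace (Matrix.unitaryGroup n ℂ)]

lemma measurable_unitaryGroup_apply (i j : n) :
    Measurable fun U : Matrix.unitaryGroup n ℂ => (U : Matrix n n ℂ) i j :=
  (continuous_subtype_val.matrix_elem i j).measurable

lemma measurable_transpose_mul :
    Measurable (Function.uncurry fun (V : Matrix.unitaryGroup n ℂ) (G : n → ι → ℂ) =>
      Matrix.of.symm ((V : Matrix n n ℂ)ᵀ * Matrix.of G)) := by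
  refine measurable_pi_lambda _ fun j => measurable_pi_lambda _ fun i => ?_
  change Measurable fun x : Matrix.unitaryGroup n ℂ × (n → ι → ℂ) =>
    ∑ k, (x.1 : Matrix n n ℂ) k j * x.2 k i
  exact Finset.measurable_sum _ fun k _ =>
    ((measurable_unitaryGroup_apply k j).comp measurable_fst).mul (by fun_prop)

lemma measurePreserving_transpose_mul_gaussianMatrix [Fintype ι] (V : Matrix.unitaryGroup n ℂ) :
    MeasurePreserving (fun G => Matrix.of.symm ((V : Matrix n n ℂ)ᵀ * Matrix.of G))
      (gaussianMatrix n ι) (gaussianMatrix n ι) where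
  measurable := measurable_transpose_mul.of_uncurry_left
  map_eq := map_mul_gaussianMatrix (conjTranspose_transpose_mul_transpose V)

variable [Fintype ι] {μ : Measure (Matrix.unitaryGroup n ℂ)} [IsProbabilityMeasure μ]
  [μ.IsMulLeftInvariant] {e : ι → n}

open scoped Matrix.Norms.Frobenius in
lemma measureReal_signedMassNorm_rowFrame_lt_mul_le [DecidableEq ι] (he : e.Injective)
    (w : EuclideanSpace ℝ ι) {s δ : ℝ} (hs : s ≠ 0) (hδ : δ < 1) (t : ℝ) :
    μ.real {U | signedMassNorm w (rowFrame e U) < t} *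
        (gaussianMatrix n ι).real
          {G | ‖(Matrix.of G)ᴴ * Matrix.of G - s ^ 2 • (1 : Matrix ι ι ℂ)‖ < s ^ 2 * δ} ≤
      (gaussianMatrix n ι).real
        {G | signedMassNorm w (Matrix.of G) ≤ s ^ 2 * (t + ‖w‖ * (2 * δ + δ ^ 2))} := by
  simp only [measureReal_def, ← ENNReal.toReal_mul]
  refine ENNReal.toReal_mono (measure_ne_top _ _)
    (measure_mul_measure_le_of_measurePreserving_of_forall_exists measurable_transpose_mul
      measurePreserving_transpose_mul_gaussianMatrix
      (measurableSet_le (measurable_signedMassNorm w) measurable_const) fun G hG => ?_)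
  obtain ⟨U, hU⟩ := exists_forall_signedMassNorm_mul_le he w hs hδ (Set.mem_ofPred.1 hG).le
  refine ⟨U, fun V hUV => (hU V).trans ?_⟩
  gcongr
  exact (Set.mem_ofPred.1 hUV).le

lemma measureReal_signedMassNorm_rowFrame_lt_le_of_norm_eq_one (he : e.Injective)
    {w : EuclideanSpace ℝ ι} (hw : ‖w‖ = 1)
    (hcard : 1280000 * (Fintype.card ι : ℝ) ^ 2 ≤ Fintype.card n) :
    μ.real {U | signedMassNorm w (rowFrame e U) < 1 / 64} ≤
      2 * Real.exp (-(Fintype.card n / 16)) := by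
  classical
  have hι : Nonempty ι := not_isEmpty_iff.1 fun _ => by simp [Subsingleton.elim w 0] at hw
  have hn : Nonempty n := hι.map e
  have hDpos : 0 < (Fintype.card n : ℝ) := by exact_mod_cast Fintype.card_pos
  set D : ℝ := (Fintype.card n : ℝ)
  have hs : √(2 * D) ^ 2 = 2 * D := Real.sq_sqrt (by positivity)
  -- The constant `1280000` in `hcard` is `32 / δ ^ 2` for `δ = 1 / 200`.
  have hconcentration :=
    one_half_le_measureReal_norm_gram_sub_lt (n := n) (ι := ι) (δ := 1 / 200) (by norm_num)
      (by linarith)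
  have hcouple := measureReal_signedMassNorm_rowFrame_lt_mul_le (μ := μ) he w
    (s := √(2 * D)) (δ := 1 / 200) (by positivity) (by norm_num) (1 / 64)
  have hmono : (gaussianMatrix n ι).real
      {G | signedMassNorm w (Matrix.of G) ≤
        √(2 * D) ^ 2 * (1 / 64 + ‖w‖ * (2 * (1 / 200) + (1 / 200) ^ 2))} ≤
      (gaussianMatrix n ι).real {G | signedMassNorm w (Matrix.of G) ≤ D / 16} := by
    refine measureReal_mono fun G hG => (Set.mem_ofPred.1 hG).trans ?_
    rw [hs, hw]
    linarith
  have hchernoff := hmono.trans (gaussianMatrix_signedMassNorm_le_le hw)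
  rw [hs] at hcouple hchernoff
  nlinarith [measureReal_nonneg (μ := μ) (s := {U | signedMassNorm w (rowFrame e U) < 1 / 64})]

lemma measureReal_signedMassNorm_rowFrame_lt_le (he : e.Injective) (w : EuclideanSpace ℝ ι)
    (hcard : 1280000 * (Fintype.card ι : ℝ) ^ 2 ≤ Fintype.card n) :
    μ.real {U | signedMassNorm w (rowFrame e U) < ‖w‖ / 64} ≤
      Real.exp (-(Fintype.card n / 32)) := by
  rcases eq_or_ne w 0 with rfl | hw
  · simp [not_lt.2 (signedMassNorm_nonneg 0 _), Real.exp_nonneg]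
  have hnorm : 0 < ‖w‖ := norm_pos_iff.2 hw
  have hunit : ‖‖w‖⁻¹ • w‖ = 1 := norm_smul_inv_norm hw
  have hevent : {U : Matrix.unitaryGroup n ℂ | signedMassNorm w (rowFrame e U) < ‖w‖ / 64} =
      {U | signedMassNorm (‖w‖⁻¹ • w) (rowFrame e U) < 1 / 64} := by
    ext U
    simp only [Set.mem_ofPred_eq, signedMassNorm_smul_left, abs_inv, abs_norm]
    rw [inv_mul_lt_iff₀ hnorm, mul_one_div]
  have hι : Nonempty ι := not_isEmpty_iff.1 fun _ => hw (Subsingleton.elim w 0)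
  have hcardι : 1 ≤ (Fintype.card ι : ℝ) := by exact_mod_cast Fintype.card_pos
  have htwo : 2 ≤ Real.exp (Fintype.card n / 32) :=
    le_trans (by nlinarith) (Real.add_one_le_exp _)
  rw [hevent]
  calc μ.real {U | signedMassNorm (‖w‖⁻¹ • w) (rowFrame e U) < 1 / 64}
      ≤ 2 * Real.exp (-(Fintype.card n / 16)) :=
        measureReal_signedMassNorm_rowFrame_lt_le_of_norm_eq_one he hunit hcard
    _ ≤ Real.exp (Fintype.card n / 32) * Real.exp (-(Fintype.card n / 16)) := by gcongr
    _ = Real.exp (-(Fintype.card n / 32)) := by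
        rw [← Real.exp_add]
        ring_nf

lemma one_sub_exp_le_measureReal_le_signedMassNorm_rowFrame (he : e.Injective)
    (w : EuclideanSpace ℝ ι) (hcard : 1280000 * (Fintype.card ι : ℝ) ^ 2 ≤ Fintype.card n) :
    1 - Real.exp (-(Fintype.card n / 32)) ≤
      μ.real {U | ‖w‖ / 64 ≤ signedMassNorm w (rowFrame e U)} := by
  set E := {U : Matrix.unitaryGroup n ℂ | signedMassNorm w (rowFrame e U) < ‖w‖ / 64} with hE
  have hunion : 1 ≤ μ.real E + μ.real Eᶜ := by
    rw [← probReal_univ (μ := μ), ← Set.union_compl_self E]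
    exact measureReal_union_le E Eᶜ
  have hcompl : Eᶜ = {U | ‖w‖ / 64 ≤ signedMassNorm w (rowFrame e U)} := by
    simp only [hE, Set.compl_ofPred, not_lt]
  rw [← hcompl]
  linarith [measureReal_signedMassNorm_rowFrame_lt_le (μ := μ) he w hcard]

end HaarAntiConcentration

section Blocks

variable {n : Type*}

/-- The signed weights turning `signedMass` into a difference of two overlapping blocks of rows:
`x` times the mass of the rows in `P` and `R`, minus `y` times the mass of those in `Q` and `R`. -/
noncomputable def blockWeight (P Q R : Finset n) (x y : ℝ) : EuclideanSpace ℝ (P ⊕ Q ⊕ R) :=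
  WithLp.toLp 2 <| Sum.elim (fun _ => x) (Sum.elim (fun _ => -y) fun _ => x - y)

/-- The row index carried by an element of one of three blocks. -/
def blockIndex (P Q R : Finset n) : P ⊕ Q ⊕ R → n :=
  Sum.elim (↑) (Sum.elim (↑) (↑))

lemma blockIndex_injective {P Q R : Finset n} (hPQ : Disjoint P Q) (hPR : Disjoint P R)
    (hQR : Disjoint Q R) : (blockIndex P Q R).Injective := by
  refine Subtype.val_injective.sumElim
    (Subtype.val_injective.sumElim Subtype.val_injective fun q r => ?_) ?_
  · exact Finset.disjoint_iff_ne.1 hQR q q.2 r r.2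
  · rintro p (q | r)
    · exact Finset.disjoint_iff_ne.1 hPQ p p.2 q q.2
    · exact Finset.disjoint_iff_ne.1 hPR p p.2 r r.2

lemma signedMass_blockWeight (P Q R : Finset n) (x y : ℝ) (u : n → ℂ) :
    signedMass (blockWeight P Q R x y) (u ∘ blockIndex P Q R) =
      x * ((∑ i ∈ P, ‖u i‖ ^ 2) + ∑ i ∈ R, ‖u i‖ ^ 2) -
        y * ((∑ i ∈ Q, ‖u i‖ ^ 2) + ∑ i ∈ R, ‖u i‖ ^ 2) := by
  simp only [signedMass, blockWeight, blockIndex, Fintype.sum_sum_type, Sum.elim_inl, Sum.elim_inr,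
    Function.comp_apply, ← Finset.mul_sum, Finset.sum_coe_sort _ fun i => ‖u i‖ ^ 2]
  ring

lemma sqrt_card_mul_add_sqrt_card_mul_le (P Q R : Finset n) (x y : ℝ) :
    √P.card * |x| + √Q.card * |y| ≤ 2 * ‖blockWeight P Q R x y‖ := by
  have hnorm : (√P.card * |x|) ^ 2 + (√Q.card * |y|) ^ 2 ≤ ‖blockWeight P Q R x y‖ ^ 2 := by
    rw [EuclideanSpace.real_norm_sq_eq]
    simp only [blockWeight, Fintype.sum_sum_type, Sum.elim_inl, Sum.elim_inr, Finset.sum_const,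
      Finset.card_univ, Fintype.card_coe, nsmul_eq_mul, mul_pow, Real.sq_sqrt (Nat.cast_nonneg _),
      neg_sq, sq_abs]
    have hR : 0 ≤ (R.card : ℝ) * (x - y) ^ 2 := by positivity
    linarith
  refine le_of_sq_le_sq ?_ (by positivity)
  calc (√P.card * |x| + √Q.card * |y|) ^ 2
      ≤ 2 * ((√P.card * |x|) ^ 2 + (√Q.card * |y|) ^ 2) := add_sq_le
    _ ≤ (2 * ‖blockWeight P Q R x y‖) ^ 2 := by
        rw [mul_pow]
        nlinarith [sq_nonneg ‖blockWeight P Q R x y‖]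

variable [Fintype n] [DecidableEq n] [MeasurableSpace (Matrix.unitaryGroup n ℂ)]
  [BorelSpace (Matrix.unitaryGroup n ℂ)]

theorem random_basis_two_blocks_distinguishable_general (μ : Measure (Matrix.unitaryGroup n ℂ))
    [IsProbabilityMeasure μ] [μ.IsMulLeftInvariant] {P Q R : Finset n} (hPQ : Disjoint P Q)
    (hPR : Disjoint P R) (hQR : Disjoint Q R) (x y : ℝ)
    (hcard : 1280000 * ((P.card : ℝ) + Q.card + R.card) ^ 2 ≤ Fintype.card n) :
    1 - Real.exp (-(Fintype.card n / 32)) ≤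
      μ.real {U | 1 / 128 * (√P.card * |x| + √Q.card * |y|) ≤
        ∑ j, |x * ((∑ i ∈ P, ‖(U : Matrix n n ℂ) i j‖ ^ 2) +
                ∑ i ∈ R, ‖(U : Matrix n n ℂ) i j‖ ^ 2) -
              y * ((∑ i ∈ Q, ‖(U : Matrix n n ℂ) i j‖ ^ 2) +
                ∑ i ∈ R, ‖(U : Matrix n n ℂ) i j‖ ^ 2)|} := by
  have hcard' : 1280000 * (Fintype.card (P ⊕ Q ⊕ R) : ℝ) ^ 2 ≤ Fintype.card n := by
    simpa [add_assoc] using hcard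
  refine (one_sub_exp_le_measureReal_le_signedMassNorm_rowFrame
    (blockIndex_injective hPQ hPR hQR) (blockWeight P Q R x y) hcard').trans
    (measureReal_mono fun U hU => ?_)
  have hcol (j : n) := signedMass_blockWeight P Q R x y fun i => (U : Matrix n n ℂ) i j
  simp_rw [Set.mem_ofPred_eq, ← hcol]
  refine le_trans ?_ (Set.mem_ofPred.1 hU)
  linarith [sqrt_card_mul_add_sqrt_card_mul_le P Q R x y]

end Blocks

lemma card_filter_val_mem_Ico {a b d : ℕ} (hb : b ≤ d) :
    (Finset.univ.filter fun i : Fin d => a ≤ (i : ℕ) ∧ (i : ℕ) < b).card = b - a := by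
  have hmap : (Finset.univ.filter fun i : Fin d => a ≤ (i : ℕ) ∧ (i : ℕ) < b).map
      Fin.valEmbedding = Finset.Ico a b := by
    ext k
    simp only [Finset.mem_map, Finset.mem_filter_univ, Fin.valEmbedding_apply, Finset.mem_Ico]
    exact ⟨fun ⟨_, hi, hik⟩ => hik ▸ hi, fun hk => ⟨⟨k, hk.2.trans_le hb⟩, hk, rfl⟩⟩
  rw [← Finset.card_map Fin.valEmbedding, hmap, Nat.card_Ico]

lemma sq_le_of_one_le_div_cube_sub_log {m x : ℝ} (hm : 1 ≤ m)
    (h : 1 ≤ x / m ^ 3 - 2 * Real.log m) : m ^ 2 ≤ x := by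
  have hlog : 0 ≤ Real.log m := Real.log_nonneg hm
  have hcube : 1 ≤ x / m ^ 3 := by linarith
  rw [one_le_div (by positivity)] at hcube
  exact (pow_le_pow_right₀ hm (by norm_num)).trans hcube

lemma div_cube_sub_log_le {m x : ℝ} (hm : 1 ≤ m) (hx : 0 ≤ x) :
    x / m ^ 3 - 2 * Real.log m ≤ x := by
  have hlog : 0 ≤ Real.log m := Real.log_nonneg hm
  have hdiv : x / m ^ 3 ≤ x := div_le_self hx (one_le_pow₀ hm)
  linarith

/-- There are constants `c₁, c₂, c₃ > 0` such that for all integers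
`p, q, r ≥ 1` and `d ≥ m := p + q + r` with `α := c₁·d/m³ − 2·log m ≥ 1`, the following
holds. Let `U` be a Haar-random `d×d` unitary (distributed according to the unique
left-invariant probability measure on `U(d)`), and define the probability vectors
`S_j := (1/(p+r))(∑_{i<p} |U_{ij}|² + ∑_{p+q≤i<m} |U_{ij}|²)` and
`T_j := (1/(q+r))(∑_{p≤i<p+q} |U_{ij}|² + ∑_{p+q≤i<m} |U_{ij}|²)`. Then with probability
at least `1 − exp(−c₃·α)`, one has `∑_j |S_j − T_j| ≥ c₂·(√p/(p+r) + √q/(q+r))`. -/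
theorem random_basis_two_blocks_distinguishable :
    ∃ c₁ c₂ c₃ : ℝ, 0 < c₁ ∧ 0 < c₂ ∧ 0 < c₃ ∧
      ∀ (p q r d : ℕ), 1 ≤ p → 1 ≤ q → 1 ≤ r → p + q + r ≤ d →
        ∀ α : ℝ,
          α = c₁ * d / ((p : ℝ) + q + r) ^ 3 - 2 * Real.log ((p : ℝ) + q + r) →
          1 ≤ α →
          ∀ [MeasurableSpace (Matrix.unitaryGroup (Fin d) ℂ)]
            [BorelSpace (Matrix.unitaryGroup (Fin d) ℂ)]
            (μ : Measure (Matrix.unitaryGroup (Fin d) ℂ)),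
            IsProbabilityMeasure μ →
            (∀ U₀ : Matrix.unitaryGroup (Fin d) ℂ,
              Measure.map (fun U => U₀ * U) μ = μ) →
            1 - Real.exp (-(c₃ * α)) ≤
              (μ {U : Matrix.unitaryGroup (Fin d) ℂ |
                  c₂ * (Real.sqrt p / ((p : ℝ) + r) + Real.sqrt q / ((q : ℝ) + r)) ≤
                    ∑ j : Fin d,
                      |(1 / ((p : ℝ) + r)) *
                          ((∑ i ∈ Finset.univ.filter (fun i : Fin d => (i : ℕ) < p),
                              ‖(U : Matrix (Fin d) (Fin d) ℂ) i j‖ ^ 2) +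
                            ∑ i ∈ Finset.univ.filter
                                (fun i : Fin d => p + q ≤ (i : ℕ) ∧ (i : ℕ) < p + q + r),
                              ‖(U : Matrix (Fin d) (Fin d) ℂ) i j‖ ^ 2) -
                        (1 / ((q : ℝ) + r)) *
                          ((∑ i ∈ Finset.univ.filter
                                (fun i : Fin d => p ≤ (i : ℕ) ∧ (i : ℕ) < p + q),
                              ‖(U : Matrix (Fin d) (Fin d) ℂ) i j‖ ^ 2) +
                            ∑ i ∈ Finset.univ.filter
                                (fun i : Fin d => p + q ≤ (i : ℕ) ∧ (i : ℕ) < p + q + r),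
                              ‖(U : Matrix (Fin d) (Fin d) ℂ) i j‖ ^ 2)|}).toReal := by
  refine ⟨1 / 1280000, 1 / 128, 1 / 32, by norm_num, by norm_num, by norm_num, ?_⟩
  rintro p q r d hp - - hd α rfl hα _ _ μ _ hμ
  have : μ.IsMulLeftInvariant := ⟨hμ⟩
  have hm : 1 ≤ (p : ℝ) + q + r := by exact_mod_cast (by omega : 1 ≤ p + q + r)
  have hdim := sq_le_of_one_le_div_cube_sub_log hm hα
  have hα' := div_cube_sub_log_le (x := 1 / 1280000 * d) hm (by positivity)
  have hP : (Finset.univ.filter fun i : Fin d => (i : ℕ) < p).card = p := by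
    rw [Fin.card_filter_val_lt, min_eq_right (by omega)]
  have hQ := card_filter_val_mem_Ico (a := p) (b := p + q) (d := d) (by omega)
  have hR := card_filter_val_mem_Ico (a := p + q) (b := p + q + r) (d := d) hd
  rw [Nat.add_sub_cancel_left] at hQ hR
  have hmain := random_basis_two_blocks_distinguishable_general μ
    (P := Finset.univ.filter fun i : Fin d => (i : ℕ) < p)
    (Q := Finset.univ.filter fun i : Fin d => p ≤ (i : ℕ) ∧ (i : ℕ) < p + q)
    (R := Finset.univ.filter fun i : Fin d => p + q ≤ (i : ℕ) ∧ (i : ℕ) < p + q + r)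
    (Finset.disjoint_filter.2 <| by omega) (Finset.disjoint_filter.2 <| by omega)
    (Finset.disjoint_filter.2 <| by omega) (1 / ((p : ℝ) + r)) (1 / ((q : ℝ) + r))
    (by rw [hP, hQ, hR, Fintype.card_fin]; linarith)
  rw [hP, hQ, Fintype.card_fin, abs_of_nonneg (by positivity), abs_of_nonneg (by positivity),
    mul_one_div, mul_one_div] at hmain
  refine le_trans ?_ hmain
  gcongr
  linarith
end
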